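/- arXiv:math/0401313 — 2 statements merged into one kernel-verified Lean document; each statement's English description precedes it below -/
import Mathlib

section
/- There is an absolute constant C such that for every positive integer k, there exist a 3-side grid G of size at most C·k and a function h₀ : F → ℤ, where F is the set of edges of two of the three sides of G, such that the polyhedron C(G,h₀) has a vertex (extreme point) h satisfying: (a) h(e) is a rational number with denominator exactly k for some edge e ∈ E(G), and (b) h takes integer values on all boundary edges of G. -/
open scoped BigOperators

attribute [local instance] Classical.propDecidable

noncomputable section

/-- Points of the plane. -/
abbrev Pt : Type := ℝ × ℝ

/-- Directed edges: ordered pairs of points. -/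
abbrev Ed : Type := Pt × Pt

/-- The three generating vectors ξ₁ = (1,0), ξ₂ = (−1/2, √3/2), ξ₃ = (−1/2, −√3/2). -/
noncomputable def xiv : Fin 3 → Pt
  | 0 => ((1 : ℝ), (0 : ℝ))
  | 1 => (-(1 / 2 : ℝ), Real.sqrt 3 / 2)
  | 2 => (-(1 / 2 : ℝ), -(Real.sqrt 3 / 2))

/-- A little (lattice) triangle of the triangular grid, given by its base point and
its orientation (`up = true` for an upward triangle). -/
structure GridTriangle : Type where
  base : Pt
  up : Bool

noncomputable def GridTriangle.v0 (T : GridTriangle) : Pt := T.base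
noncomputable def GridTriangle.v1 (T : GridTriangle) : Pt := T.base + xiv 0
noncomputable def GridTriangle.v2 (T : GridTriangle) : Pt :=
  if T.up then T.base + xiv 0 + xiv 1 else T.base + xiv 0 + xiv 2

/-- The three directed edges of the 3-circuit surrounding a little triangle;
each has direction ξ₁, ξ₂ or ξ₃. -/
noncomputable def GridTriangle.e0 (T : GridTriangle) : Ed := (T.v0, T.v1)
noncomputable def GridTriangle.e1 (T : GridTriangle) : Ed := (T.v1, T.v2)
noncomputable def GridTriangle.e2 (T : GridTriangle) : Ed := (T.v2, T.v0)

noncomputable def GridTriangle.edgeFinset (T : GridTriangle) : Finset Ed := {T.e0, T.e1, T.e2}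

/-- The closed region spanned by a little triangle. -/
noncomputable def GridTriangle.region (T : GridTriangle) : Set Pt :=
  convexHull ℝ {T.v0, T.v1, T.v2}

/-- Vectors of the lattice generated by ξ₁ and ξ₂. -/
def IsLatticeVec (p : Pt) : Prop := ∃ m n : ℤ, p = (m : ℝ) • xiv 0 + (n : ℝ) • xiv 1

/-- A convex triangular grid: a finite nonempty set of little triangles of a common
translate of the triangular lattice whose union is a convex polygon.  (Its vertices,
edges, bounded faces and boundary are then those of the planar digraph formed by the
edges of the little triangles.) -/
structure ConvexGrid : Type where
  tris : Finset GridTriangle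
  nonempty : tris.Nonempty
  aligned : ∀ T ∈ tris, ∀ T' ∈ tris, IsLatticeVec (T.base - T'.base)
  convex : Convex ℝ (⋃ T ∈ tris, GridTriangle.region T)

/-- The region R(G) spanned by the grid. -/
noncomputable def ConvexGrid.region (G : ConvexGrid) : Set Pt :=
  ⋃ T ∈ G.tris, GridTriangle.region T

/-- The (directed) edge set E(G) of the grid. -/
noncomputable def ConvexGrid.edges (G : ConvexGrid) : Finset Ed :=
  G.tris.biUnion GridTriangle.edgeFinset

/-- The boundary edges B(G): edges lying in exactly one little triangle. -/
noncomputable def ConvexGrid.boundary (G : ConvexGrid) : Finset Ed :=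
  G.edges.filter fun e => (G.tris.filter fun T => e ∈ T.edgeFinset).card = 1

/-- A cocirculation: `h(e)+h(e')+h(e'')=0` around each little triangle. -/
def IsCocirculation (G : ConvexGrid) (h : Ed → ℝ) : Prop :=
  ∀ T ∈ G.tris, h T.e0 + h T.e1 + h T.e2 = 0

/-- `g` coincides with an affine function on `S`. -/
def AffineOn (g : Pt → ℝ) (S : Set Pt) : Prop :=
  ∃ φ : Pt →ᵃ[ℝ] ℝ, ∀ x ∈ S, g x = φ x

/-- A concave cocirculation: a cocirculation induced by a concave function on R(G)
which is affinely linear within each little triangle. -/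
def IsConcaveCocirculation (G : ConvexGrid) (h : Ed → ℝ) : Prop :=
  IsCocirculation G h ∧
  ∃ g : Pt → ℝ, ConcaveOn ℝ G.region g ∧ (∀ T ∈ G.tris, AffineOn g T.region) ∧
    ∀ e ∈ G.edges, h e = g e.2 - g e.1

/-- The polyhedron C(G,h₀) of concave cocirculations agreeing with h₀ on F. -/
def CC (G : ConvexGrid) (F : Set Ed) (h₀ : Ed → ℝ) : Set (Ed → ℝ) :=
  {h | IsConcaveCocirculation G h ∧ ∀ e ∈ F, h e = h₀ e}

/-- `h` is a vertex (extreme point) of the set `C` of cocirculations, regarded as a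
subset of ℝ^{E(G)} (only the coordinates on the edges of `G` matter). -/
def IsVertexOf (G : ConvexGrid) (C : Set (Ed → ℝ)) (h : Ed → ℝ) : Prop :=
  h ∈ C ∧ ∀ h₁ ∈ C, ∀ h₂ ∈ C,
    (∀ e ∈ G.edges, h e = (h₁ e + h₂ e) / 2) → ∀ e ∈ G.edges, h₁ e = h₂ e

/-- The edges of the side of the region lying on the segment [a,b]. -/
noncomputable def SideEdges (G : ConvexGrid) (a b : Pt) : Finset Ed :=
  G.boundary.filter fun e => e.1 ∈ segment ℝ a b ∧ e.2 ∈ segment ℝ a b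

/-! ### Dual side: discrete convex functions on the triangular lattice -/

/-- Data of a discrete convex function with asymptotics `max(0, N x, N y)`. -/
structure GoodFn (Φ : ℤ → ℤ → ℤ) (N : ℤ) : Prop where
  rh1 : ∀ x y, Φ x y + Φ (x+1) (y+1) ≤ Φ (x+1) y + Φ x (y+1)
  rh2 : ∀ x y, Φ x y + Φ (x+1) y ≤ Φ (x+1) (y+1) + Φ x (y-1)
  rh3 : ∀ x y, Φ x y + Φ x (y+1) ≤ Φ (x+1) (y+1) + Φ (x-1) y
  monox : ∀ x y, Φ x y ≤ Φ (x+1) y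
  monoy : ∀ x y, Φ x y ≤ Φ x (y+1)
  lip : ∀ x y, Φ (x+1) (y+1) ≤ Φ x y + N
  low : ∃ K : ℤ, ∀ x y, 0 ≤ Φ x y + K ∧ N * x ≤ Φ x y + K ∧ N * y ≤ Φ x y + K

/-- `(i,j)` is a subgradient of `Φ` at `(x,y)`. -/
def SubG (Φ : ℤ → ℤ → ℤ) (x y i j : ℤ) : Prop :=
  ∀ x' y', Φ x y - x * i - y * j ≤ Φ x' y' - x' * i - y' * j

theorem sector_lemma (Ψ : ℕ → ℕ → ℤ)
    (h11 : ∀ a b, Ψ (a+1) b + Ψ a (b+1) ≤ Ψ (a+1) (b+1) + Ψ a b)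
    (h20 : ∀ a b, 2 * Ψ (a+1) b ≤ Ψ (a+2) b + Ψ a b)
    (h02 : ∀ a b, 2 * Ψ a (b+1) ≤ Ψ a (b+2) + Ψ a b)
    (h1 : Ψ 0 0 ≤ Ψ 1 0) (h2 : Ψ 0 0 ≤ Ψ 0 1) : ∀ a b, Ψ 0 0 ≤ Ψ a b := by
  have hA : ∀ a, Ψ a 0 ≤ Ψ (a+1) 0 := by
    intro a
    induction a with
    | zero => simpa using h1
    | succ n ih => have := h20 n 0; grind
  have hA' : ∀ a, Ψ 0 0 ≤ Ψ a 0 := by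
    intro a
    induction a with
    | zero => exact le_refl _
    | succ n ih => exact ih.trans (hA n)
  have hB : ∀ b, Ψ 0 b ≤ Ψ 0 (b+1) := by
    intro b
    induction b with
    | zero => simpa using h2
    | succ n ih => have := h02 0 n; grind
  have hC : ∀ a b, Ψ a b ≤ Ψ a (b+1) := by
    intro a
    induction a with
    | zero => exact hB
    | succ n ih => intro b; have := h11 n b; have := ih b; linarith
  intro a b
  induction b with
  | zero => exact hA' a
  | succ n ih => exact ih.trans (hC a n)

theorem local_global {Φ : ℤ → ℤ → ℤ}
    (rh1 : ∀ x y, Φ x y + Φ (x+1) (y+1) ≤ Φ (x+1) y + Φ x (y+1))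
    (rh2 : ∀ x y, Φ x y + Φ (x+1) y ≤ Φ (x+1) (y+1) + Φ x (y-1))
    (rh3 : ∀ x y, Φ x y + Φ x (y+1) ≤ Φ (x+1) (y+1) + Φ (x-1) y)
    (x y : ℤ) (e1 : Φ x y ≤ Φ (x+1) y) (e2 : Φ x y ≤ Φ (x-1) y) (e3 : Φ x y ≤ Φ x (y+1))
    (e4 : Φ x y ≤ Φ x (y-1)) (e5 : Φ x y ≤ Φ (x+1) (y+1)) (e6 : Φ x y ≤ Φ (x-1) (y-1)) :
    ∀ x' y', Φ x y ≤ Φ x' y' := by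
  have lx : ∀ x y, 2 * Φ x y ≤ Φ (x+1) y + Φ (x-1) y := by
    intro x y
    have a := rh1 x y; have b := rh3 x y
    linarith
  have ly : ∀ x y, 2 * Φ x y ≤ Φ x (y+1) + Φ x (y-1) := by
    intro x y
    have a := rh1 x y; have b := rh2 x y
    linarith
  have ld : ∀ x y, 2 * Φ x y ≤ Φ (x+1) (y+1) + Φ (x-1) (y-1) := by
    intro x y
    have a := rh2 x y; have b := rh3 x (y-1)
    simp only [sub_add_cancel] at b
    linarith
  -- general sector
  have gen : ∀ (ax ay bx by' : ℤ),
      (∀ x y, Φ (x+ax) (y+ay) + Φ (x+bx) (y+by') ≤ Φ (x+ax+bx) (y+ay+by') + Φ x y) →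
      (∀ x y, 2 * Φ x y ≤ Φ (x+ax) (y+ay) + Φ (x-ax) (y-ay)) →
      (∀ x y, 2 * Φ x y ≤ Φ (x+bx) (y+by') + Φ (x-bx) (y-by')) →
      Φ x y ≤ Φ (x+ax) (y+ay) → Φ x y ≤ Φ (x+bx) (y+by') →
      ∀ a b : ℕ, Φ x y ≤ Φ (x + a*ax + b*bx) (y + a*ay + b*by') := by
    intro ax ay bx by' h11 h20 h02 h1 h2 a b
    have := sector_lemma (fun a b => Φ (x + a*ax + b*bx) (y + a*ay + b*by'))
      (fun a b => by
        have := h11 (x + a*ax + b*bx) (y + a*ay + b*by')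
        push_cast
        ring_nf at this ⊢
        linarith)
      (fun a b => by
        have := h20 (x + (a+1)*ax + b*bx) (y + (a+1)*ay + b*by')
        push_cast
        ring_nf at this ⊢
        linarith)
      (fun a b => by
        have := h02 (x + a*ax + (b+1)*bx) (y + a*ay + (b+1)*by')
        push_cast
        ring_nf at this ⊢
        linarith)
      (by simpa using h1) (by simpa using h2) a b
    simpa using this
  have neg : ∀ z : ℤ, z + -1 = z - 1 := fun z => rfl
  intro x' y'
  obtain ⟨u, rfl⟩ : ∃ u, x' = x + u := ⟨x' - x, by ring⟩
  obtain ⟨v, rfl⟩ : ∃ v, y' = y + v := ⟨y' - y, by ring⟩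
  have s1 := gen 1 0 1 1
    (fun x y => by
      have := rh3 (x+1) y
      simp only [add_zero, add_sub_cancel_right] at this ⊢; linarith)
    (fun x y => by simpa using lx x y) (fun x y => ld x y) (by simpa using e1) e5
  have s2 := gen 0 1 1 1
    (fun x y => by
      have := rh2 x (y+1)
      simp only [add_zero, add_sub_cancel_right] at this ⊢; linarith)
    (fun x y => by simpa using ly x y) (fun x y => ld x y) (by simpa using e3) e5
  have s3 := gen 0 1 (-1) 0
    (fun x y => by
      have := rh1 (x-1) y
      simp only [add_zero, sub_add_cancel, neg] at this ⊢; linarith)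
    (fun x y => by simpa using ly x y)
    (fun x y => by simpa [neg, add_comm] using lx x y) (by simpa using e3)
    (by simpa [neg] using e2)
  have s4 := gen (-1) 0 (-1) (-1)
    (fun x y => by
      have := rh3 (x-1) (y-1)
      simp only [add_zero, sub_add_cancel, neg] at this ⊢; linarith)
    (fun x y => by simpa [neg, add_comm] using lx x y)
    (fun x y => by simpa [neg, add_comm] using ld x y) (by simpa [neg] using e2)
    (by simpa [neg] using e6)
  have s5 := gen 0 (-1) (-1) (-1)
    (fun x y => by
      have := rh2 (x-1) (y-1)
      simp only [add_zero, sub_add_cancel, neg] at this ⊢; linarith)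
    (fun x y => by simpa [neg, add_comm] using ly x y)
    (fun x y => by simpa [neg, add_comm] using ld x y) (by simpa [neg] using e4)
    (by simpa [neg] using e6)
  have s6 := gen 0 (-1) 1 0
    (fun x y => by
      have := rh1 x (y-1)
      simp only [add_zero, sub_add_cancel, neg] at this ⊢; linarith)
    (fun x y => by simpa [neg, add_comm] using ly x y)
    (fun x y => by simpa using lx x y) (by simpa [neg] using e4)
    (by simpa using e1)
  have key : (0 ≤ v ∧ v ≤ u) ∨ (0 ≤ u ∧ u ≤ v) ∨ (u ≤ 0 ∧ 0 ≤ v) ∨ (u ≤ v ∧ v ≤ 0) ∨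
      (v ≤ u ∧ u ≤ 0) ∨ (0 ≤ u ∧ v ≤ 0) := by omega
  rcases key with h | h | h | h | h | h
  · convert s1 (u - v).toNat v.toNat using 2 <;>
      (rw [Int.toNat_of_nonneg (by omega), Int.toNat_of_nonneg (by omega)]; ring)
  · convert s2 (v - u).toNat u.toNat using 2 <;>
      (rw [Int.toNat_of_nonneg (by omega), Int.toNat_of_nonneg (by omega)]; ring)
  · convert s3 v.toNat (-u).toNat using 2 <;>
      (rw [Int.toNat_of_nonneg (by omega), Int.toNat_of_nonneg (by omega)]; ring)
  · convert s4 (v - u).toNat (-v).toNat using 2 <;>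
      (rw [Int.toNat_of_nonneg (by omega), Int.toNat_of_nonneg (by omega)]; ring)
  · convert s5 (u - v).toNat (-u).toNat using 2 <;>
      (rw [Int.toNat_of_nonneg (by omega), Int.toNat_of_nonneg (by omega)]; ring)
  · convert s6 (-v).toNat u.toNat using 2 <;>
      (rw [Int.toNat_of_nonneg (by omega), Int.toNat_of_nonneg (by omega)]; ring)

theorem subG_iff {Φ : ℤ → ℤ → ℤ} {N : ℤ} (hΦ : GoodFn Φ N) (x y i j : ℤ) :
    SubG Φ x y i j ↔
      i ≤ Φ (x+1) y - Φ x y ∧ Φ x y - Φ (x-1) y ≤ i ∧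
      j ≤ Φ x (y+1) - Φ x y ∧ Φ x y - Φ x (y-1) ≤ j ∧
      i + j ≤ Φ (x+1) (y+1) - Φ x y ∧ Φ x y - Φ (x-1) (y-1) ≤ i + j := by
  constructor
  · intro h
    have h1 := h (x+1) y
    have h2 := h (x-1) y
    have h3 := h x (y+1)
    have h4 := h x (y-1)
    have h5 := h (x+1) (y+1)
    have h6 := h (x-1) (y-1)
    refine ⟨?_, ?_, ?_, ?_, ?_, ?_⟩ <;> linarith
  · rintro ⟨h1, h2, h3, h4, h5, h6⟩
    refine local_global (Φ := fun x y => Φ x y - x * i - y * j) ?_ ?_ ?_ x y ?_ ?_ ?_ ?_ ?_ ?_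
    · intro x y; have := hΦ.rh1 x y; linarith
    · intro x y; have := hΦ.rh2 x y; linarith
    · intro x y; have := hΦ.rh3 x y; linarith
    all_goals linarith

/-- Minimisers exist. -/
theorem exists_min {Φ : ℤ → ℤ → ℤ} {N : ℤ} (hΦ : GoodFn Φ N) (hN : 0 < N) (m X Y : ℤ)
    (hX : 0 ≤ X) (hY : 0 ≤ Y) (hXY : X + Y ≤ m * N) :
    ∃ x y, ∀ x' y', m * Φ x y - x * X - y * Y ≤ m * Φ x' y' - x' * X - y' * Y := by
  obtain ⟨K, hK⟩ := hΦ.low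
  have bd : ∃ b : ℤ, ∀ z, (∃ x y, z = m * Φ x y - x * X - y * Y) → b ≤ z := by
    refine ⟨-(m * K), ?_⟩
    rintro z ⟨x, y, rfl⟩
    obtain ⟨h0, h1, h2⟩ := hK x y
    have a0 := mul_nonneg (sub_nonneg.2 hXY) h0
    have a1 := mul_nonneg hX (sub_nonneg.2 h1)
    have a2 := mul_nonneg hY (sub_nonneg.2 h2)
    have : 0 ≤ N * (m * (Φ x y + K) - x * X - y * Y) := by nlinarith
    have := nonneg_of_mul_nonneg_right this hN
    linarith
  obtain ⟨z, ⟨x, y, rfl⟩, hz⟩ := Int.exists_least_of_bdd bd ⟨_, 0, 0, rfl⟩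
  exact ⟨x, y, fun x' y' => hz _ ⟨x', y', rfl⟩⟩

theorem min_local {Φ : ℤ → ℤ → ℤ} {m X Y x y : ℤ}
    (h : ∀ x' y', m * Φ x y - x * X - y * Y ≤ m * Φ x' y' - x' * X - y' * Y) :
      X ≤ m * (Φ (x+1) y - Φ x y) ∧ m * (Φ x y - Φ (x-1) y) ≤ X ∧
      Y ≤ m * (Φ x (y+1) - Φ x y) ∧ m * (Φ x y - Φ x (y-1)) ≤ Y ∧
      X + Y ≤ m * (Φ (x+1) (y+1) - Φ x y) ∧ m * (Φ x y - Φ (x-1) (y-1)) ≤ X + Y := by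
  have h1 := h (x+1) y
  have h2 := h (x-1) y
  have h3 := h x (y+1)
  have h4 := h x (y-1)
  have h5 := h (x+1) (y+1)
  have h6 := h (x-1) (y-1)
  refine ⟨?_, ?_, ?_, ?_, ?_, ?_⟩ <;> linarith

theorem exists_up {Φ : ℤ → ℤ → ℤ} {N : ℤ} (hΦ : GoodFn Φ N) (hN : 0 < N) (i j : ℤ)
    (hi : 0 ≤ i) (hj : 0 ≤ j) (hij : i + j + 1 ≤ N) :
    ∃ x y, SubG Φ x y i j ∧ SubG Φ x y (i+1) j ∧ SubG Φ x y i (j+1) := by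
  obtain ⟨x, y, h⟩ := exists_min hΦ hN 3 (3*i+1) (3*j+1) (by omega) (by omega) (by omega)
  obtain ⟨h1, h2, h3, h4, h5, h6⟩ := min_local h
  refine ⟨x, y, ?_, ?_, ?_⟩ <;> rw [subG_iff hΦ] <;> refine ⟨?_, ?_, ?_, ?_, ?_, ?_⟩ <;> omega

theorem exists_dn {Φ : ℤ → ℤ → ℤ} {N : ℤ} (hΦ : GoodFn Φ N) (hN : 0 < N) (i j : ℤ)
    (hi : 0 ≤ i) (hj : 0 ≤ j) (hij : i + j + 2 ≤ N) :
    ∃ x y, SubG Φ x y (i+1) (j+1) ∧ SubG Φ x y (i+1) j ∧ SubG Φ x y i (j+1) := by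
  obtain ⟨x, y, h⟩ := exists_min hΦ hN 3 (3*i+2) (3*j+2) (by omega) (by omega) (by omega)
  obtain ⟨h1, h2, h3, h4, h5, h6⟩ := min_local h
  refine ⟨x, y, ?_, ?_, ?_⟩ <;> rw [subG_iff hΦ] <;> refine ⟨?_, ?_, ?_, ?_, ?_, ?_⟩ <;> omega

theorem subG_dom {Φ : ℤ → ℤ → ℤ} {N : ℤ} (hΦ : GoodFn Φ N) {x y i j : ℤ}
    (h : SubG Φ x y i j) : 0 ≤ i ∧ 0 ≤ j ∧ i + j ≤ N := by
  rw [subG_iff hΦ] at h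
  have a := hΦ.monox (x-1) y
  have b := hΦ.monoy x (y-1)
  have c := hΦ.lip x y
  simp only [sub_add_cancel] at a b
  refine ⟨?_, ?_, ?_⟩ <;> omega

/-- Kink across a horizontal dual edge. -/
theorem kinkY {Φ : ℤ → ℤ → ℤ} {N : ℤ} (hΦ : GoodFn Φ N) (x y : ℤ)
    (hk : Φ x y + Φ (x+1) y < Φ (x+1) (y+1) + Φ x (y-1)) :
    ∃ i j, i = Φ (x+1) y - Φ x y ∧ SubG Φ x y i j ∧ SubG Φ x y i (j+1) ∧
      SubG Φ (x+1) y i j ∧ SubG Φ (x+1) y i (j+1) := by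
  refine ⟨Φ (x+1) y - Φ x y, Φ x y - Φ x (y-1), rfl, ?_⟩
  have a1 := hΦ.rh1 x y
  have a2 := hΦ.rh1 (x-1) y
  have a3 := hΦ.rh1 x (y-1)
  have a4 := hΦ.rh1 (x-1) (y-1)
  have a5 := hΦ.rh1 (x+1) y
  have a6 := hΦ.rh1 (x+1) (y-1)
  have b1 := hΦ.rh2 x y
  have b2 := hΦ.rh2 (x-1) y
  have b3 := hΦ.rh2 (x+1) y
  have c1 := hΦ.rh3 x y
  have c2 := hΦ.rh3 x (y-1)
  have c3 := hΦ.rh3 (x+1) y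
  have c4 := hΦ.rh3 (x+1) (y-1)
  simp only [sub_add_cancel, add_sub_cancel_right] at *
  refine ⟨?_, ?_, ?_, ?_⟩ <;> rw [subG_iff hΦ] <;> (try simp only [add_sub_cancel_right]) <;>
    refine ⟨?_, ?_, ?_, ?_, ?_, ?_⟩ <;> linarith

theorem kinkX {Φ : ℤ → ℤ → ℤ} {N : ℤ} (hΦ : GoodFn Φ N) (x y : ℤ)
    (hk : Φ x y + Φ x (y+1) < Φ (x+1) (y+1) + Φ (x-1) y) :
    ∃ i j, j = Φ x (y+1) - Φ x y ∧ SubG Φ x y i j ∧ SubG Φ x y (i+1) j ∧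
      SubG Φ x (y+1) i j ∧ SubG Φ x (y+1) (i+1) j := by
  refine ⟨Φ x y - Φ (x-1) y, Φ x (y+1) - Φ x y, rfl, ?_⟩
  have a1 := hΦ.rh1 x y
  have a2 := hΦ.rh1 (x-1) y
  have a3 := hΦ.rh1 x (y-1)
  have a4 := hΦ.rh1 (x-1) (y-1)
  have a5 := hΦ.rh1 x (y+1)
  have a6 := hΦ.rh1 (x-1) (y+1)
  have b1 := hΦ.rh3 x y
  have b2 := hΦ.rh3 x (y-1)
  have b3 := hΦ.rh3 x (y+1)
  have c1 := hΦ.rh2 x y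
  have c2 := hΦ.rh2 (x-1) y
  have c3 := hΦ.rh2 x (y+1)
  have c4 := hΦ.rh2 (x-1) (y+1)
  simp only [sub_add_cancel, add_sub_cancel_right] at *
  refine ⟨?_, ?_, ?_, ?_⟩ <;> rw [subG_iff hΦ] <;> (try simp only [add_sub_cancel_right]) <;>
    refine ⟨?_, ?_, ?_, ?_, ?_, ?_⟩ <;> linarith

theorem kinkD {Φ : ℤ → ℤ → ℤ} {N : ℤ} (hΦ : GoodFn Φ N) (x y : ℤ)
    (hk : Φ x y + Φ (x+1) (y+1) < Φ (x+1) y + Φ x (y+1)) :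
    ∃ i j, SubG Φ x y (i+1) j ∧ SubG Φ x y i (j+1) ∧
      SubG Φ (x+1) (y+1) (i+1) j ∧ SubG Φ (x+1) (y+1) i (j+1) := by
  refine ⟨Φ (x+1) y - Φ x y - 1, Φ (x+1) (y+1) - Φ (x+1) y, ?_⟩
  have a1 := hΦ.rh1 (x+1) (y+1)
  have a2 := hΦ.rh1 (x-1) (y-1)
  have b1 := hΦ.rh2 x y
  have b2 := hΦ.rh2 (x-1) y
  have b3 := hΦ.rh2 x (y+1)
  have b4 := hΦ.rh2 (x+1) (y+1)
  have c1 := hΦ.rh3 x y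
  have c2 := hΦ.rh3 x (y-1)
  have c3 := hΦ.rh3 (x+1) y
  have c4 := hΦ.rh3 (x+1) (y+1)
  simp only [sub_add_cancel, add_sub_cancel_right] at *
  refine ⟨?_, ?_, ?_, ?_⟩ <;> rw [subG_iff hΦ] <;> (try simp only [add_sub_cancel_right]) <;>
    refine ⟨?_, ?_, ?_, ?_, ?_, ?_⟩ <;> linarith

/-! ### The tropical factors -/

/-- Tropical cubic whose curve is a hexagon of radius `r` with nine integral rays. -/
def Hf (k r x y : ℤ) : ℤ :=
  max (x+y) (max (y-r) (max (2*x+y-r) (max (x-r) (max (x+2*y-r) (max (2*x-r) (max (2*y-r)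
    (max (-r-k) (max (3*x-r-k) (3*y-r-k)))))))))

theorem Hf_ge (k r x y : ℤ) : x+y ≤ Hf k r x y ∧ y-r ≤ Hf k r x y ∧ 2*x+y-r ≤ Hf k r x y ∧
    x-r ≤ Hf k r x y ∧ x+2*y-r ≤ Hf k r x y ∧ 2*x-r ≤ Hf k r x y ∧ 2*y-r ≤ Hf k r x y ∧
    -r-k ≤ Hf k r x y ∧ 3*x-r-k ≤ Hf k r x y ∧ 3*y-r-k ≤ Hf k r x y := by
  unfold Hf
  simp only [le_max_iff, le_refl, true_or, or_true, and_self]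

theorem Hf_cases (k r x y : ℤ) : Hf k r x y = x+y ∨ Hf k r x y = y-r ∨ Hf k r x y = 2*x+y-r ∨
    Hf k r x y = x-r ∨ Hf k r x y = x+2*y-r ∨ Hf k r x y = 2*x-r ∨ Hf k r x y = 2*y-r ∨
    Hf k r x y = -r-k ∨ Hf k r x y = 3*x-r-k ∨ Hf k r x y = 3*y-r-k := by
  unfold Hf
  grind

theorem Hf_le {k r x y b : ℤ} (h0 : x+y ≤ b) (h1 : y-r ≤ b) (h2 : 2*x+y-r ≤ b)
    (h3 : x-r ≤ b) (h4 : x+2*y-r ≤ b) (h5 : 2*x-r ≤ b) (h6 : 2*y-r ≤ b)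
    (h7 : -r-k ≤ b) (h8 : 3*x-r-k ≤ b) (h9 : 3*y-r-k ≤ b) : Hf k r x y ≤ b := by
  unfold Hf
  simp only [max_le_iff]
  exact ⟨h0, h1, h2, h3, h4, h5, h6, h7, h8, h9⟩

theorem Hf_add_le {k r x y x' y' b : ℤ}
    (h : ∀ u, (u = x+y ∨ u = y-r ∨ u = 2*x+y-r ∨ u = x-r ∨ u = x+2*y-r ∨ u = 2*x-r ∨ u = 2*y-r ∨
      u = -r-k ∨ u = 3*x-r-k ∨ u = 3*y-r-k) → Hf k r x' y' ≤ b - u) :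
    Hf k r x y + Hf k r x' y' ≤ b := by
  have := h _ (Hf_cases k r x y)
  linarith

theorem Hf_rh1 (k r x y : ℤ) (h0 : 0 ≤ r) (h1 : r ≤ k) :
    Hf k r x y + Hf k r (x+1) (y+1) ≤ Hf k r (x+1) y + Hf k r x (y+1) := by
  have g1 := Hf_ge k r (x+1) y
  have g2 := Hf_ge k r x (y+1)
  obtain ⟨a0, a1, a2, a3, a4, a5, a6, a7, a8, a9⟩ := g1
  obtain ⟨b0, b1, b2, b3, b4, b5, b6, b7, b8, b9⟩ := g2
  apply Hf_add_le
  rintro u (rfl | rfl | rfl | rfl | rfl | rfl | rfl | rfl | rfl | rfl) <;> apply Hf_le <;> omega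

theorem Hf_rh2 (k r x y : ℤ) (h0 : 0 ≤ r) (h1 : r ≤ k) :
    Hf k r x y + Hf k r (x+1) y ≤ Hf k r (x+1) (y+1) + Hf k r x (y-1) := by
  have g1 := Hf_ge k r (x+1) (y+1)
  have g2 := Hf_ge k r x (y-1)
  obtain ⟨a0, a1, a2, a3, a4, a5, a6, a7, a8, a9⟩ := g1
  obtain ⟨b0, b1, b2, b3, b4, b5, b6, b7, b8, b9⟩ := g2
  apply Hf_add_le
  rintro u (rfl | rfl | rfl | rfl | rfl | rfl | rfl | rfl | rfl | rfl) <;> apply Hf_le <;> omega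

theorem Hf_rh3 (k r x y : ℤ) (h0 : 0 ≤ r) (h1 : r ≤ k) :
    Hf k r x y + Hf k r x (y+1) ≤ Hf k r (x+1) (y+1) + Hf k r (x-1) y := by
  have g1 := Hf_ge k r (x+1) (y+1)
  have g2 := Hf_ge k r (x-1) y
  obtain ⟨a0, a1, a2, a3, a4, a5, a6, a7, a8, a9⟩ := g1
  obtain ⟨b0, b1, b2, b3, b4, b5, b6, b7, b8, b9⟩ := g2
  apply Hf_add_le
  rintro u (rfl | rfl | rfl | rfl | rfl | rfl | rfl | rfl | rfl | rfl) <;> apply Hf_le <;> omega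

theorem Hf_monox (k r x y : ℤ) : Hf k r x y ≤ Hf k r (x+1) y := by
  obtain ⟨a0, a1, a2, a3, a4, a5, a6, a7, a8, a9⟩ := Hf_ge k r (x+1) y
  apply Hf_le <;> omega

theorem Hf_monoy (k r x y : ℤ) : Hf k r x y ≤ Hf k r x (y+1) := by
  obtain ⟨a0, a1, a2, a3, a4, a5, a6, a7, a8, a9⟩ := Hf_ge k r x (y+1)
  apply Hf_le <;> omega

theorem Hf_lip (k r x y : ℤ) : Hf k r (x+1) (y+1) ≤ Hf k r x y + 3 := by
  obtain ⟨a0, a1, a2, a3, a4, a5, a6, a7, a8, a9⟩ := Hf_ge k r x y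
  apply Hf_le <;> omega

/-- strict kink predicates -/
def KY (Φ : ℤ → ℤ → ℤ) (x y : ℤ) : Prop := Φ x y + Φ (x+1) y < Φ (x+1) (y+1) + Φ x (y-1)
def KX (Φ : ℤ → ℤ → ℤ) (x y : ℤ) : Prop := Φ x y + Φ x (y+1) < Φ (x+1) (y+1) + Φ (x-1) y
def KD (Φ : ℤ → ℤ → ℤ) (x y : ℤ) : Prop := Φ x y + Φ (x+1) (y+1) < Φ (x+1) y + Φ x (y+1)

theorem Hf_add_lt {k r x y x' y' b : ℤ}
    (h : ∀ u, (u = x+y ∨ u = y-r ∨ u = 2*x+y-r ∨ u = x-r ∨ u = x+2*y-r ∨ u = 2*x-r ∨ u = 2*y-r ∨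
      u = -r-k ∨ u = 3*x-r-k ∨ u = 3*y-r-k) → Hf k r x' y' ≤ b - 1 - u) :
    Hf k r x y + Hf k r x' y' < b := by
  have := h _ (Hf_cases k r x y)
  linarith

theorem Hf_KY {k r : ℤ} (hk : 1 ≤ k) (hr : r ≤ k) (x y : ℤ)
    (h : (r = 0 ∧ y = 0 ∧ x < k) ∨ (r = 0 ∧ y = k ∧ x < 0) ∨ (r = 0 ∧ y = -k ∧ x < -k) ∨
      (1 ≤ r ∧ y = -r ∧ -r ≤ x ∧ x < 0)) : KY (Hf k r) x y := by
  obtain ⟨a0, a1, a2, a3, a4, a5, a6, a7, a8, a9⟩ := Hf_ge k r (x+1) (y+1)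
  obtain ⟨b0, b1, b2, b3, b4, b5, b6, b7, b8, b9⟩ := Hf_ge k r x (y-1)
  rcases h with ⟨rfl, rfl, h⟩ | ⟨rfl, rfl, h⟩ | ⟨rfl, rfl, h⟩ | ⟨h0, rfl, h1, h2⟩ <;>
  · apply Hf_add_lt
    rintro u (rfl | rfl | rfl | rfl | rfl | rfl | rfl | rfl | rfl | rfl) <;> apply Hf_le <;> omega

theorem Hf_KX {k r : ℤ} (hk : 1 ≤ k) (hr : r ≤ k) (x y : ℤ)
    (h : (r = 0 ∧ x = 0 ∧ y < k) ∨ (r = 0 ∧ x = k ∧ y < 0) ∨ (r = 0 ∧ x = -k ∧ y < -k) ∨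
      (1 ≤ r ∧ x = r ∧ 0 ≤ y ∧ y < r)) : KX (Hf k r) x y := by
  obtain ⟨a0, a1, a2, a3, a4, a5, a6, a7, a8, a9⟩ := Hf_ge k r (x+1) (y+1)
  obtain ⟨b0, b1, b2, b3, b4, b5, b6, b7, b8, b9⟩ := Hf_ge k r (x-1) y
  rcases h with ⟨rfl, rfl, h⟩ | ⟨rfl, rfl, h⟩ | ⟨rfl, rfl, h⟩ | ⟨h0, rfl, h1, h2⟩ <;>
  · apply Hf_add_lt
    rintro u (rfl | rfl | rfl | rfl | rfl | rfl | rfl | rfl | rfl | rfl) <;> apply Hf_le <;> omega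

theorem Hf_KD {k r : ℤ} (hk : 1 ≤ k) (hr : r ≤ k) (x y : ℤ)
    (h : (r = 0 ∧ y = x ∧ -k ≤ x) ∨ (r = 0 ∧ y = x - k ∧ k ≤ x) ∨ (r = 0 ∧ y = x + k ∧ 0 ≤ x) ∨
      (1 ≤ r ∧ y = x + r ∧ -r ≤ x ∧ x < 0)) : KD (Hf k r) x y := by
  obtain ⟨a0, a1, a2, a3, a4, a5, a6, a7, a8, a9⟩ := Hf_ge k r (x+1) y
  obtain ⟨b0, b1, b2, b3, b4, b5, b6, b7, b8, b9⟩ := Hf_ge k r x (y+1)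
  rcases h with ⟨rfl, rfl, h⟩ | ⟨rfl, rfl, h⟩ | ⟨rfl, rfl, h⟩ | ⟨h0, rfl, h1, h2⟩ <;>
  · apply Hf_add_lt
    rintro u (rfl | rfl | rfl | rfl | rfl | rfl | rfl | rfl | rfl | rfl) <;> apply Hf_le <;> omega

theorem Hf_farY {k r : ℤ} (hk : 1 ≤ k) (h0 : 0 ≤ r) (hr : r ≤ k) (x y : ℤ)
    (h1 : x ≤ -20*k - 20*y - 20) (h2 : x ≤ -20*k + 20*y - 20) :
    Hf k r (x+1) y = Hf k r x y ∧ (y ≠ 0 → y ≠ k → y ≠ -k → ¬ KY (Hf k r) x y) := by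
  obtain ⟨a0, a1, a2, a3, a4, a5, a6, a7, a8, a9⟩ := Hf_ge k r (x+1) y
  obtain ⟨b0, b1, b2, b3, b4, b5, b6, b7, b8, b9⟩ := Hf_ge k r x y
  refine ⟨le_antisymm (by apply Hf_le <;> omega) (Hf_monox _ _ _ _), ?_⟩
  intro e1 e2 e3
  unfold KY
  rw [not_lt]
  apply Hf_add_le
  rintro u (rfl | rfl | rfl | rfl | rfl | rfl | rfl | rfl | rfl | rfl) <;> apply Hf_le <;> omega

theorem Hf_farX {k r : ℤ} (hk : 1 ≤ k) (h0 : 0 ≤ r) (hr : r ≤ k) (x y : ℤ)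
    (h1 : y ≤ -20*k - 20*x - 20) (h2 : y ≤ -20*k + 20*x - 20) :
    Hf k r x (y+1) = Hf k r x y ∧ (x ≠ 0 → x ≠ k → x ≠ -k → ¬ KX (Hf k r) x y) := by
  obtain ⟨a0, a1, a2, a3, a4, a5, a6, a7, a8, a9⟩ := Hf_ge k r x (y+1)
  obtain ⟨b0, b1, b2, b3, b4, b5, b6, b7, b8, b9⟩ := Hf_ge k r x y
  refine ⟨le_antisymm (by apply Hf_le <;> omega) (Hf_monoy _ _ _ _), ?_⟩
  intro e1 e2 e3
  unfold KX
  rw [not_lt]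
  apply Hf_add_le
  rintro u (rfl | rfl | rfl | rfl | rfl | rfl | rfl | rfl | rfl | rfl) <;> apply Hf_le <;> omega

theorem Hf_farD {k r : ℤ} (hk : 1 ≤ k) (h0 : 0 ≤ r) (hr : r ≤ k) (x y : ℤ)
    (h1 : 20*k + 20*(y-x) + 20 ≤ x) (h2 : 20*k - 20*(y-x) + 20 ≤ x) :
    (y - x ≠ 0 → y - x ≠ k → y - x ≠ -k → ¬ KD (Hf k r) x y) := by
  obtain ⟨a0, a1, a2, a3, a4, a5, a6, a7, a8, a9⟩ := Hf_ge k r (x+1) (y+1)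
  obtain ⟨b0, b1, b2, b3, b4, b5, b6, b7, b8, b9⟩ := Hf_ge k r x y
  intro e1 e2 e3
  unfold KD
  rw [not_lt]
  apply Hf_add_le
  rintro u (rfl | rfl | rfl | rfl | rfl | rfl | rfl | rfl | rfl | rfl) <;> apply Hf_le <;> omega

/-! ### The tropical polynomial -/

/-- Three concentric families of hexagons. -/
def Ph (k : ℕ) (x y : ℤ) : ℤ :=
  ∑ r ∈ Finset.range k, (Hf k r x y + Hf k r (x-k) y + Hf k r (x-k) (y-k))

theorem Ph_good (k : ℕ) : GoodFn (Ph k) (9 * k) := by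
  have sw : ∀ a b : ℤ, a + 1 - b = (a - b) + 1 := fun a b => by ring
  have sw' : ∀ a b : ℤ, a - 1 - b = (a - b) - 1 := fun a b => by ring
  constructor
  · intro x y
    unfold Ph
    rw [← Finset.sum_add_distrib, ← Finset.sum_add_distrib]
    apply Finset.sum_le_sum
    intro r hr
    have hr' : (r : ℤ) ≤ k := by exact_mod_cast (Finset.mem_range.1 hr).le
    have h0 : (0 : ℤ) ≤ r := by positivity
    have a := Hf_rh1 k r x y h0 hr'
    have b := Hf_rh1 k r (x-k) y h0 hr'
    have c := Hf_rh1 k r (x-k) (y-k) h0 hr'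
    simp only [sw, sw']
    linarith
  · intro x y
    unfold Ph
    rw [← Finset.sum_add_distrib, ← Finset.sum_add_distrib]
    apply Finset.sum_le_sum
    intro r hr
    have hr' : (r : ℤ) ≤ k := by exact_mod_cast (Finset.mem_range.1 hr).le
    have h0 : (0 : ℤ) ≤ r := by positivity
    have a := Hf_rh2 k r x y h0 hr'
    have b := Hf_rh2 k r (x-k) y h0 hr'
    have c := Hf_rh2 k r (x-k) (y-k) h0 hr'
    simp only [sw, sw']
    linarith
  · intro x y
    unfold Ph
    rw [← Finset.sum_add_distrib, ← Finset.sum_add_distrib]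
    apply Finset.sum_le_sum
    intro r hr
    have hr' : (r : ℤ) ≤ k := by exact_mod_cast (Finset.mem_range.1 hr).le
    have h0 : (0 : ℤ) ≤ r := by positivity
    have a := Hf_rh3 k r x y h0 hr'
    have b := Hf_rh3 k r (x-k) y h0 hr'
    have c := Hf_rh3 k r (x-k) (y-k) h0 hr'
    simp only [sw, sw']
    linarith
  · intro x y
    unfold Ph
    apply Finset.sum_le_sum
    intro r hr
    simp only [sw]
    have a := Hf_monox k r x y
    have b := Hf_monox k r (x-k) y
    have c := Hf_monox k r (x-k) (y-k)
    linarith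
  · intro x y
    unfold Ph
    apply Finset.sum_le_sum
    intro r hr
    simp only [sw]
    have a := Hf_monoy k r x y
    have b := Hf_monoy k r (x-k) y
    have c := Hf_monoy k r (x-k) (y-k)
    linarith
  · intro x y
    have e : (9 * k : ℤ) = ∑ r ∈ Finset.range k, (9 : ℤ) := by simp [mul_comm]
    unfold Ph
    rw [e, ← Finset.sum_add_distrib]
    apply Finset.sum_le_sum
    intro r hr
    simp only [sw]
    have a := Hf_lip k r x y
    have b := Hf_lip k r (x-k) y
    have c := Hf_lip k r (x-k) (y-k)
    linarith
  · refine ⟨∑ r ∈ Finset.range k, (20 * k + 20 * r : ℤ), fun x y => ?_⟩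
    have e : ∀ z : ℤ, (9 * k : ℤ) * z = ∑ r ∈ Finset.range k, (9 * z : ℤ) := by
      intro z; simp; ring
    unfold Ph
    rw [e, e, ← Finset.sum_add_distrib]
    have key : ∀ r : ℕ, (0 ≤ Hf k r x y + Hf k r (x-k) y + Hf k r (x-k) (y-k) + (20 * k + 20 * r) ∧
      9 * x ≤ Hf k r x y + Hf k r (x-k) y + Hf k r (x-k) (y-k) + (20 * k + 20 * r) ∧
      9 * y ≤ Hf k r x y + Hf k r (x-k) y + Hf k r (x-k) (y-k) + (20 * k + 20 * r)) := by
      intro r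
      obtain ⟨a0, a1, a2, a3, a4, a5, a6, a7, a8, a9⟩ := Hf_ge k r x y
      obtain ⟨b0, b1, b2, b3, b4, b5, b6, b7, b8, b9⟩ := Hf_ge k r (x-k) y
      obtain ⟨c0, c1, c2, c3, c4, c5, c6, c7, c8, c9⟩ := Hf_ge k r (x-k) (y-k)
      refine ⟨?_, ?_, ?_⟩ <;> omega
    exact ⟨Finset.sum_nonneg fun r _ => (key r).1, Finset.sum_le_sum fun r _ => (key r).2.1,
      Finset.sum_le_sum fun r _ => (key r).2.2⟩

theorem Ph_KY {k : ℕ} {x y : ℤ} (r : ℕ) (hr : r < k)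
    (h : KY (Hf k r) x y ∨ KY (Hf k r) (x-k) y ∨ KY (Hf k r) (x-k) (y-k)) : KY (Ph k) x y := by
  have sw : ∀ a b : ℤ, a + 1 - b = (a - b) + 1 := fun a b => by ring
  have sw' : ∀ a b : ℤ, a - 1 - b = (a - b) - 1 := fun a b => by ring
  unfold KY Ph
  rw [← Finset.sum_add_distrib, ← Finset.sum_add_distrib]
  apply Finset.sum_lt_sum
  · intro r hr
    have hr' : (r : ℤ) ≤ k := by exact_mod_cast (Finset.mem_range.1 hr).le
    have h0 : (0 : ℤ) ≤ r := by positivity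
    have a := Hf_rh2 k r x y h0 hr'
    have b := Hf_rh2 k r (x-k) y h0 hr'
    have c := Hf_rh2 k r (x-k) (y-k) h0 hr'
    simp only [sw, sw']
    linarith
  · refine ⟨r, Finset.mem_range.2 hr, ?_⟩
    have hr' : (r : ℤ) ≤ k := by exact_mod_cast hr.le
    have h0 : (0 : ℤ) ≤ r := by positivity
    have a := Hf_rh2 k r x y h0 hr'
    have b := Hf_rh2 k r (x-k) y h0 hr'
    have c := Hf_rh2 k r (x-k) (y-k) h0 hr'
    simp only [sw, sw']
    unfold KY at h
    rcases h with h | h | h <;> linarith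

theorem Ph_KX {k : ℕ} {x y : ℤ} (r : ℕ) (hr : r < k)
    (h : KX (Hf k r) x y ∨ KX (Hf k r) (x-k) y ∨ KX (Hf k r) (x-k) (y-k)) : KX (Ph k) x y := by
  have sw : ∀ a b : ℤ, a + 1 - b = (a - b) + 1 := fun a b => by ring
  have sw' : ∀ a b : ℤ, a - 1 - b = (a - b) - 1 := fun a b => by ring
  unfold KX Ph
  rw [← Finset.sum_add_distrib, ← Finset.sum_add_distrib]
  apply Finset.sum_lt_sum
  · intro r hr
    have hr' : (r : ℤ) ≤ k := by exact_mod_cast (Finset.mem_range.1 hr).le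
    have h0 : (0 : ℤ) ≤ r := by positivity
    have a := Hf_rh3 k r x y h0 hr'
    have b := Hf_rh3 k r (x-k) y h0 hr'
    have c := Hf_rh3 k r (x-k) (y-k) h0 hr'
    simp only [sw, sw']
    linarith
  · refine ⟨r, Finset.mem_range.2 hr, ?_⟩
    have hr' : (r : ℤ) ≤ k := by exact_mod_cast hr.le
    have h0 : (0 : ℤ) ≤ r := by positivity
    have a := Hf_rh3 k r x y h0 hr'
    have b := Hf_rh3 k r (x-k) y h0 hr'
    have c := Hf_rh3 k r (x-k) (y-k) h0 hr'
    simp only [sw, sw']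
    unfold KX at h
    rcases h with h | h | h <;> linarith

theorem Ph_KD {k : ℕ} {x y : ℤ} (r : ℕ) (hr : r < k)
    (h : KD (Hf k r) x y ∨ KD (Hf k r) (x-k) y ∨ KD (Hf k r) (x-k) (y-k)) : KD (Ph k) x y := by
  have sw : ∀ a b : ℤ, a + 1 - b = (a - b) + 1 := fun a b => by ring
  have sw' : ∀ a b : ℤ, a - 1 - b = (a - b) - 1 := fun a b => by ring
  unfold KD Ph
  rw [← Finset.sum_add_distrib, ← Finset.sum_add_distrib]
  apply Finset.sum_lt_sum
  · intro r hr
    have hr' : (r : ℤ) ≤ k := by exact_mod_cast (Finset.mem_range.1 hr).le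
    have h0 : (0 : ℤ) ≤ r := by positivity
    have a := Hf_rh1 k r x y h0 hr'
    have b := Hf_rh1 k r (x-k) y h0 hr'
    have c := Hf_rh1 k r (x-k) (y-k) h0 hr'
    simp only [sw, sw']
    linarith
  · refine ⟨r, Finset.mem_range.2 hr, ?_⟩
    have hr' : (r : ℤ) ≤ k := by exact_mod_cast hr.le
    have h0 : (0 : ℤ) ≤ r := by positivity
    have a := Hf_rh1 k r x y h0 hr'
    have b := Hf_rh1 k r (x-k) y h0 hr'
    have c := Hf_rh1 k r (x-k) (y-k) h0 hr'
    simp only [sw, sw']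
    unfold KD at h
    rcases h with h | h | h <;> linarith

theorem Ph_farY {k : ℕ} (hk : 0 < k) (x y : ℤ)
    (h1 : x ≤ -40*k - 20*y - 20) (h2 : x ≤ -40*k + 20*y - 20) :
    Ph k (x+1) y = Ph k x y ∧ (KY (Ph k) x y → y = -k ∨ y = 0 ∨ y = k ∨ y = 2*k) := by
  have sw : ∀ a b : ℤ, a + 1 - b = (a - b) + 1 := fun a b => by ring
  have sw' : ∀ a b : ℤ, a - 1 - b = (a - b) - 1 := fun a b => by ring
  constructor
  · unfold Ph
    apply Finset.sum_congr rfl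
    intro r hr
    have hr' : (r : ℤ) ≤ k := by exact_mod_cast (Finset.mem_range.1 hr).le
    have a := (Hf_farY (k := k) (r := r) (by omega) (by omega) hr' x y (by omega) (by omega)).1
    have b := (Hf_farY (k := k) (r := r) (by omega) (by omega) hr' (x-k) y (by omega) (by omega)).1
    have c := (Hf_farY (k := k) (r := r) (by omega) (by omega) hr' (x-k) (y-k)
      (by omega) (by omega)).1
    simp only [sw]
    rw [a, b, c]
  · intro h
    by_contra hc
    push Not at hc
    obtain ⟨n1, n2, n3, n4⟩ := hc
    apply absurd h
    unfold KY Ph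
    rw [not_lt, ← Finset.sum_add_distrib, ← Finset.sum_add_distrib]
    apply Finset.sum_le_sum
    intro r hr
    have hr' : (r : ℤ) ≤ k := by exact_mod_cast (Finset.mem_range.1 hr).le
    have a := (Hf_farY (k := k) (r := r) (by omega) (by omega) hr' x y (by omega) (by omega)).2
      (by omega) (by omega) (by omega)
    have b := (Hf_farY (k := k) (r := r) (by omega) (by omega) hr' (x-k) y (by omega) (by omega)).2
      (by omega) (by omega) (by omega)
    have c := (Hf_farY (k := k) (r := r) (by omega) (by omega) hr' (x-k) (y-k)
      (by omega) (by omega)).2 (by omega) (by omega) (by omega)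
    unfold KY at a b c
    simp only [sw, sw']
    linarith

theorem Ph_farX {k : ℕ} (hk : 0 < k) (x y : ℤ)
    (h1 : y ≤ -60*k - 20*x - 20) (h2 : y ≤ -60*k + 20*x - 20) :
    Ph k x (y+1) = Ph k x y ∧ (KX (Ph k) x y → x = -k ∨ x = 0 ∨ x = k ∨ x = 2*k) := by
  have sw : ∀ a b : ℤ, a + 1 - b = (a - b) + 1 := fun a b => by ring
  have sw' : ∀ a b : ℤ, a - 1 - b = (a - b) - 1 := fun a b => by ring
  constructor
  · unfold Ph
    apply Finset.sum_congr rfl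
    intro r hr
    have hr' : (r : ℤ) ≤ k := by exact_mod_cast (Finset.mem_range.1 hr).le
    have a := (Hf_farX (k := k) (r := r) (by omega) (by omega) hr' x y (by omega) (by omega)).1
    have b := (Hf_farX (k := k) (r := r) (by omega) (by omega) hr' (x-k) y (by omega) (by omega)).1
    have c := (Hf_farX (k := k) (r := r) (by omega) (by omega) hr' (x-k) (y-k)
      (by omega) (by omega)).1
    simp only [sw]
    rw [a, b, c]
  · intro h
    by_contra hc
    push Not at hc
    obtain ⟨n1, n2, n3, n4⟩ := hc
    apply absurd h
    unfold KX Ph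
    rw [not_lt, ← Finset.sum_add_distrib, ← Finset.sum_add_distrib]
    apply Finset.sum_le_sum
    intro r hr
    have hr' : (r : ℤ) ≤ k := by exact_mod_cast (Finset.mem_range.1 hr).le
    have a := (Hf_farX (k := k) (r := r) (by omega) (by omega) hr' x y (by omega) (by omega)).2
      (by omega) (by omega) (by omega)
    have b := (Hf_farX (k := k) (r := r) (by omega) (by omega) hr' (x-k) y (by omega) (by omega)).2
      (by omega) (by omega) (by omega)
    have c := (Hf_farX (k := k) (r := r) (by omega) (by omega) hr' (x-k) (y-k)
      (by omega) (by omega)).2 (by omega) (by omega) (by omega)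
    unfold KX at a b c
    simp only [sw, sw']
    linarith

theorem Ph_farD {k : ℕ} (hk : 0 < k) (x y : ℤ)
    (h1 : 60*k + 20*(y-x) + 20 ≤ x) (h2 : 60*k - 20*(y-x) + 20 ≤ x) :
    KD (Ph k) x y → y - x = -(2*k) ∨ y - x = -k ∨ y - x = 0 ∨ y - x = k := by
  have sw : ∀ a b : ℤ, a + 1 - b = (a - b) + 1 := fun a b => by ring
  have sw' : ∀ a b : ℤ, a - 1 - b = (a - b) - 1 := fun a b => by ring
  intro h
  by_contra hc
  push Not at hc
  obtain ⟨n1, n2, n3, n4⟩ := hc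
  apply absurd h
  unfold KD Ph
  rw [not_lt, ← Finset.sum_add_distrib, ← Finset.sum_add_distrib]
  apply Finset.sum_le_sum
  intro r hr
  have hr' : (r : ℤ) ≤ k := by exact_mod_cast (Finset.mem_range.1 hr).le
  have a := Hf_farD (k := k) (r := r) (by omega) (by omega) hr' x y (by omega) (by omega)
    (by omega) (by omega) (by omega)
  have b := Hf_farD (k := k) (r := r) (by omega) (by omega) hr' (x-k) y (by omega) (by omega)
    (by omega) (by omega) (by omega)
  have c := Hf_farD (k := k) (r := r) (by omega) (by omega) hr' (x-k) (y-k)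
      (by omega) (by omega) (by omega) (by omega) (by omega)
  unfold KD at a b c
  simp only [sw, sw']
  linarith

/-! ### Forcing of the values -/

structure Vals (k : ℕ) (VX VY : ℤ → ℤ → ℝ) : Prop where
  py : ∀ x y, KY (Ph k) x y → VY x y = VY (x+1) y
  px : ∀ x y, KX (Ph k) x y → VX x y = VX x (y+1)
  pd : ∀ x y, KD (Ph k) x y → VY x y - VX x y = VY (x+1) (y+1) - VX (x+1) (y+1)
  fy : ∀ x y : ℤ, x ≤ -40*k - 20*y - 20 → x ≤ -40*k + 20*y - 20 → KY (Ph k) x y → VY x y = y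
  fx : ∀ x y : ℤ, y ≤ -60*k - 20*x - 20 → y ≤ -60*k + 20*x - 20 → KX (Ph k) x y → VX x y = x

theorem Vals.propY {k : ℕ} {VX VY : ℤ → ℤ → ℝ} (h : Vals k VX VY) (x y : ℤ) (n : ℕ)
    (hk : ∀ z, x ≤ z → z < x + n → KY (Ph k) z y) : VY (x+n) y = VY x y := by
  induction n with
  | zero => simp
  | succ n ih =>
    rw [← ih (fun z h1 h2 => hk z h1 (by push_cast; omega))]
    have := h.py (x+n) y (hk _ (by omega) (by push_cast; omega))
    rw [this]; push_cast; rw [add_assoc]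

theorem Vals.propX {k : ℕ} {VX VY : ℤ → ℤ → ℝ} (h : Vals k VX VY) (x y : ℤ) (n : ℕ)
    (hk : ∀ z, y ≤ z → z < y + n → KX (Ph k) x z) : VX x (y+n) = VX x y := by
  induction n with
  | zero => simp
  | succ n ih =>
    rw [← ih (fun z h1 h2 => hk z h1 (by push_cast; omega))]
    have := h.px x (y+n) (hk _ (by omega) (by push_cast; omega))
    rw [this]; push_cast; rw [add_assoc]

theorem Vals.propD {k : ℕ} {VX VY : ℤ → ℤ → ℝ} (h : Vals k VX VY) (x y : ℤ) (n : ℕ)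
    (hk : ∀ m : ℕ, m < n → KD (Ph k) (x+m) (y+m)) :
    VY (x+n) (y+n) - VX (x+n) (y+n) = VY x y - VX x y := by
  induction n with
  | zero => simp
  | succ n ih =>
    rw [← ih (fun m hm => hk m (by omega))]
    have := h.pd (x+n) (y+n) (hk n (by omega))
    rw [this]; push_cast; rw [add_assoc, add_assoc]

theorem Vals.lineY {k : ℕ} {VX VY : ℤ → ℤ → ℝ} (h : Vals k VX VY) (X y : ℤ)
    (hk : ∀ z, z < X → KY (Ph k) z y) (x : ℤ) (hx : x ≤ X) : VY x y = y := by
  obtain ⟨n, hn⟩ : ∃ n : ℕ, x - n ≤ -40*k - 20*y - 20 ∧ x - n ≤ -40*k + 20*y - 20 ∧ 0 < n :=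
    ⟨(x.natAbs + 40*k + 20*y.natAbs+20), by omega, by omega, by omega⟩
  have := h.propY (x-n) y n (fun z _ h2 => hk z (by omega))
  rw [sub_add_cancel] at this
  rw [this]
  exact h.fy _ _ hn.1 hn.2.1 (hk _ (by omega))

theorem Vals.lineX {k : ℕ} {VX VY : ℤ → ℤ → ℝ} (h : Vals k VX VY) (Y x : ℤ)
    (hk : ∀ z, z < Y → KX (Ph k) x z) (y : ℤ) (hy : y ≤ Y) : VX x y = x := by
  obtain ⟨n, hn⟩ : ∃ n : ℕ, y - n ≤ -60*k - 20*x - 20 ∧ y - n ≤ -60*k + 20*x - 20 ∧ 0 < n :=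
    ⟨(y.natAbs + 60*k + 20*x.natAbs+20), by omega, by omega, by omega⟩
  have := h.propX x (y-n) n (fun z _ h2 => hk z (by omega))
  rw [sub_add_cancel] at this
  rw [this]
  exact h.fx _ _ hn.1 hn.2.1 (hk _ (by omega))

def IsCen (k a b : ℤ) : Prop := (a = 0 ∧ b = 0) ∨ (a = k ∧ b = 0) ∨ (a = k ∧ b = k)

theorem cen_KY {k : ℕ} {a b : ℤ} (hc : IsCen k a b) (r : ℕ) (hr : r < k) {x y : ℤ}
    (h : KY (Hf k r) (x-a) (y-b)) : KY (Ph k) x y := by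
  apply Ph_KY r hr
  rcases hc with ⟨rfl, rfl⟩ | ⟨rfl, rfl⟩ | ⟨rfl, rfl⟩
  · left; rwa [sub_zero, sub_zero] at h
  · right; left; rwa [sub_zero] at h
  · right; right; exact h

theorem cen_KX {k : ℕ} {a b : ℤ} (hc : IsCen k a b) (r : ℕ) (hr : r < k) {x y : ℤ}
    (h : KX (Hf k r) (x-a) (y-b)) : KX (Ph k) x y := by
  apply Ph_KX r hr
  rcases hc with ⟨rfl, rfl⟩ | ⟨rfl, rfl⟩ | ⟨rfl, rfl⟩
  · left; rwa [sub_zero, sub_zero] at h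
  · right; left; rwa [sub_zero] at h
  · right; right; exact h

theorem cen_KD {k : ℕ} {a b : ℤ} (hc : IsCen k a b) (r : ℕ) (hr : r < k) {x y : ℤ}
    (h : KD (Hf k r) (x-a) (y-b)) : KD (Ph k) x y := by
  apply Ph_KD r hr
  rcases hc with ⟨rfl, rfl⟩ | ⟨rfl, rfl⟩ | ⟨rfl, rfl⟩
  · left; rwa [sub_zero, sub_zero] at h
  · right; left; rwa [sub_zero] at h
  · right; right; exact h

theorem Vals.cY {k : ℕ} {VX VY : ℤ → ℤ → ℝ} (h : Vals k VX VY) (hk : 0 < k) {a b : ℤ}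
    (hc : IsCen k a b) (x y : ℤ)
    (hh : (y = b ∧ x ≤ a + k) ∨ (y = b + k ∧ x ≤ a) ∨ (y = b - k ∧ x ≤ a - k)) :
    VY x y = y := by
  refine h.lineY x y (fun z hz => cen_KY hc 0 hk (Hf_KY (by omega) (by omega) _ _ ?_)) x le_rfl
  rcases hh with ⟨h1, h2⟩ | ⟨h1, h2⟩ | ⟨h1, h2⟩
  · left; omega
  · right; left; omega
  · right; right; left; omega

theorem Vals.cX {k : ℕ} {VX VY : ℤ → ℤ → ℝ} (h : Vals k VX VY) (hk : 0 < k) {a b : ℤ}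
    (hc : IsCen k a b) (x y : ℤ)
    (hh : (x = a ∧ y ≤ b + k) ∨ (x = a + k ∧ y ≤ b) ∨ (x = a - k ∧ y ≤ b - k)) :
    VX x y = x := by
  refine h.lineX y x (fun z hz => cen_KX hc 0 hk (Hf_KX (by omega) (by omega) _ _ ?_)) y le_rfl
  rcases hh with ⟨h1, h2⟩ | ⟨h1, h2⟩ | ⟨h1, h2⟩
  · left; omega
  · right; left; omega
  · right; right; left; omega

theorem Vals.cD {k : ℕ} {VX VY : ℤ → ℤ → ℝ} (h : Vals k VX VY) (hk : 0 < k) {a b : ℤ}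
    (hc : IsCen k a b) (x y : ℤ)
    (hh : (y - x = b - a ∧ a - k ≤ x) ∨ (y - x = b - a - k ∧ a + k ≤ x) ∨
      (y - x = b - a + k ∧ a ≤ x)) :
    VY x y - VX x y = y - x := by
  rcases hh with ⟨h1, h2⟩ | ⟨h1, h2⟩ | ⟨h1, h2⟩
  · have hx := h.cX hk hc (a-k) (b-k) (by omega)
    have hy := h.cY hk hc (a-k) (b-k) (by omega)
    have := h.propD (a-k) (b-k) (x-(a-k)).toNat (fun m hm =>
      cen_KD hc 0 hk (Hf_KD (by omega) (by omega) _ _ (by left; omega)))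
    rw [show a - k + ((x-(a-k)).toNat : ℤ) = x by omega,
      show b - k + ((x-(a-k)).toNat : ℤ) = y by omega] at this
    rw [this, hx, hy]; norm_cast; omega
  · have hx := h.cX hk hc (a+k) b (by omega)
    have hy := h.cY hk hc (a+k) b (by omega)
    have := h.propD (a+k) b (x-(a+k)).toNat (fun m hm =>
      cen_KD hc 0 hk (Hf_KD (by omega) (by omega) _ _ (by right; left; omega)))
    rw [show a + k + ((x-(a+k)).toNat : ℤ) = x by omega,
      show b + ((x-(a+k)).toNat : ℤ) = y by omega] at this
    rw [this, hx, hy]; norm_cast; omega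
  · have hx := h.cX hk hc a (b+k) (by omega)
    have hy := h.cY hk hc a (b+k) (by omega)
    have := h.propD a (b+k) (x-a).toNat (fun m hm =>
      cen_KD hc 0 hk (Hf_KD (by omega) (by omega) _ _ (by right; right; left; omega)))
    rw [show a + ((x-a).toNat : ℤ) = x by omega,
      show b + k + ((x-a).toNat : ℤ) = y by omega] at this
    rw [this, hx, hy]; norm_cast; omega

theorem Vals.farD {k : ℕ} {VX VY : ℤ → ℤ → ℝ} (h : Vals k VX VY) (hk : 0 < k) (x y : ℤ)
    (hx : 2*k ≤ x) (hh : y - x = -(2*k) ∨ y - x = -k ∨ y - x = 0 ∨ y - x = k) :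
    VY x y - VX x y = y - x := by
  rcases hh with h1 | h1 | h1 | h1
  · exact h.cD hk (a := k) (b := 0) (Or.inr (Or.inl ⟨rfl, rfl⟩)) x y (by omega)
  · exact h.cD hk (a := 0) (b := 0) (Or.inl ⟨rfl, rfl⟩) x y (by omega)
  · exact h.cD hk (a := 0) (b := 0) (Or.inl ⟨rfl, rfl⟩) x y (by omega)
  · exact h.cD hk (a := 0) (b := 0) (Or.inl ⟨rfl, rfl⟩) x y (by omega)

theorem KY_one {k : ℕ} (hk : 0 < k) (x : ℤ) (h1 : 1 ≤ x) (h2 : x < k ∨ k = 1 ∧ x = 1) :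
    KY (Ph k) x 1 := by
  refine cen_KY (a := k) (b := k) (Or.inr (Or.inr ⟨rfl, rfl⟩)) (k-1) (by omega)
    (Hf_KY (by omega) (by omega) _ _ ?_)
  by_cases h : k = 1
  · left; omega
  · right; right; right; omega

theorem Vals.one {k : ℕ} {VX VY : ℤ → ℤ → ℝ} (h : Vals k VX VY) (hk : 0 < k) : VY 1 1 = 1 := by
  have hC : ∀ j : ℕ, 1 ≤ j → j ≤ k → VY j 1 = VY 1 1 := by
    intro j h1 h2
    have := h.propY 1 1 (j-1) (fun z h3 h4 => KY_one hk z h3 (by omega))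
    rwa [show (1:ℤ) + ((j-1 : ℕ) : ℤ) = j by omega] at this
  have c0 : IsCen k 0 0 := Or.inl ⟨rfl, rfl⟩
  have c1 : IsCen k k 0 := Or.inr (Or.inl ⟨rfl, rfl⟩)
  have hI : ∀ j : ℕ, 1 ≤ j → j ≤ k → VX j 1 = j * VY 1 1 := by
    intro j h1
    induction j, h1 using Nat.le_induction with
    | base =>
      intro _
      have := h.cD hk c0 1 1 (by omega)
      push_cast at this ⊢
      linarith
    | succ j h1 ih =>
      intro h2
      have ih := ih (by omega)
      have hA := h.px j 0 (cen_KX c0 j (by omega) (Hf_KX (by omega) (by omega) _ _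
        (by right; right; right; omega)))
      have hy := h.cY hk c0 j 0 (by omega)
      have hB := h.pd j 0 (cen_KD c1 (k-j) (by omega) (Hf_KD (by omega) (by omega) _ _
        (by right; right; right; omega)))
      have hC' := hC (j+1) (by omega) h2
      simp only [zero_add] at hA hB
      push_cast at hC' hy ⊢
      linarith
  have e1 := hI k hk le_rfl
  have e2 := h.cX hk c1 k 1 (by omega)
  have : (k:ℝ) ≠ 0 := by positivity
  rw [e2] at e1
  push_cast at e1
  field_simp at e1
  linarith

/-! ### Discrete primal side -/

def affU (f : ℤ × ℤ → ℝ) (i j : ℤ) (s t : ℝ) : ℝ :=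
  f (i, j) + (s - i) * (f (i+1, j) - f (i, j)) + (t - j) * (f (i, j+1) - f (i, j))

def affD (f : ℤ × ℤ → ℝ) (i j : ℤ) (s t : ℝ) : ℝ :=
  f (i+1, j+1) + (s - i - 1) * (f (i+1, j+1) - f (i, j+1)) +
    (t - j - 1) * (f (i+1, j+1) - f (i+1, j))

def gf (k : ℕ) (v : ℤ × ℤ) : ℝ :=
  if h : ∃ p : ℤ × ℤ, SubG (Ph k) p.1 p.2 v.1 v.2 then
    ((Ph k h.choose.1 h.choose.2 : ℝ) - h.choose.1 * v.1 - h.choose.2 * v.2) / k else 0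

theorem gf_eq {k : ℕ} {x y i j : ℤ} (h : SubG (Ph k) x y i j) :
    gf k (i, j) = ((Ph k x y : ℝ) - x * i - y * j) / k := by
  have he : ∃ p : ℤ × ℤ, SubG (Ph k) p.1 p.2 (i, j).1 (i, j).2 := ⟨(x, y), h⟩
  unfold gf
  rw [dif_pos he]
  congr 1
  have h1 := he.choose_spec x y
  have h2 := h he.choose.1 he.choose.2
  exact_mod_cast le_antisymm h1 h2

theorem gf_le {k : ℕ} (hk : 0 < k) {i j : ℤ} (hi : 0 ≤ i) (hj : 0 ≤ j) (hij : i + j ≤ 9 * k) (x y : ℤ) :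
    gf k (i, j) ≤ ((Ph k x y : ℝ) - x * i - y * j) / k := by
  obtain ⟨x', y', h⟩ := exists_min (Ph_good k) (by omega) 1 i j hi hj (by omega)
  simp only [one_mul] at h
  have h : SubG (Ph k) x' y' i j := h
  rw [gf_eq h]
  have := h x y
  have h2 : ((Ph k x' y' : ℝ) - x' * i - y' * j) ≤ ((Ph k x y : ℝ) - x * i - y * j) := by
    exact_mod_cast this
  gcongr

theorem gf_out {k : ℕ} {i j : ℤ} (h : ¬ (0 ≤ i ∧ 0 ≤ j ∧ i + j ≤ 9 * k)) : gf k (i, j) = 0 := by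
  unfold gf
  rw [dif_neg]
  rintro ⟨p, hp⟩
  exact h (subG_dom (Ph_good k) hp)

structure Hive (N : ℤ) (f : ℤ × ℤ → ℝ) : Prop where
  up : ∀ i j s t : ℤ, 0 ≤ i → 0 ≤ j → i + j + 1 ≤ N → 0 ≤ s → 0 ≤ t → s + t ≤ N →
    f (s, t) ≤ affU f i j s t
  dn : ∀ i j s t : ℤ, 0 ≤ i → 0 ≤ j → i + j + 2 ≤ N → 0 ≤ s → 0 ≤ t → s + t ≤ N →
    f (s, t) ≤ affD f i j s t

structure InS (k : ℕ) (f : ℤ × ℤ → ℝ) : Prop where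
  hive : Hive (9 * k) f
  tu : ∀ i j s t : ℤ, 0 ≤ i → 0 ≤ j → i + j + 1 ≤ 9 * k → 0 ≤ s → 0 ≤ t → s + t ≤ 9 * k →
    gf k (s, t) = affU (gf k) i j s t → f (s, t) = affU f i j s t
  td : ∀ i j s t : ℤ, 0 ≤ i → 0 ≤ j → i + j + 2 ≤ 9 * k → 0 ≤ s → 0 ≤ t → s + t ≤ 9 * k →
    gf k (s, t) = affD (gf k) i j s t → f (s, t) = affD f i j s t
  side : ∀ s t : ℤ, s = 0 ∨ t = 0 → f (s, t) = gf k (s, t)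
  out : ∀ s t : ℤ, ¬ (0 ≤ s ∧ 0 ≤ t ∧ s + t ≤ 9 * k) → f (s, t) = 0

theorem gf_affU {k : ℕ} {x y i j : ℤ} (h1 : SubG (Ph k) x y i j) (h2 : SubG (Ph k) x y (i+1) j)
    (h3 : SubG (Ph k) x y i (j+1)) (s t : ℝ) :
    affU (gf k) i j s t = ((Ph k x y : ℝ) - x * s - y * t) / k := by
  unfold affU
  rw [gf_eq h1, gf_eq h2, gf_eq h3]; push_cast; ring

theorem gf_affD {k : ℕ} {x y i j : ℤ} (h1 : SubG (Ph k) x y (i+1) (j+1))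
    (h2 : SubG (Ph k) x y (i+1) j)
    (h3 : SubG (Ph k) x y i (j+1)) (s t : ℝ) :
    affD (gf k) i j s t = ((Ph k x y : ℝ) - x * s - y * t) / k := by
  unfold affD
  rw [gf_eq h1, gf_eq h2, gf_eq h3]; push_cast; ring

theorem gf_hive {k : ℕ} (hk : 0 < k) : Hive (9 * k) (gf k) := by
  constructor
  · intro i j s t h1 h2 h3 h4 h5 h6
    obtain ⟨x, y, a, b, c⟩ := exists_up (Ph_good k) (by omega) i j h1 h2 h3
    rw [gf_affU a b c]
    exact gf_le hk h4 h5 h6 x y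
  · intro i j s t h1 h2 h3 h4 h5 h6
    obtain ⟨x, y, a, b, c⟩ := exists_dn (Ph_good k) (by omega) i j h1 h2 h3
    rw [gf_affD a b c]
    exact gf_le hk h4 h5 h6 x y

theorem gf_inS {k : ℕ} (hk : 0 < k) : InS k (gf k) :=
  ⟨gf_hive hk, fun _ _ _ _ _ _ _ _ _ _ h => h, fun _ _ _ _ _ _ _ _ _ _ h => h,
    fun _ _ _ => rfl, fun _ _ h => gf_out h⟩

/-- Every `f` in the face is affine on every tile. -/
theorem tile_aff {k : ℕ} {f : ℤ × ℤ → ℝ} (hf : InS k f) (x y : ℤ) :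
    ∃ A B c : ℝ, ∀ s t : ℤ, SubG (Ph k) x y s t → f (s, t) = c + A * s + B * t := by
  have hΦ := Ph_good k
  have dom : ∀ s t : ℤ, SubG (Ph k) x y s t → 0 ≤ s ∧ 0 ≤ t ∧ s + t ≤ 9 * k :=
    fun s t h => subG_dom hΦ h
  -- reduction to an up triangle
  have red : ∀ i j : ℤ, 0 ≤ i → 0 ≤ j → i + j + 1 ≤ 9 * k →
      (∀ s t : ℤ, SubG (Ph k) x y s t → gf k (s, t) = affU (gf k) i j s t) →
      ∃ A B c : ℝ, ∀ s t : ℤ, SubG (Ph k) x y s t → f (s, t) = c + A * s + B * t := by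
    intro i j h1 h2 h3 h
    refine ⟨f (i+1, j) - f (i, j), f (i, j+1) - f (i, j),
      f (i, j) - i * (f (i+1, j) - f (i, j)) - j * (f (i, j+1) - f (i, j)), ?_⟩
    intro s t hst
    obtain ⟨d1, d2, d3⟩ := dom s t hst
    rw [hf.tu i j s t h1 h2 h3 d1 d2 d3 (h s t hst)]
    unfold affU; ring
  by_cases hU : ∃ i j, SubG (Ph k) x y i j ∧ SubG (Ph k) x y (i+1) j ∧ SubG (Ph k) x y i (j+1)
  · obtain ⟨i, j, a, b, c⟩ := hU
    have := dom _ _ a; have := dom _ _ b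
    refine red i j (by omega) (by omega) (by omega) ?_
    intro s t h
    rw [gf_affU a b c, gf_eq h]
  by_cases hD : ∃ i j, SubG (Ph k) x y (i+1) (j+1) ∧ SubG (Ph k) x y (i+1) j ∧
      SubG (Ph k) x y i (j+1)
  · obtain ⟨i, j, a, b, c⟩ := hD
    have := dom _ _ a; have := dom _ _ b; have := dom _ _ c
    refine ⟨f (i+1, j+1) - f (i, j+1), f (i+1, j+1) - f (i+1, j),
      f (i+1, j+1) - (i+1) * (f (i+1, j+1) - f (i, j+1))
        - (j+1) * (f (i+1, j+1) - f (i+1, j)), ?_⟩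
    intro s t hst
    obtain ⟨d1, d2, d3⟩ := dom s t hst
    rw [hf.td i j s t (by omega) (by omega) (by omega) d1 d2 d3
      (by rw [gf_affD a b c, gf_eq hst])]
    unfold affD; ring
  by_cases hX : ∃ i j, SubG (Ph k) x y i j ∧ SubG (Ph k) x y (i+1) j
  · obtain ⟨i, j, a, b⟩ := hX
    have := dom _ _ a; have := dom _ _ b
    have line : ∀ s t, SubG (Ph k) x y s t → t = j := by
      intro s t h
      have u1 : ¬ SubG (Ph k) x y i (j+1) := fun c => hU ⟨i, j, a, b, c⟩
      have u2 : ¬ SubG (Ph k) x y (i+1) (j-1) := fun c => hD ⟨i, j-1, by simpa using b, c,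
        by simpa using a⟩
      rw [subG_iff hΦ] at a b h u1 u2
      omega
    refine red i j (by omega) (by omega) (by omega) ?_
    intro s t h
    obtain rfl := line s t h
    unfold affU
    rw [gf_eq a, gf_eq b, gf_eq h]; push_cast; ring
  by_cases hY : ∃ i j, SubG (Ph k) x y i j ∧ SubG (Ph k) x y i (j+1)
  · obtain ⟨i, j, a, b⟩ := hY
    have := dom _ _ a; have := dom _ _ b
    have line : ∀ s t, SubG (Ph k) x y s t → s = i := by
      intro s t h
      have u1 : ¬ SubG (Ph k) x y (i+1) j := fun c => hX ⟨i, j, a, c⟩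
      have u2 : ¬ SubG (Ph k) x y (i-1) (j+1) := fun c => hX ⟨i-1, j+1, c, by simpa using b⟩
      rw [subG_iff hΦ] at a b h u1 u2
      omega
    refine red i j (by omega) (by omega) (by omega) ?_
    intro s t h
    obtain rfl := line s t h
    unfold affU
    rw [gf_eq a, gf_eq b, gf_eq h]; push_cast; ring
  by_cases hZ : ∃ i j, SubG (Ph k) x y (i+1) j ∧ SubG (Ph k) x y i (j+1)
  · obtain ⟨i, j, a, b⟩ := hZ
    have := dom _ _ a; have := dom _ _ b
    have line : ∀ s t, SubG (Ph k) x y s t → t = i + j + 1 - s := by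
      intro s t h
      have u1 : ¬ SubG (Ph k) x y i j := fun c => hX ⟨i, j, c, a⟩
      have u2 : ¬ SubG (Ph k) x y (i+1) (j+1) := fun c => hX ⟨i, j+1, b, c⟩
      rw [subG_iff hΦ] at a b h u1 u2
      omega
    refine red i j (by omega) (by omega) (by omega) ?_
    intro s t h
    obtain rfl := line s t h
    unfold affU
    rw [gf_eq h]
    have ea := gf_eq a
    have eb := gf_eq b
    push_cast at ea eb ⊢
    rw [ea, eb]
    ring
  by_cases hP : ∃ i j, SubG (Ph k) x y i j
  · obtain ⟨i, j, a⟩ := hP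
    refine ⟨0, 0, f (i, j), ?_⟩
    intro s t h
    have u1 : ¬ SubG (Ph k) x y (i+1) j := fun c => hX ⟨i, j, a, c⟩
    have u2 : ¬ SubG (Ph k) x y (i-1) j := fun c => hX ⟨i-1, j, c, by simpa using a⟩
    have u3 : ¬ SubG (Ph k) x y i (j+1) := fun c => hY ⟨i, j, a, c⟩
    have u4 : ¬ SubG (Ph k) x y i (j-1) := fun c => hY ⟨i, j-1, c, by simpa using a⟩
    have u5 : ¬ SubG (Ph k) x y (i+1) (j-1) := fun c => hZ ⟨i, j-1, c, by simpa using a⟩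
    have u6 : ¬ SubG (Ph k) x y (i-1) (j+1) := fun c => hZ ⟨i-1, j, by simpa using a, c⟩
    have : s = i ∧ t = j := by
      rw [subG_iff hΦ] at a h u1 u2 u3 u4 u5 u6
      omega
    obtain ⟨rfl, rfl⟩ := this
    ring
  · exact ⟨0, 0, 0, fun s t h => absurd ⟨s, t, h⟩ hP⟩

/-! ### Conclusions for the elements of the face -/

theorem inS_vals {k : ℕ} (hk : 0 < k) {f : ℤ × ℤ → ℝ} (hf : InS k f) {A B c : ℤ → ℤ → ℝ}
    (h : ∀ x y s t : ℤ, SubG (Ph k) x y s t → f (s, t) = c x y + A x y * s + B x y * t) :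
    Vals k (fun x y => -(k * A x y)) (fun x y => -(k * B x y)) := by
  have hΦ := Ph_good k
  have k0 : (k : ℝ) ≠ 0 := by positivity
  constructor
  · intro x y hK
    obtain ⟨i, j, -, a1, a2, a3, a4⟩ := kinkY hΦ x y hK
    have e1 := h _ _ _ _ a1; have e2 := h _ _ _ _ a2
    have e3 := h _ _ _ _ a3; have e4 := h _ _ _ _ a4
    push_cast at e2 e4
    have : B x y = B (x+1) y := by linarith
    simp only [this]
  · intro x y hK
    obtain ⟨i, j, -, a1, a2, a3, a4⟩ := kinkX hΦ x y hK
    have e1 := h _ _ _ _ a1; have e2 := h _ _ _ _ a2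
    have e3 := h _ _ _ _ a3; have e4 := h _ _ _ _ a4
    push_cast at e2 e4
    have : A x y = A x (y+1) := by linarith
    simp only [this]
  · intro x y hK
    obtain ⟨i, j, a1, a2, a3, a4⟩ := kinkD hΦ x y hK
    have e1 := h _ _ _ _ a1; have e2 := h _ _ _ _ a2
    have e3 := h _ _ _ _ a3; have e4 := h _ _ _ _ a4
    push_cast at e1 e2 e3 e4
    have : B x y - A x y = B (x+1) (y+1) - A (x+1) (y+1) := by linarith
    linear_combination -(k:ℝ) * this
  · intro x y h1 h2 hK
    obtain ⟨i, j, hi, a1, a2, -, -⟩ := kinkY hΦ x y hK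
    have hi0 : i = 0 := by have := (Ph_farY hk x y h1 h2).1; omega
    subst hi0
    have e1 := h _ _ _ _ a1; have e2 := h _ _ _ _ a2
    rw [hf.side _ _ (Or.inl rfl), gf_eq a1] at e1
    rw [hf.side _ _ (Or.inl rfl), gf_eq a2] at e2
    push_cast at e1 e2
    field_simp at e1 e2
    linarith
  · intro x y h1 h2 hK
    obtain ⟨i, j, hi, a1, a2, -, -⟩ := kinkX hΦ x y hK
    have hi0 : j = 0 := by have := (Ph_farX hk x y h1 h2).1; omega
    subst hi0
    have e1 := h _ _ _ _ a1; have e2 := h _ _ _ _ a2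
    rw [hf.side _ _ (Or.inr rfl), gf_eq a1] at e1
    rw [hf.side _ _ (Or.inr rfl), gf_eq a2] at e2
    push_cast at e1 e2
    field_simp at e1 e2
    linarith

/-- Some entry has denominator `k`. -/
theorem inS_one {k : ℕ} (hk : 0 < k) {f : ℤ × ℤ → ℝ} (hf : InS k f) :
    ∃ i j : ℤ, 0 ≤ i ∧ 0 ≤ j ∧ i + j + 1 ≤ 9 * k ∧ f (i, j) - f (i, j+1) = 1 / k := by
  have hΦ := Ph_good k
  have k0 : (k : ℝ) ≠ 0 := by positivity
  choose A B c h using tile_aff hf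
  have := (inS_vals hk hf h).one hk
  obtain ⟨i, j, -, a1, a2, -, -⟩ := kinkY hΦ 1 1 (KY_one hk 1 le_rfl (by omega))
  have d1 := subG_dom hΦ a1
  have d2 := subG_dom hΦ a2
  refine ⟨i, j, d1.1, d1.2.1, by omega, ?_⟩
  rw [h _ _ _ _ a1, h _ _ _ _ a2]
  push_cast
  field_simp
  linarith

theorem gf_side0 {k : ℕ} (hk : 0 < k) (j : ℤ) (h0 : 0 ≤ j) (h1 : j + 1 ≤ 9 * k) :
    ∃ z : ℤ, gf k (0, j) - gf k (0, j+1) = z := by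
  have hΦ := Ph_good k
  have k0 : (k : ℝ) ≠ 0 := by positivity
  obtain ⟨x, y, h⟩ := exists_min hΦ (by omega) 2 0 (2*j+1) (by omega) (by omega) (by omega)
  have mono : ∀ n : ℕ, Ph k (x - n) y ≤ Ph k x y := by
    intro n
    induction n with
    | zero => simp
    | succ n ih =>
      refine le_trans ?_ ih
      have := hΦ.monox (x - n - 1) y
      rw [sub_add_cancel] at this
      push_cast
      rwa [← sub_sub]
  have h' : ∀ n : ℕ, ∀ x' y', 2 * Ph k (x-n) y - (x-n) * 0 - y * (2*j+1) ≤
      2 * Ph k x' y' - x' * 0 - y' * (2*j+1) := by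
    intro n x' y'
    have a := h x' y'
    have b := mono n
    simp only [mul_zero, sub_zero] at a ⊢
    omega
  obtain ⟨n, n1, n2, n3⟩ : ∃ n : ℕ, x - n ≤ -40*k - 20*y - 20 ∧ x - n ≤ -40*k + 20*y - 20 ∧ 0 < n :=
    ⟨(x.natAbs + 40*k + 20*y.natAbs+20), by omega, by omega, by omega⟩
  obtain ⟨b1, b2, b3, b4, b5, b6⟩ := min_local (h' n)
  obtain ⟨c1, c2, c3, c4, c5, c6⟩ := min_local (h' (n-1))
  rw [show x - ((n-1 : ℕ) : ℤ) = x - n + 1 by omega] at c1 c2 c3 c4 c5 c6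
  obtain ⟨f1, f2⟩ := Ph_farY hk (x-n) y n1 n2
  have hK : KY (Ph k) (x-n) y := by unfold KY; omega
  have s1 : SubG (Ph k) (x-n) y 0 j := by
    rw [subG_iff hΦ]; refine ⟨?_, ?_, ?_, ?_, ?_, ?_⟩ <;> omega
  have s2 : SubG (Ph k) (x-n) y 0 (j+1) := by
    rw [subG_iff hΦ]; refine ⟨?_, ?_, ?_, ?_, ?_, ?_⟩ <;> omega
  have key : gf k (0, j) - gf k (0, j+1) = y / k := by
    rw [gf_eq s1, gf_eq s2]; push_cast; ring
  rw [key]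
  rcases f2 hK with e | e | e | e
  · exact ⟨-1, by rw [e]; push_cast; field_simp⟩
  · exact ⟨0, by rw [e]; simp⟩
  · exact ⟨1, by rw [e]; push_cast; field_simp⟩
  · exact ⟨2, by rw [e]; push_cast; field_simp⟩

theorem gf_side1 {k : ℕ} (hk : 0 < k) (j : ℤ) (h0 : 0 ≤ j) (h1 : j + 1 ≤ 9 * k) :
    ∃ z : ℤ, gf k (j+1, 0) - gf k (j, 0) = z := by
  have hΦ := Ph_good k
  have k0 : (k : ℝ) ≠ 0 := by positivity
  obtain ⟨x, y, h⟩ := exists_min hΦ (by omega) 2 (2*j+1) 0 (by omega) (by omega) (by omega)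
  have mono : ∀ n : ℕ, Ph k x (y - n) ≤ Ph k x y := by
    intro n
    induction n with
    | zero => simp
    | succ n ih =>
      refine le_trans ?_ ih
      have := hΦ.monoy x (y - n - 1)
      rw [sub_add_cancel] at this
      push_cast
      rwa [← sub_sub]
  have h' : ∀ n : ℕ, ∀ x' y', 2 * Ph k x (y-n) - x * (2*j+1) - (y-n) * 0 ≤
      2 * Ph k x' y' - x' * (2*j+1) - y' * 0 := by
    intro n x' y'
    have a := h x' y'
    have b := mono n
    simp only [mul_zero, sub_zero] at a ⊢
    omega
  obtain ⟨n, n1, n2, n3⟩ : ∃ n : ℕ, y - n ≤ -60*k - 20*x - 20 ∧ y - n ≤ -60*k + 20*x - 20 ∧ 0 < n :=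
    ⟨(y.natAbs + 60*k + 20*x.natAbs+20), by omega, by omega, by omega⟩
  obtain ⟨b1, b2, b3, b4, b5, b6⟩ := min_local (h' n)
  obtain ⟨c1, c2, c3, c4, c5, c6⟩ := min_local (h' (n-1))
  rw [show y - ((n-1 : ℕ) : ℤ) = y - n + 1 by omega] at c1 c2 c3 c4 c5 c6
  obtain ⟨f1, f2⟩ := Ph_farX hk x (y-n) n1 n2
  have hK : KX (Ph k) x (y-n) := by unfold KX; omega
  have s1 : SubG (Ph k) x (y-n) j 0 := by
    rw [subG_iff hΦ]; refine ⟨?_, ?_, ?_, ?_, ?_, ?_⟩ <;> omega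
  have s2 : SubG (Ph k) x (y-n) (j+1) 0 := by
    rw [subG_iff hΦ]; refine ⟨?_, ?_, ?_, ?_, ?_, ?_⟩ <;> omega
  have key : gf k (j+1, 0) - gf k (j, 0) = -x / k := by
    rw [gf_eq s1, gf_eq s2]; push_cast; ring
  rw [key]
  rcases f2 hK with e | e | e | e
  · exact ⟨1, by rw [e]; push_cast; field_simp⟩
  · exact ⟨0, by rw [e]; simp⟩
  · exact ⟨-1, by rw [e]; push_cast; field_simp⟩
  · exact ⟨-2, by rw [e]; push_cast; field_simp⟩

theorem inS_side2 {k : ℕ} (hk : 0 < k) {f : ℤ × ℤ → ℝ} (hf : InS k f) (i j : ℤ) (hi : 0 ≤ i)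
    (hj : 0 ≤ j) (hij : i + j + 1 = 9 * k) : ∃ z : ℤ, f (i, j+1) - f (i+1, j) = z := by
  have hΦ := Ph_good k
  have k0 : (k : ℝ) ≠ 0 := by positivity
  obtain ⟨x, y, h⟩ := exists_min hΦ (by omega) 2 (2*i+1) (2*j+1) (by omega) (by omega) (by omega)
  have mono : ∀ n : ℕ, Ph k (x + n) (y + n) ≤ Ph k x y + n * (9 * k) := by
    intro n
    induction n with
    | zero => simp
    | succ n ih =>
      have := hΦ.lip (x + n) (y + n)
      push_cast
      rw [← add_assoc, ← add_assoc]
      linarith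
  have h' : ∀ n : ℕ, ∀ x' y', 2 * Ph k (x+n) (y+n) - (x+n) * (2*i+1) - (y+n) * (2*j+1) ≤
      2 * Ph k x' y' - x' * (2*i+1) - y' * (2*j+1) := by
    intro n x' y'
    have a := h x' y'
    have b := mono n
    have c : (9 * k : ℤ) = i + j + 1 := hij.symm
    rw [c] at b
    linarith
  obtain ⟨n, n1, n2, n3⟩ : ∃ n : ℕ, 60*k + 20*(y-x) + 20 ≤ x + n ∧ 60*k - 20*(y-x) + 20 ≤ x + n ∧
      2 * k ≤ x + n :=
    ⟨(21*x.natAbs + 60*k + 20*y.natAbs+20), by omega, by omega, by omega⟩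
  obtain ⟨b1, b2, b3, b4, b5, b6⟩ := min_local (h' n)
  obtain ⟨c1, c2, c3, c4, c5, c6⟩ := min_local (h' (n+1))
  push_cast at c1 c2 c3 c4 c5 c6
  rw [← add_assoc, ← add_assoc, add_sub_cancel_right] at c2
  have hK : KD (Ph k) (x+n) (y+n) := by unfold KD; omega
  have hyx : (y + n) - (x + n) = y - x := by ring
  have f2 := Ph_farD hk (x+n) (y+n) (by rw [hyx]; exact n1) (by rw [hyx]; exact n2) hK
  have lip := hΦ.lip (x+n) (y+n)
  have lip2 := hΦ.lip (x+n-1) (y+n-1)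
  simp only [sub_add_cancel] at lip2
  have s1 : SubG (Ph k) (x+n) (y+n) i (j+1) := by
    rw [subG_iff hΦ]; refine ⟨?_, ?_, ?_, ?_, ?_, ?_⟩ <;> omega
  have s2 : SubG (Ph k) (x+n) (y+n) (i+1) j := by
    rw [subG_iff hΦ]; refine ⟨?_, ?_, ?_, ?_, ?_, ?_⟩ <;> omega
  choose A B c hh using tile_aff hf
  have := (inS_vals hk hf hh).farD hk (x+n) (y+n) n3 f2
  rw [hh _ _ _ _ s1, hh _ _ _ _ s2]
  push_cast at this ⊢
  have key : B (x+n) (y+n) - A (x+n) (y+n) = -(((y + n - (x + n) : ℤ) : ℝ) / k) := by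
    field_simp; push_cast; linarith
  have : (c (x + n) (y + n) + A (x + n) (y + n) * i + B (x + n) (y + n) * (j + 1) -
      (c (x + n) (y + n) + A (x + n) (y + n) * (i + 1) + B (x + n) (y + n) * j))
      = B (x+n) (y+n) - A (x+n) (y+n) := by ring
  rw [this, key]
  rcases f2 with e | e | e | e
  · exact ⟨2, by rw [e]; push_cast; field_simp⟩
  · exact ⟨1, by rw [e]; push_cast; field_simp⟩
  · exact ⟨0, by rw [e]; simp⟩
  · exact ⟨-1, by rw [e]; push_cast; field_simp⟩

/-! ### Compactness and extreme points of the face -/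

theorem continuous_affU (i j : ℤ) (s t : ℝ) : Continuous fun f : ℤ × ℤ → ℝ => affU f i j s t := by
  unfold affU; fun_prop

theorem continuous_affD (i j : ℤ) (s t : ℝ) : Continuous fun f : ℤ × ℤ → ℝ => affD f i j s t := by
  unfold affD; fun_prop

theorem isClosed_inS (k : ℕ) : IsClosed {f : ℤ × ℤ → ℝ | InS k f} := by
  have : {f : ℤ × ℤ → ℝ | InS k f} =
    {f | ∀ i j s t : ℤ, 0 ≤ i → 0 ≤ j → i + j + 1 ≤ 9 * k → 0 ≤ s → 0 ≤ t → s + t ≤ 9 * k →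
      f (s, t) ≤ affU f i j s t} ∩
    {f | ∀ i j s t : ℤ, 0 ≤ i → 0 ≤ j → i + j + 2 ≤ 9 * k → 0 ≤ s → 0 ≤ t → s + t ≤ 9 * k →
      f (s, t) ≤ affD f i j s t} ∩
    {f | ∀ i j s t : ℤ, 0 ≤ i → 0 ≤ j → i + j + 1 ≤ 9 * k → 0 ≤ s → 0 ≤ t → s + t ≤ 9 * k →
      gf k (s, t) = affU (gf k) i j s t → f (s, t) = affU f i j s t} ∩
    {f | ∀ i j s t : ℤ, 0 ≤ i → 0 ≤ j → i + j + 2 ≤ 9 * k → 0 ≤ s → 0 ≤ t → s + t ≤ 9 * k →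
      gf k (s, t) = affD (gf k) i j s t → f (s, t) = affD f i j s t} ∩
    {f | ∀ s t : ℤ, s = 0 ∨ t = 0 → f (s, t) = gf k (s, t)} ∩
    {f | ∀ s t : ℤ, ¬ (0 ≤ s ∧ 0 ≤ t ∧ s + t ≤ 9 * k) → f (s, t) = 0} := by
    ext f
    constructor
    · rintro ⟨⟨a, b⟩, c, d, e, g⟩
      exact ⟨⟨⟨⟨⟨a, b⟩, c⟩, d⟩, e⟩, g⟩
    · rintro ⟨⟨⟨⟨⟨a, b⟩, c⟩, d⟩, e⟩, g⟩
      exact ⟨⟨a, b⟩, c, d, e, g⟩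
  rw [this]
  refine ((((IsClosed.inter ?_ ?_).inter ?_).inter ?_).inter ?_).inter ?_
  all_goals simp only [Set.setOf_forall]
  · refine isClosed_iInter fun i => isClosed_iInter fun j => isClosed_iInter fun s =>
      isClosed_iInter fun t => isClosed_iInter fun _ => isClosed_iInter fun _ =>
      isClosed_iInter fun _ => isClosed_iInter fun _ => isClosed_iInter fun _ =>
      isClosed_iInter fun _ => isClosed_le (continuous_apply _) (continuous_affU _ _ _ _)
  · refine isClosed_iInter fun i => isClosed_iInter fun j => isClosed_iInter fun s =>
      isClosed_iInter fun t => isClosed_iInter fun _ => isClosed_iInter fun _ =>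
      isClosed_iInter fun _ => isClosed_iInter fun _ => isClosed_iInter fun _ =>
      isClosed_iInter fun _ => isClosed_le (continuous_apply _) (continuous_affD _ _ _ _)
  · refine isClosed_iInter fun i => isClosed_iInter fun j => isClosed_iInter fun s =>
      isClosed_iInter fun t => isClosed_iInter fun _ => isClosed_iInter fun _ =>
      isClosed_iInter fun _ => isClosed_iInter fun _ => isClosed_iInter fun _ =>
      isClosed_iInter fun _ => isClosed_iInter fun _ =>
      isClosed_eq (continuous_apply _) (continuous_affU _ _ _ _)
  · refine isClosed_iInter fun i => isClosed_iInter fun j => isClosed_iInter fun s =>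
      isClosed_iInter fun t => isClosed_iInter fun _ => isClosed_iInter fun _ =>
      isClosed_iInter fun _ => isClosed_iInter fun _ => isClosed_iInter fun _ =>
      isClosed_iInter fun _ => isClosed_iInter fun _ =>
      isClosed_eq (continuous_apply _) (continuous_affD _ _ _ _)
  · refine isClosed_iInter fun s => isClosed_iInter fun t => isClosed_iInter fun _ =>
      isClosed_eq (continuous_apply _) continuous_const
  · refine isClosed_iInter fun s => isClosed_iInter fun t => isClosed_iInter fun _ =>
      isClosed_eq (continuous_apply _) continuous_const

theorem inS_bdd {k : ℕ} (hk : 0 < k) (v : ℤ × ℤ) :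
    ∃ a b : ℝ, ∀ f, InS k f → a ≤ f v ∧ f v ≤ b := by
  obtain ⟨s, t⟩ := v
  by_cases h0 : 0 ≤ s ∧ 0 ≤ t ∧ s + t ≤ 9 * k
  swap
  · exact ⟨0, 0, fun f hf => by rw [hf.out s t h0]; simp⟩
  obtain ⟨h1, h2, h3⟩ := h0
  by_cases hs : s = 0
  · exact ⟨gf k (s, t), gf k (s, t), fun f hf => by rw [hf.side s t (Or.inl hs)]; simp⟩
  have hM : (0:ℝ) < s + t := by
    have : 0 < s + t := by omega
    exact_mod_cast this
  refine ⟨(s * gf k (s+t, 0) + t * gf k (0, s+t)) / (s + t), affU (gf k) 0 0 s t, ?_⟩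
  intro f hf
  constructor
  · rw [div_le_iff₀ hM]
    have a := hf.hive.up (s-1) t (s+t) 0 (by omega) h2 (by omega) (by omega) le_rfl (by omega)
    have b := hf.hive.up (s-1) t 0 (s+t) (by omega) h2 (by omega) le_rfl (by omega) (by omega)
    rw [hf.side _ _ (Or.inr rfl)] at a
    rw [hf.side _ _ (Or.inl rfl)] at b
    have s0 : (0:ℝ) ≤ s := by exact_mod_cast h1
    have t0 : (0:ℝ) ≤ t := by exact_mod_cast h2
    have a' := mul_le_mul_of_nonneg_left a s0
    have b' := mul_le_mul_of_nonneg_left b t0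
    unfold affU at a' b'
    rw [sub_add_cancel] at a' b'
    push_cast at a' b'
    calc _ ≤ _ := add_le_add a' b'
      _ = _ := by ring
  · have := hf.hive.up 0 0 s t le_rfl le_rfl (by omega) h1 h2 h3
    unfold affU at this ⊢
    rwa [hf.side 0 0 (Or.inl rfl), hf.side (0+1) 0 (Or.inr rfl), hf.side 0 (0+1) (Or.inl rfl)] at this

theorem isCompact_inS {k : ℕ} (hk : 0 < k) : IsCompact {f : ℤ × ℤ → ℝ | InS k f} := by
  choose a b h using inS_bdd hk
  have hc : IsCompact (Set.univ.pi fun v => Set.Icc (a v) (b v)) :=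
    isCompact_univ_pi fun v => isCompact_Icc
  exact hc.of_isClosed_subset (isClosed_inS k) fun f hf v _ => h v f hf

theorem exists_ext {k : ℕ} (hk : 0 < k) : ∃ f : ℤ × ℤ → ℝ, InS k f ∧
    ∀ f1 f2, InS k f1 → InS k f2 → (∀ v, f v = (f1 v + f2 v) / 2) → f1 = f2 := by
  obtain ⟨f, hf⟩ := (isCompact_inS hk).extremePoints_nonempty ⟨gf k, gf_inS hk⟩
  refine ⟨f, hf.1, ?_⟩
  intro f1 f2 h1 h2 hm
  rw [mem_extremePoints_iff_left] at hf
  have e1 := hf.2 f1 h1 f2 h2 ⟨1/2, 1/2, by norm_num, by norm_num, by norm_num, by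
    ext v; simp [hm v]; ring⟩
  subst e1
  ext v
  have := hm v
  linarith

def trunc (k : ℕ) (f : ℤ × ℤ → ℝ) (v : ℤ × ℤ) : ℝ :=
  if 0 ≤ v.1 ∧ 0 ≤ v.2 ∧ v.1 + v.2 ≤ 9 * k then f v else 0

theorem trunc_eq {k : ℕ} (f : ℤ × ℤ → ℝ) {s t : ℤ} (h1 : 0 ≤ s) (h2 : 0 ≤ t)
    (h3 : s + t ≤ 9 * k) : trunc k f (s, t) = f (s, t) := by
  unfold trunc; rw [if_pos ⟨h1, h2, h3⟩]

theorem trunc_affU {k : ℕ} (f : ℤ × ℤ → ℝ) {i j : ℤ} (h1 : 0 ≤ i) (h2 : 0 ≤ j)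
    (h3 : i + j + 1 ≤ 9 * k) (s t : ℝ) : affU (trunc k f) i j s t = affU f i j s t := by
  unfold affU
  rw [trunc_eq f (by omega) (by omega) (by omega), trunc_eq f (by omega) (by omega) (by omega),
    trunc_eq f (by omega) (by omega) (by omega)]

theorem trunc_affD {k : ℕ} (f : ℤ × ℤ → ℝ) {i j : ℤ} (h1 : 0 ≤ i) (h2 : 0 ≤ j)
    (h3 : i + j + 2 ≤ 9 * k) (s t : ℝ) : affD (trunc k f) i j s t = affD f i j s t := by
  unfold affD
  rw [trunc_eq f (by omega) (by omega) (by omega), trunc_eq f (by omega) (by omega) (by omega),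
    trunc_eq f (by omega) (by omega) (by omega)]

theorem trunc_inS {k : ℕ} {f f1 f2 : ℤ × ℤ → ℝ} (hf : InS k f) (h1 : Hive (9 * k) f1)
    (h2 : Hive (9 * k) f2)
    (side : ∀ s t : ℤ, 0 ≤ s → 0 ≤ t → s + t ≤ 9 * k → s = 0 ∨ t = 0 → f1 (s, t) = gf k (s, t))
    (avg : ∀ s t : ℤ, 0 ≤ s → 0 ≤ t → s + t ≤ 9 * k → f (s, t) = (f1 (s, t) + f2 (s, t)) / 2) :
    InS k (trunc k f1) := by
  refine ⟨⟨?_, ?_⟩, ?_, ?_, ?_, ?_⟩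
  · intro i j s t a1 a2 a3 a4 a5 a6
    rw [trunc_affU _ a1 a2 a3, trunc_eq _ a4 a5 a6]
    exact h1.up i j s t a1 a2 a3 a4 a5 a6
  · intro i j s t a1 a2 a3 a4 a5 a6
    rw [trunc_affD _ a1 a2 a3, trunc_eq _ a4 a5 a6]
    exact h1.dn i j s t a1 a2 a3 a4 a5 a6
  · intro i j s t a1 a2 a3 a4 a5 a6 hg
    rw [trunc_affU _ a1 a2 a3, trunc_eq _ a4 a5 a6]
    have e := hf.tu i j s t a1 a2 a3 a4 a5 a6 hg
    have p := h1.up i j s t a1 a2 a3 a4 a5 a6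
    have q := h2.up i j s t a1 a2 a3 a4 a5 a6
    have : affU f i j s t = (affU f1 i j s t + affU f2 i j s t) / 2 := by
      unfold affU
      rw [avg i j (by omega) (by omega) (by omega), avg (i+1) j (by omega) (by omega) (by omega),
        avg i (j+1) (by omega) (by omega) (by omega)]
      ring
    rw [avg s t a4 a5 a6] at e
    linarith
  · intro i j s t a1 a2 a3 a4 a5 a6 hg
    rw [trunc_affD _ a1 a2 a3, trunc_eq _ a4 a5 a6]
    have e := hf.td i j s t a1 a2 a3 a4 a5 a6 hg
    have p := h1.dn i j s t a1 a2 a3 a4 a5 a6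
    have q := h2.dn i j s t a1 a2 a3 a4 a5 a6
    have : affD f i j s t = (affD f1 i j s t + affD f2 i j s t) / 2 := by
      unfold affD
      rw [avg (i+1) (j+1) (by omega) (by omega) (by omega),
        avg (i+1) j (by omega) (by omega) (by omega),
        avg i (j+1) (by omega) (by omega) (by omega)]
      ring
    rw [avg s t a4 a5 a6] at e
    linarith
  · intro s t h
    by_cases hd : 0 ≤ s ∧ 0 ≤ t ∧ s + t ≤ 9 * k
    · rw [trunc_eq _ hd.1 hd.2.1 hd.2.2, side s t hd.1 hd.2.1 hd.2.2 h]
    · rw [gf_out hd]; unfold trunc; rw [if_neg hd]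
  · intro s t hd
    unfold trunc; rw [if_neg hd]

/-- The extreme hive. -/
theorem exists_vertex {k : ℕ} (hk : 0 < k) : ∃ f : ℤ × ℤ → ℝ, InS k f ∧
    ∀ f1 f2, Hive (9 * k) f1 → Hive (9 * k) f2 →
    (∀ s t : ℤ, 0 ≤ s → 0 ≤ t → s + t ≤ 9 * k → s = 0 ∨ t = 0 → f1 (s, t) = gf k (s, t)) →
    (∀ s t : ℤ, 0 ≤ s → 0 ≤ t → s + t ≤ 9 * k → s = 0 ∨ t = 0 → f2 (s, t) = gf k (s, t)) →
    (∀ s t : ℤ, 0 ≤ s → 0 ≤ t → s + t ≤ 9 * k → f (s, t) = (f1 (s, t) + f2 (s, t)) / 2) →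
    ∀ s t : ℤ, 0 ≤ s → 0 ≤ t → s + t ≤ 9 * k → f1 (s, t) = f2 (s, t) := by
  obtain ⟨f, hf, hext⟩ := exists_ext hk
  refine ⟨f, hf, ?_⟩
  intro f1 f2 h1 h2 s1 s2 avg s t a b c
  have e := hext (trunc k f1) (trunc k f2) (trunc_inS hf h1 h2 s1 avg)
    (trunc_inS hf h2 h1 s2 (fun s t a b c => by rw [avg s t a b c, add_comm])) ?_
  · rw [← trunc_eq f1 a b c, e, trunc_eq f2 a b c]
  · rintro ⟨s, t⟩
    by_cases hd : 0 ≤ s ∧ 0 ≤ t ∧ s + t ≤ 9 * k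
    · rw [trunc_eq _ hd.1 hd.2.1 hd.2.2, trunc_eq _ hd.1 hd.2.1 hd.2.2,
        avg s t hd.1 hd.2.1 hd.2.2]
    · rw [hf.out s t hd]; unfold trunc; rw [if_neg hd, if_neg hd]; simp

/-! ### Geometry -/

def Lp (s t : ℝ) : Pt := (s + t / 2, t * (Real.sqrt 3 / 2))

def csL : Pt →ₗ[ℝ] ℝ := LinearMap.fst ℝ ℝ ℝ - (1 / Real.sqrt 3) • LinearMap.snd ℝ ℝ ℝ
def ctL : Pt →ₗ[ℝ] ℝ := (2 / Real.sqrt 3) • LinearMap.snd ℝ ℝ ℝ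

theorem s3 : Real.sqrt 3 ≠ 0 := by positivity

theorem csL_Lp (s t : ℝ) : csL (Lp s t) = s := by
  have := s3
  simp [csL, Lp]; field_simp; ring

theorem ctL_Lp (s t : ℝ) : ctL (Lp s t) = t := by
  have := s3
  simp [ctL, Lp]; field_simp

theorem Lp_surj (P : Pt) : P = Lp (csL P) (ctL P) := by
  have := s3
  obtain ⟨p, q⟩ := P
  ext <;> simp [csL, ctL, Lp] <;> field_simp
  ring

theorem Lp_add (s t s' t' : ℝ) : Lp s t + Lp s' t' = Lp (s + s') (t + t') := by
  ext <;> simp [Lp] <;> ring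

theorem Lp_smul (a s t : ℝ) : a • Lp s t = Lp (a * s) (a * t) := by
  ext <;> simp [Lp] <;> ring

theorem Lp_sub (s t s' t' : ℝ) : Lp s t - Lp s' t' = Lp (s - s') (t - t') := by
  ext <;> simp [Lp] <;> ring

theorem Lp_inj {s t s' t' : ℝ} : Lp s t = Lp s' t' ↔ s = s' ∧ t = t' := by
  constructor
  · intro h
    constructor
    · rw [← csL_Lp s t, h, csL_Lp]
    · rw [← ctL_Lp s t, h, ctL_Lp]
  · rintro ⟨rfl, rfl⟩; rfl

theorem xi0 : xiv 0 = Lp 1 0 := by ext <;> simp [xiv, Lp]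
theorem xi1 : xiv 1 = Lp (-1) 1 := by ext <;> simp [xiv, Lp]; norm_num
theorem xi2 : xiv 2 = Lp 0 (-1) := by
  ext <;> simp [xiv, Lp]
  norm_num

theorem mem_hull3 {A B C P : Pt} : P ∈ convexHull ℝ ({A, B, C} : Set Pt) ↔
    ∃ a b c : ℝ, 0 ≤ a ∧ 0 ≤ b ∧ 0 ≤ c ∧ a + b + c = 1 ∧ a • A + b • B + c • C = P := by
  constructor
  · intro h
    have hc : Convex ℝ {P : Pt | ∃ a b c : ℝ, 0 ≤ a ∧ 0 ≤ b ∧ 0 ≤ c ∧ a + b + c = 1 ∧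
        a • A + b • B + c • C = P} := by
      rintro _ ⟨a, b, c, ha, hb, hc, h1, rfl⟩ _ ⟨a', b', c', ha', hb', hc', h1', rfl⟩ u v hu hv huv
      refine ⟨u * a + v * a', u * b + v * b', u * c + v * c', by positivity, by positivity,
        by positivity, ?_, ?_⟩
      · linear_combination u * h1 + v * h1' + huv
      · module
    refine convexHull_min ?_ hc h
    rintro Q (rfl | rfl | rfl)
    · exact ⟨1, 0, 0, by simp⟩
    · exact ⟨0, 1, 0, by simp⟩
    · exact ⟨0, 0, 1, by simp⟩
  · rintro ⟨a, b, c, ha, hb, hc, h1, rfl⟩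
    have hconv := convex_convexHull ℝ ({A, B, C} : Set Pt)
    have := hconv.sum_mem (t := Finset.univ) (w := ![a, b, c]) (z := ![A, B, C])
      (by intro i _; fin_cases i <;> simpa) (by simp [Fin.sum_univ_three, h1])
      (by intro i _; apply subset_convexHull; fin_cases i <;> simp)
    simpa [Fin.sum_univ_three] using this

theorem hullU (i j M : ℝ) (hM : 0 < M) (s t : ℝ) :
    Lp s t ∈ convexHull ℝ ({Lp i j, Lp (i+M) j, Lp i (j+M)} : Set Pt) ↔
      i ≤ s ∧ j ≤ t ∧ s + t ≤ i + j + M := by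
  rw [mem_hull3]
  simp only [Lp_smul, Lp_add, Lp_inj]
  constructor
  · rintro ⟨a, b, c, ha, hb, hc, h1, rfl, rfl⟩
    obtain rfl : a = 1 - b - c := by linarith
    have := mul_nonneg hb hM.le
    have := mul_nonneg hc hM.le
    have := mul_nonneg ha hM.le
    refine ⟨?_, ?_, ?_⟩ <;> nlinarith
  · rintro ⟨h1, h2, h3⟩
    refine ⟨1 - (s-i)/M - (t-j)/M, (s-i)/M, (t-j)/M, ?_, div_nonneg (by linarith) hM.le,
      div_nonneg (by linarith) hM.le, by ring, by field_simp; ring, by field_simp; ring⟩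
    rw [sub_sub, ← add_div, sub_nonneg, div_le_one hM]
    linarith

theorem hullD (i j : ℝ) (s t : ℝ) :
    Lp s t ∈ convexHull ℝ ({Lp i (j+1), Lp (i+1) (j+1), Lp (i+1) j} : Set Pt) ↔
      s ≤ i + 1 ∧ t ≤ j + 1 ∧ i + j + 1 ≤ s + t := by
  rw [mem_hull3]
  simp only [Lp_smul, Lp_add, Lp_inj]
  constructor
  · rintro ⟨a, b, c, ha, hb, hc, h1, rfl, rfl⟩
    obtain rfl : b = 1 - a - c := by linarith
    refine ⟨?_, ?_, ?_⟩ <;> nlinarith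
  · rintro ⟨h1, h2, h3⟩
    exact ⟨i + 1 - s, s + t - i - j - 1, j + 1 - t, by linarith, by linarith, by linarith,
      by ring, by ring, by ring⟩

def Li (i j : ℤ) : Pt := Lp i j

theorem Li_inj {i j i' j' : ℤ} : Li i j = Li i' j' ↔ i = i' ∧ j = j' := by
  unfold Li; rw [Lp_inj]; norm_cast

def mkU (i j : ℤ) : GridTriangle := ⟨Li i j, true⟩
def mkD (i j : ℤ) : GridTriangle := ⟨Li i (j+1), false⟩

theorem mkU_v (i j : ℤ) : (mkU i j).v0 = Li i j ∧ (mkU i j).v1 = Li (i+1) j ∧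
    (mkU i j).v2 = Li i (j+1) := by
  refine ⟨rfl, ?_, ?_⟩ <;>
    simp [mkU, GridTriangle.v1, GridTriangle.v2, xi0, xi1, Li, Lp_add]

theorem mkD_v (i j : ℤ) : (mkD i j).v0 = Li i (j+1) ∧ (mkD i j).v1 = Li (i+1) (j+1) ∧
    (mkD i j).v2 = Li (i+1) j := by
  refine ⟨rfl, ?_, ?_⟩ <;>
    simp [mkD, GridTriangle.v1, GridTriangle.v2, xi0, xi2, Li, Lp_add]

theorem mkU_edges (i j : ℤ) (e : Ed) : e ∈ (mkU i j).edgeFinset ↔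
    e = (Li i j, Li (i+1) j) ∨ e = (Li (i+1) j, Li i (j+1)) ∨ e = (Li i (j+1), Li i j) := by
  obtain ⟨h0, h1, h2⟩ := mkU_v i j
  simp only [GridTriangle.edgeFinset, GridTriangle.e0, GridTriangle.e1, GridTriangle.e2, h0, h1,
    h2, Finset.mem_insert, Finset.mem_singleton]

theorem mkD_edges (i j : ℤ) (e : Ed) : e ∈ (mkD i j).edgeFinset ↔
    e = (Li i (j+1), Li (i+1) (j+1)) ∨ e = (Li (i+1) (j+1), Li (i+1) j) ∨
      e = (Li (i+1) j, Li i (j+1)) := by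
  obtain ⟨h0, h1, h2⟩ := mkD_v i j
  simp only [GridTriangle.edgeFinset, GridTriangle.e0, GridTriangle.e1, GridTriangle.e2, h0, h1,
    h2, Finset.mem_insert, Finset.mem_singleton]

theorem mkU_region (i j : ℤ) (s t : ℝ) : Lp s t ∈ (mkU i j).region ↔
    (i:ℝ) ≤ s ∧ (j:ℝ) ≤ t ∧ s + t ≤ i + j + 1 := by
  obtain ⟨h0, h1, h2⟩ := mkU_v i j
  unfold GridTriangle.region
  rw [h0, h1, h2, ← hullU i j 1 one_pos]
  simp only [Li]; push_cast; rfl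

theorem mkD_region (i j : ℤ) (s t : ℝ) : Lp s t ∈ (mkD i j).region ↔
    s ≤ i + 1 ∧ t ≤ j + 1 ∧ (i:ℝ) + j + 1 ≤ s + t := by
  obtain ⟨h0, h1, h2⟩ := mkD_v i j
  unfold GridTriangle.region
  rw [h0, h1, h2, ← hullD i j]
  simp only [Li]; push_cast; rfl

def box (N : ℤ) : Finset (ℤ × ℤ) := Finset.Icc 0 N ×ˢ Finset.Icc 0 N

def tr (N : ℤ) : Finset GridTriangle :=
  ((box N).filter fun p => p.1 + p.2 + 1 ≤ N).image (fun p => mkU p.1 p.2) ∪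
  ((box N).filter fun p => p.1 + p.2 + 2 ≤ N).image (fun p => mkD p.1 p.2)

theorem mem_tr {N : ℤ} {T : GridTriangle} : T ∈ tr N ↔
    (∃ i j : ℤ, 0 ≤ i ∧ 0 ≤ j ∧ i + j + 1 ≤ N ∧ T = mkU i j) ∨
    (∃ i j : ℤ, 0 ≤ i ∧ 0 ≤ j ∧ i + j + 2 ≤ N ∧ T = mkD i j) := by
  unfold tr box
  simp only [Finset.mem_union, Finset.mem_image, Finset.mem_filter, Finset.mem_product,
    Finset.mem_Icc, Prod.exists]
  constructor
  · rintro (⟨i, j, ⟨h1, h2⟩, rfl⟩ | ⟨i, j, ⟨h1, h2⟩, rfl⟩)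
    · left; exact ⟨i, j, by omega, by omega, h2, rfl⟩
    · right; exact ⟨i, j, by omega, by omega, h2, rfl⟩
  · rintro (⟨i, j, h1, h2, h3, rfl⟩ | ⟨i, j, h1, h2, h3, rfl⟩)
    · left; exact ⟨i, j, ⟨by omega, h3⟩, rfl⟩
    · right; exact ⟨i, j, ⟨by omega, h3⟩, rfl⟩

theorem tr_U {N i j : ℤ} (h1 : 0 ≤ i) (h2 : 0 ≤ j) (h3 : i + j + 1 ≤ N) : mkU i j ∈ tr N :=
  mem_tr.2 (Or.inl ⟨i, j, h1, h2, h3, rfl⟩)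
theorem tr_D {N i j : ℤ} (h1 : 0 ≤ i) (h2 : 0 ≤ j) (h3 : i + j + 2 ≤ N) : mkD i j ∈ tr N :=
  mem_tr.2 (Or.inr ⟨i, j, h1, h2, h3, rfl⟩)

theorem tr_region_mem {N : ℤ} (hN : 0 < N) (s t : ℝ) :
    Lp s t ∈ (⋃ T ∈ tr N, GridTriangle.region T) ↔ 0 ≤ s ∧ 0 ≤ t ∧ s + t ≤ N := by
  simp only [Set.mem_iUnion, exists_prop]
  constructor
  · rintro ⟨T, hT, h⟩
    rcases mem_tr.1 hT with ⟨i, j, h1, h2, h3, rfl⟩ | ⟨i, j, h1, h2, h3, rfl⟩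
    · rw [mkU_region] at h
      have h1 : (0:ℝ) ≤ i := by exact_mod_cast h1
      have h2 : (0:ℝ) ≤ j := by exact_mod_cast h2
      have h3 : (i:ℝ) + j + 1 ≤ N := by exact_mod_cast h3
      refine ⟨?_, ?_, ?_⟩ <;> linarith
    · rw [mkD_region] at h
      have h1 : (0:ℝ) ≤ i := by exact_mod_cast h1
      have h2 : (0:ℝ) ≤ j := by exact_mod_cast h2
      have h3 : (i:ℝ) + j + 2 ≤ N := by exact_mod_cast h3
      refine ⟨?_, ?_, ?_⟩ <;> linarith
  · rintro ⟨h1, h2, h3⟩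
    have a1 := Int.floor_le s; have a2 := Int.lt_floor_add_one s
    have b1 := Int.floor_le t; have b2 := Int.lt_floor_add_one t
    have i0 : 0 ≤ ⌊s⌋ := Int.floor_nonneg.2 h1
    have j0 : 0 ≤ ⌊t⌋ := Int.floor_nonneg.2 h2
    generalize ⌊s⌋ = i at *
    generalize ⌊t⌋ = j at *
    by_cases hc : s + t ≤ i + j + 1
    · by_cases hb : i + j + 1 ≤ N
      · exact ⟨_, tr_U i0 j0 hb, (mkU_region _ _ _ _).2 ⟨a1, b1, hc⟩⟩
      · have hb' : (N:ℝ) ≤ i + j := by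
          have : N ≤ i + j := by omega
          exact_mod_cast this
        have hij : i + j = N := by
          have : (i:ℝ) + j ≤ N := by linarith
          have : i + j ≤ N := by exact_mod_cast this
          omega
        by_cases hi : i = 0
        · refine ⟨_, tr_U (i := i) (j := j-1) i0 (by omega) (by omega), (mkU_region _ _ _ _).2 ?_⟩
          push_cast
          refine ⟨?_, ?_, ?_⟩ <;> linarith
        · refine ⟨_, tr_U (i := i-1) (j := j) (by omega) (by omega) (by omega),
            (mkU_region _ _ _ _).2 ?_⟩
          push_cast
          refine ⟨?_, ?_, ?_⟩ <;> linarith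
    · have : (i:ℝ) + j + 1 < N := by linarith
      have : i + j + 1 < N := by exact_mod_cast this
      exact ⟨_, tr_D i0 j0 (by omega), (mkD_region _ _ _ _).2 ⟨a2.le, b2.le, by linarith⟩⟩

theorem tr_region {N : ℤ} (hN : 0 < N) : (⋃ T ∈ tr N, GridTriangle.region T) =
    convexHull ℝ ({Li 0 0, Li N 0, Li 0 N} : Set Pt) := by
  ext P
  rw [Lp_surj P, tr_region_mem hN]
  have := hullU 0 0 N (by exact_mod_cast hN) (csL P) (ctL P)
  simp only [zero_add] at this
  rw [← this]
  simp [Li]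

theorem latticeVec_Lp (i j : ℤ) : IsLatticeVec (Lp i j) := by
  refine ⟨i + j, j, ?_⟩
  rw [xi0, xi1, Lp_smul, Lp_smul, Lp_add, Lp_inj]
  push_cast
  constructor <;> ring

def GG (N : ℤ) (hN : 0 < N) : ConvexGrid where
  tris := tr N
  nonempty := ⟨_, tr_U le_rfl le_rfl (by omega)⟩
  aligned := by
    have key : ∀ T ∈ tr N, ∃ i j : ℤ, T.base = Li i j := by
      intro T hT
      rcases mem_tr.1 hT with ⟨i, j, h1, h2, h3, rfl⟩ | ⟨i, j, h1, h2, h3, rfl⟩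
      · exact ⟨i, j, rfl⟩
      · exact ⟨i, j+1, rfl⟩
    intro T hT T' hT'
    obtain ⟨i, j, h⟩ := key T hT
    obtain ⟨i', j', h'⟩ := key T' hT'
    rw [h, h']
    unfold Li
    rw [Lp_sub]
    have := latticeVec_Lp (i - i') (j - j')
    push_cast at this
    exact this
  convex := by rw [tr_region hN]; exact convex_convexHull _ _

/-! ### Edges and boundary of the big triangle -/

theorem edges_up {N : ℤ} {hN : 0 < N} {e : Ed} : e ∈ (GG N hN).edges ↔
    ∃ i j : ℤ, 0 ≤ i ∧ 0 ≤ j ∧ i + j + 1 ≤ N ∧ (e = (Li i j, Li (i+1) j) ∨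
      e = (Li (i+1) j, Li i (j+1)) ∨ e = (Li i (j+1), Li i j)) := by
  unfold ConvexGrid.edges
  rw [Finset.mem_biUnion]
  constructor
  · rintro ⟨T, hT, he⟩
    rcases mem_tr.1 hT with ⟨i, j, h1, h2, h3, rfl⟩ | ⟨i, j, h1, h2, h3, rfl⟩
    · exact ⟨i, j, h1, h2, h3, (mkU_edges _ _ _).1 he⟩
    · rcases (mkD_edges _ _ _).1 he with rfl | rfl | rfl
      · exact ⟨i, j+1, h1, by omega, by omega, Or.inl rfl⟩
      · exact ⟨i+1, j, by omega, by omega, by omega, Or.inr (Or.inr rfl)⟩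
      · exact ⟨i, j, by omega, by omega, by omega, Or.inr (Or.inl rfl)⟩
  · rintro ⟨i, j, h1, h2, h3, h⟩
    exact ⟨_, tr_U h1 h2 h3, (mkU_edges _ _ _).2 h⟩

theorem mkU_ne_mkD (i j i' j' : ℤ) : mkU i j ≠ mkD i' j' := by
  intro h
  have := congrArg GridTriangle.up h
  simp [mkU, mkD] at this

theorem bd_two {N : ℤ} {hN : 0 < N} {e : Ed} (h : e ∈ (GG N hN).boundary) {T T' : GridTriangle}
    (hT : T ∈ tr N) (hT' : T' ∈ tr N) (h1 : e ∈ T.edgeFinset) (h2 : e ∈ T'.edgeFinset) :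
    T = T' := by
  unfold ConvexGrid.boundary at h
  rw [Finset.mem_filter] at h
  have := Finset.card_le_one.1 h.2.le
  exact this T (Finset.mem_filter.2 ⟨hT, h1⟩) T' (Finset.mem_filter.2 ⟨hT', h2⟩)

theorem bd_cases {N : ℤ} {hN : 0 < N} {e : Ed} (h : e ∈ (GG N hN).boundary) :
    (∃ i : ℤ, 0 ≤ i ∧ i + 1 ≤ N ∧ e = (Li i 0, Li (i+1) 0)) ∨
    (∃ i j : ℤ, 0 ≤ i ∧ 0 ≤ j ∧ i + j + 1 = N ∧ e = (Li (i+1) j, Li i (j+1))) ∨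
    (∃ j : ℤ, 0 ≤ j ∧ j + 1 ≤ N ∧ e = (Li 0 (j+1), Li 0 j)) := by
  have he : e ∈ (GG N hN).edges := (Finset.mem_filter.1 h).1
  obtain ⟨i, j, h1, h2, h3, h4⟩ := edges_up.1 he
  have hU := (mkU_edges i j e).2 h4
  rcases h4 with rfl | rfl | rfl
  · by_cases hj : j = 0
    · subst hj; left; exact ⟨i, h1, by omega, rfl⟩
    · exfalso
      refine mkU_ne_mkD i j i (j-1) (bd_two h (tr_U h1 h2 h3)
        (tr_D h1 (by omega) (by omega)) hU ((mkD_edges _ _ _).2 ?_))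
      left; rw [sub_add_cancel]
  · by_cases hj : i + j + 1 = N
    · right; left; exact ⟨i, j, h1, h2, hj, rfl⟩
    · exfalso
      refine mkU_ne_mkD i j i j (bd_two h (tr_U h1 h2 h3)
        (tr_D h1 (by omega) (by omega)) hU ((mkD_edges _ _ _).2 ?_))
      right; right; rfl
  · by_cases hj : i = 0
    · subst hj; right; right; exact ⟨j, h2, by omega, rfl⟩
    · exfalso
      refine mkU_ne_mkD i j (i-1) j (bd_two h (tr_U h1 h2 h3)
        (tr_D (by omega) (by omega) (by omega)) hU ((mkD_edges _ _ _).2 ?_))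
      right; left; rw [sub_add_cancel]

theorem bd_card (n : ℕ) (hN : (0:ℤ) < n) : (GG n hN).boundary.card ≤ 3 * n := by
  have sub : (GG n hN).boundary ⊆
      (Finset.range n).image (fun i : ℕ => ((Li i 0, Li (i+1) 0) : Ed)) ∪
      ((Finset.range n).image (fun i : ℕ => ((Li (i+1) (n-1-i), Li i (n-1-i+1)) : Ed)) ∪
      (Finset.range n).image (fun i : ℕ => ((Li 0 (i+1), Li 0 i) : Ed))) := by
    intro e he
    rw [Finset.mem_union, Finset.mem_union, Finset.mem_image, Finset.mem_image, Finset.mem_image]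
    rcases bd_cases he with ⟨i, h1, h2, rfl⟩ | ⟨i, j, h1, h2, h3, rfl⟩ | ⟨i, h1, h2, rfl⟩
    · left
      refine ⟨i.toNat, Finset.mem_range.2 (by omega), ?_⟩
      rw [Int.toNat_of_nonneg h1]
    · right; left
      refine ⟨i.toNat, Finset.mem_range.2 (by omega), ?_⟩
      rw [Int.toNat_of_nonneg h1, show (n:ℤ) - 1 - i = j by omega]
    · right; right
      refine ⟨i.toNat, Finset.mem_range.2 (by omega), ?_⟩
      rw [Int.toNat_of_nonneg h1]
  refine (Finset.card_le_card sub).trans ?_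
  refine (Finset.card_union_le _ _).trans ?_
  have a1 := Finset.card_image_le (s := Finset.range n)
    (f := fun i : ℕ => ((Li i 0, Li (i+1) 0) : Ed))
  have a2 := Finset.card_image_le (s := Finset.range n)
    (f := fun i : ℕ => ((Li (i+1) (n-1-i), Li i (n-1-i+1)) : Ed))
  have a3 := Finset.card_image_le (s := Finset.range n)
    (f := fun i : ℕ => ((Li 0 (i+1), Li 0 i) : Ed))
  have a4 := Finset.card_union_le
    ((Finset.range n).image (fun i : ℕ => ((Li (i+1) (n-1-i), Li i (n-1-i+1)) : Ed)))
    ((Finset.range n).image (fun i : ℕ => ((Li 0 (i+1), Li 0 i) : Ed)))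
  rw [Finset.card_range] at a1 a2 a3
  omega

theorem bd_side1 {N : ℤ} {hN : 0 < N} {i : ℤ} (h0 : 0 ≤ i) (h1 : i + 1 ≤ N) :
    (Li i 0, Li (i+1) 0) ∈ (GG N hN).boundary := by
  unfold ConvexGrid.boundary
  rw [Finset.mem_filter]
  refine ⟨edges_up.2 ⟨i, 0, h0, le_rfl, by omega, Or.inl rfl⟩, ?_⟩
  rw [Finset.card_eq_one]
  refine ⟨mkU i 0, ?_⟩
  ext T
  rw [Finset.mem_filter, Finset.mem_singleton]
  constructor
  · rintro ⟨hT, he⟩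
    rcases mem_tr.1 hT with ⟨i', j', a1, a2, a3, rfl⟩ | ⟨i', j', a1, a2, a3, rfl⟩
    · rw [mkU_edges] at he
      simp only [Prod.mk.injEq, Li_inj] at he
      obtain ⟨rfl, rfl⟩ : i' = i ∧ j' = 0 := by omega
      rfl
    · rw [mkD_edges] at he
      simp only [Prod.mk.injEq, Li_inj] at he
      omega
  · rintro rfl
    exact ⟨tr_U h0 le_rfl (by omega), (mkU_edges _ _ _).2 (Or.inl rfl)⟩

theorem bd_side0 {N : ℤ} {hN : 0 < N} {j : ℤ} (h0 : 0 ≤ j) (h1 : j + 1 ≤ N) :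
    (Li 0 (j+1), Li 0 j) ∈ (GG N hN).boundary := by
  unfold ConvexGrid.boundary
  rw [Finset.mem_filter]
  refine ⟨edges_up.2 ⟨0, j, le_rfl, h0, by omega, Or.inr (Or.inr rfl)⟩, ?_⟩
  rw [Finset.card_eq_one]
  refine ⟨mkU 0 j, ?_⟩
  ext T
  rw [Finset.mem_filter, Finset.mem_singleton]
  constructor
  · rintro ⟨hT, he⟩
    rcases mem_tr.1 hT with ⟨i', j', a1, a2, a3, rfl⟩ | ⟨i', j', a1, a2, a3, rfl⟩
    · rw [mkU_edges] at he
      simp only [Prod.mk.injEq, Li_inj] at he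
      obtain ⟨rfl, rfl⟩ : i' = 0 ∧ j' = j := by omega
      rfl
    · rw [mkD_edges] at he
      simp only [Prod.mk.injEq, Li_inj] at he
      omega
  · rintro rfl
    exact ⟨tr_U le_rfl h0 (by omega), (mkU_edges _ _ _).2 (Or.inr (Or.inr rfl))⟩

theorem seg1 {N : ℤ} (hN : 0 < N) {i : ℤ} (h0 : 0 ≤ i) (h1 : i ≤ N) :
    Li i 0 ∈ segment ℝ (Li 0 0) (Li N 0) := by
  have hN' : (0:ℝ) < N := by exact_mod_cast hN
  have h0' : (0:ℝ) ≤ i := by exact_mod_cast h0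
  have h1' : (i:ℝ) ≤ N := by exact_mod_cast h1
  refine ⟨1 - i / N, i / N, by rw [sub_nonneg, div_le_one hN']; exact h1', by positivity,
    by ring, ?_⟩
  unfold Li
  rw [Lp_smul, Lp_smul, Lp_add, Lp_inj]
  push_cast
  constructor
  · field_simp; ring
  · ring

theorem seg0 {N : ℤ} (hN : 0 < N) {i : ℤ} (h0 : 0 ≤ i) (h1 : i ≤ N) :
    Li 0 i ∈ segment ℝ (Li 0 0) (Li 0 N) := by
  have hN' : (0:ℝ) < N := by exact_mod_cast hN
  have h0' : (0:ℝ) ≤ i := by exact_mod_cast h0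
  have h1' : (i:ℝ) ≤ N := by exact_mod_cast h1
  refine ⟨1 - i / N, i / N, by rw [sub_nonneg, div_le_one hN']; exact h1', by positivity,
    by ring, ?_⟩
  unfold Li
  rw [Lp_smul, Lp_smul, Lp_add, Lp_inj]
  push_cast
  constructor
  · ring
  · field_simp; ring

theorem side1_mem {N : ℤ} {hN : 0 < N} {i : ℤ} (h0 : 0 ≤ i) (h1 : i + 1 ≤ N) :
    (Li i 0, Li (i+1) 0) ∈ SideEdges (GG N hN) (Li 0 0) (Li N 0) :=
  Finset.mem_filter.2 ⟨bd_side1 h0 h1, seg1 hN h0 (by omega), seg1 hN (by omega) h1⟩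

theorem side0_mem {N : ℤ} {hN : 0 < N} {i : ℤ} (h0 : 0 ≤ i) (h1 : i + 1 ≤ N) :
    (Li 0 (i+1), Li 0 i) ∈ SideEdges (GG N hN) (Li 0 0) (Li 0 N) :=
  Finset.mem_filter.2 ⟨bd_side0 h0 h1, seg0 hN (by omega) h1, seg0 hN h0 (by omega)⟩

theorem not_coll {N : ℤ} (hN : 0 < N) :
    ¬ Collinear ℝ ({Li 0 0, Li N 0, Li 0 N} : Set Pt) := by
  intro h
  rw [collinear_iff_of_mem (p₀ := Li 0 0) (by simp)] at h
  obtain ⟨v, hv⟩ := h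
  obtain ⟨r, hr⟩ := hv (Li N 0) (by simp)
  obtain ⟨r', hr'⟩ := hv (Li 0 N) (by simp)
  rw [Lp_surj v] at hr hr'
  simp only [Li, vadd_eq_add, Lp_smul, Lp_add, Lp_inj] at hr hr'
  have hN' : (0:ℝ) < N := by exact_mod_cast hN
  obtain ⟨a, b⟩ := hr
  obtain ⟨c, d⟩ := hr'
  push_cast at a b c d
  rw [add_zero] at a b c d
  have r0 : r ≠ 0 := by rintro rfl; simp at a; exact hN.ne' a
  have r0' : r' ≠ 0 := by rintro rfl; simp at d; exact hN.ne' d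
  have t0 : ctL v = 0 := by
    rcases mul_eq_zero.1 b.symm with h | h
    · exact absurd h r0
    · exact h
  rw [t0] at d
  simp at d
  exact hN.ne' d

/-! ### Hives and concave functions -/

def aff (f : ℤ × ℤ → ℝ) (q : (ℤ × ℤ) × Bool) (s t : ℝ) : ℝ :=
  if q.2 then affU f q.1.1 q.1.2 s t else affD f q.1.1 q.1.2 s t

theorem aff_lin (f : ℤ × ℤ → ℝ) (q : (ℤ × ℤ) × Bool) :
    ∃ A B c : ℝ, ∀ s t, aff f q s t = c + A * s + B * t := by
  obtain ⟨⟨i, j⟩, b⟩ := q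
  cases b
  · refine ⟨f (i+1, j+1) - f (i, j+1), f (i+1, j+1) - f (i+1, j), f (i+1, j+1)
      - (i + 1) * (f (i+1, j+1) - f (i, j+1)) - (j + 1) * (f (i+1, j+1) - f (i+1, j)), ?_⟩
    intro s t
    simp only [aff, affD, Bool.false_eq_true, if_false]
    ring
  · refine ⟨f (i+1, j) - f (i, j), f (i, j+1) - f (i, j), f (i, j) - i * (f (i+1, j) - f (i, j))
      - j * (f (i, j+1) - f (i, j)), ?_⟩
    intro s t
    simp only [aff, affU, if_true]
    ring

def TI (N : ℤ) : Finset ((ℤ × ℤ) × Bool) :=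
  ((box N).filter fun p => p.1 + p.2 + 1 ≤ N).image (fun p => (p, true)) ∪
  ((box N).filter fun p => p.1 + p.2 + 2 ≤ N).image (fun p => (p, false))

theorem mem_TI_U {N i j : ℤ} : ((i, j), true) ∈ TI N ↔ 0 ≤ i ∧ 0 ≤ j ∧ i + j + 1 ≤ N := by
  simp [TI, box]; omega

theorem mem_TI_D {N i j : ℤ} : ((i, j), false) ∈ TI N ↔ 0 ≤ i ∧ 0 ≤ j ∧ i + j + 2 ≤ N := by
  simp [TI, box]; omega

theorem hive_aff {N : ℤ} {f : ℤ × ℤ → ℝ} (hf : Hive N f) {q} (hq : q ∈ TI N) (s t : ℤ)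
    (h1 : 0 ≤ s) (h2 : 0 ≤ t) (h3 : s + t ≤ N) : f (s, t) ≤ aff f q s t := by
  obtain ⟨⟨i, j⟩, b⟩ := q
  cases b
  · obtain ⟨a1, a2, a3⟩ := mem_TI_D.1 hq
    simpa [aff] using hf.dn i j s t a1 a2 a3 h1 h2 h3
  · obtain ⟨a1, a2, a3⟩ := mem_TI_U.1 hq
    simpa [aff] using hf.up i j s t a1 a2 a3 h1 h2 h3

theorem exists_Fext {N : ℤ} (hN : 0 < N) {f : ℤ × ℤ → ℝ} (hf : Hive N f) :
    ∃ F : Pt → ℝ, ConcaveOn ℝ (GG N hN).region F ∧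
      (∀ T ∈ (GG N hN).tris, AffineOn F T.region) ∧
      (∀ s t : ℤ, 0 ≤ s → 0 ≤ t → s + t ≤ N → F (Li s t) = f (s, t)) := by
  have ne : (TI N).Nonempty := ⟨((0, 0), true), mem_TI_U.2 (by omega)⟩
  set F : Pt → ℝ := fun P => (TI N).inf' ne (fun q => aff f q (csL P) (ctL P)) with hF
  have F_le : ∀ q ∈ TI N, ∀ s t, F (Lp s t) ≤ aff f q s t := by
    intro q hq s t
    have := Finset.inf'_le (fun q => aff f q (csL (Lp s t)) (ctL (Lp s t))) hq
    simpa only [hF, csL_Lp, ctL_Lp] using this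
  have F_ex : ∀ P, ∃ q ∈ TI N, F P = aff f q (csL P) (ctL P) := fun P =>
    Finset.exists_mem_eq_inf' ne _
  have le_F : ∀ s t b, (∀ q ∈ TI N, b ≤ aff f q s t) → b ≤ F (Lp s t) := by
    intro s t b h
    apply Finset.le_inf'
    simpa only [csL_Lp, ctL_Lp] using h
  have F_U : ∀ i j : ℤ, 0 ≤ i → 0 ≤ j → i + j + 1 ≤ N → ∀ s t : ℝ, Lp s t ∈ (mkU i j).region →
      F (Lp s t) = affU f i j s t := by
    intro i j h1 h2 h3 s t hst
    rw [mkU_region] at hst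
    obtain ⟨a1, a2, a3⟩ := hst
    apply le_antisymm
    · simpa [aff] using F_le ((i, j), true) (mem_TI_U.2 ⟨h1, h2, h3⟩) s t
    · apply le_F
      intro q hq
      have e0 := hive_aff hf hq i j h1 h2 (by omega)
      have e1 := hive_aff hf hq (i+1) j (by omega) h2 (by omega)
      have e2 := hive_aff hf hq i (j+1) h1 (by omega) (by omega)
      obtain ⟨A, B, c, hl⟩ := aff_lin f q
      rw [hl] at e0 e1 e2 ⊢
      push_cast at e1 e2
      have m0 := mul_le_mul_of_nonneg_left e0 (show 0 ≤ 1 - (s-i) - (t-j) by linarith)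
      have m1 := mul_le_mul_of_nonneg_left e1 (show 0 ≤ s - i by linarith)
      have m2 := mul_le_mul_of_nonneg_left e2 (show 0 ≤ t - j by linarith)
      unfold affU
      calc _ = (1 - (s-i) - (t-j)) * f (i, j) + ((s-i) * f (i+1, j) + (t-j) * f (i, j+1)) := by ring
        _ ≤ _ := add_le_add m0 (add_le_add m1 m2)
        _ = _ := by ring
  have F_D : ∀ i j : ℤ, 0 ≤ i → 0 ≤ j → i + j + 2 ≤ N → ∀ s t : ℝ, Lp s t ∈ (mkD i j).region →
      F (Lp s t) = affD f i j s t := by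
    intro i j h1 h2 h3 s t hst
    rw [mkD_region] at hst
    obtain ⟨a1, a2, a3⟩ := hst
    apply le_antisymm
    · simpa [aff] using F_le ((i, j), false) (mem_TI_D.2 ⟨h1, h2, h3⟩) s t
    · apply le_F
      intro q hq
      have e0 := hive_aff hf hq (i+1) (j+1) (by omega) (by omega) (by omega)
      have e1 := hive_aff hf hq (i+1) j (by omega) h2 (by omega)
      have e2 := hive_aff hf hq i (j+1) h1 (by omega) (by omega)
      obtain ⟨A, B, c, hl⟩ := aff_lin f q
      rw [hl] at e0 e1 e2 ⊢
      push_cast at e0 e1 e2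
      have m0 := mul_le_mul_of_nonneg_left e0 (show 0 ≤ s + t - i - j - 1 by linarith)
      have m1 := mul_le_mul_of_nonneg_left e1 (show 0 ≤ j + 1 - t by linarith)
      have m2 := mul_le_mul_of_nonneg_left e2 (show 0 ≤ i + 1 - s by linarith)
      unfold affD
      calc _ = (s + t - i - j - 1) * f (i+1, j+1) +
            ((j + 1 - t) * f (i+1, j) + (i + 1 - s) * f (i, j+1)) := by ring
        _ ≤ _ := add_le_add m0 (add_le_add m1 m2)
        _ = _ := by ring
  refine ⟨F, ⟨(GG N hN).convex, ?_⟩, ?_, ?_⟩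
  · intro P _ Q _ a b ha hb hab
    obtain ⟨q, hq, he⟩ := F_ex (a • P + b • Q)
    rw [he]
    have hP := F_le q hq (csL P) (ctL P)
    have hQ := F_le q hq (csL Q) (ctL Q)
    rw [← Lp_surj] at hP hQ
    obtain ⟨A, B, c, hl⟩ := aff_lin f q
    rw [hl] at hP hQ ⊢
    simp only [map_add, map_smul, smul_eq_mul]
    have m1 := mul_le_mul_of_nonneg_left hP ha
    have m2 := mul_le_mul_of_nonneg_left hQ hb
    calc _ ≤ _ := add_le_add m1 m2
      _ = (a + b) * c + A * (a * csL P + b * csL Q) + B * (a * ctL P + b * ctL Q) := by ring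
      _ = _ := by rw [hab, one_mul]
  · intro T hT
    have mk : ∀ q, (∀ s t : ℝ, Lp s t ∈ T.region → F (Lp s t) = aff f q s t) →
        AffineOn F T.region := by
      intro q hq
      obtain ⟨A, B, c, hl⟩ := aff_lin f q
      refine ⟨AffineMap.const ℝ Pt c + (A • csL + B • ctL).toAffineMap, ?_⟩
      intro P hP
      have := hq (csL P) (ctL P) (by rw [← Lp_surj]; exact hP)
      rw [← Lp_surj, hl] at this
      rw [this]
      simp
      ring
    rcases mem_tr.1 hT with ⟨i, j, h1, h2, h3, rfl⟩ | ⟨i, j, h1, h2, h3, rfl⟩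
    · exact mk ((i, j), true) (fun s t h => by simpa [aff] using F_U i j h1 h2 h3 s t h)
    · exact mk ((i, j), false) (fun s t h => by simpa [aff] using F_D i j h1 h2 h3 s t h)
  · intro s t h1 h2 h3
    have up : ∀ i j : ℤ, 0 ≤ i → 0 ≤ j → i + j + 1 ≤ N → F (Li i j) = f (i, j) ∧
        F (Li (i+1) j) = f (i+1, j) ∧ F (Li i (j+1)) = f (i, j+1) := by
      intro i j a b c
      unfold Li
      refine ⟨?_, ?_, ?_⟩
      all_goals
        rw [F_U i j a b c _ _ ((mkU_region _ _ _ _).2 (by push_cast; refine ⟨?_, ?_, ?_⟩ <;> linarith))]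
        unfold affU
        push_cast
        ring
    by_cases hs : s = 0
    · by_cases ht : t = 0
      · exact (up s t h1 h2 (by omega)).1
      · have := (up s (t-1) h1 (by omega) (by omega)).2.2
        rwa [sub_add_cancel] at this
    · have := (up (s-1) t (by omega) h2 (by omega)).2.1
      rwa [sub_add_cancel] at this

theorem affine_coord (φ : Pt →ᵃ[ℝ] ℝ) : ∃ A B c : ℝ, ∀ s t, φ (Lp s t) = c + A * s + B * t := by
  refine ⟨φ.linear (Lp 1 0), φ.linear (Lp 0 1), φ 0, ?_⟩
  intro s t
  have h := congrFun (AffineMap.decomp φ) (Lp s t)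
  have e : Lp s t = s • Lp 1 0 + t • Lp 0 1 := by
    rw [Lp_smul, Lp_smul, Lp_add, Lp_inj]; constructor <;> ring
  rw [h]
  simp only [Pi.add_apply]
  rw [e, map_add, map_smul, map_smul]
  simp only [smul_eq_mul]
  ring

/-- If a concave function equals an affine one near a point, it lies below it. -/
theorem concave_below {S : Set Pt} {G : Pt → ℝ} (hG : ConcaveOn ℝ S G) {P Q : Pt} (hP : P ∈ S)
    (hQ : Q ∈ S) (φ : Pt →ᵃ[ℝ] ℝ) (ε : ℝ) (e0 : 0 < ε) (e1 : ε ≤ 1) (h1 : G Q = φ Q)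
    (h2 : G ((1 - ε) • Q + ε • P) = φ ((1 - ε) • Q + ε • P)) : G P ≤ φ P := by
  have h := hG.2 hQ hP (sub_nonneg.2 e1) e0.le (by ring)
  rw [h2, h1, Convex.combo_affine_apply (by ring)] at h
  simp only [smul_eq_mul] at h
  have : ε * G P ≤ ε * φ P := by linarith
  exact le_of_mul_le_mul_left this e0

theorem hive_of_concave {N : ℤ} (hN : 0 < N) {G : Pt → ℝ} (hG : ConcaveOn ℝ (GG N hN).region G)
    (hA : ∀ T ∈ (GG N hN).tris, AffineOn G T.region) (d : ℝ) :
    Hive N (fun v => G (Li v.1 v.2) + d) := by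
  have hN' : (1:ℝ) ≤ N := by exact_mod_cast hN
  have e0 : (0:ℝ) < 1 / (3 * N) := by positivity
  have e1 : (1:ℝ) / (3 * N) ≤ 1 := by rw [div_le_one (by positivity)]; linarith
  have e2 : (1:ℝ) / (3 * N) * (3 * N) = 1 := by field_simp
  constructor
  · intro i j s t h1 h2 h3 h4 h5 h6
    obtain ⟨φ, hφ⟩ := hA (mkU i j) (tr_U h1 h2 h3)
    obtain ⟨A, B, c, hl⟩ := affine_coord φ
    have h1' : (0:ℝ) ≤ i := by exact_mod_cast h1
    have h2' : (0:ℝ) ≤ j := by exact_mod_cast h2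
    have h3' : (i:ℝ) + j + 1 ≤ N := by exact_mod_cast h3
    have h4' : (0:ℝ) ≤ s := by exact_mod_cast h4
    have h5' : (0:ℝ) ≤ t := by exact_mod_cast h5
    have h6' : (s:ℝ) + t ≤ N := by exact_mod_cast h6
    have rq := (mkU_region i j (i + 1/3) (j + 1/3)).2
      ⟨by linarith, by linarith, by linarith⟩
    have key : G (Li s t) ≤ φ (Li s t) := by
      refine concave_below hG ((tr_region_mem hN _ _).2 ⟨h4', h5', h6'⟩)
        ((tr_region_mem hN (i + 1/3) (j + 1/3)).2 ⟨by linarith, by linarith, by linarith⟩)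
        φ (1 / (3 * N)) e0 e1 (hφ _ rq) (hφ _ ?_)
      rw [Lp_smul, Lp_smul, Lp_add, mkU_region]
      generalize (1:ℝ) / (3 * N) = ε at *
      refine ⟨?_, ?_, ?_⟩ <;> nlinarith
    have k0 : G (Li i j) = φ (Li i j) := hφ _ ((mkU_region _ _ _ _).2 (by simp))
    have k1 : G (Li (i+1) j) = φ (Li (i+1) j) := hφ _ ((mkU_region _ _ _ _).2 (by push_cast; refine ⟨?_, ?_, ?_⟩ <;> linarith))
    have k2 : G (Li i (j+1)) = φ (Li i (j+1)) := hφ _ ((mkU_region _ _ _ _).2 (by push_cast; refine ⟨?_, ?_, ?_⟩ <;> linarith))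
    simp only [affU, k0, k1, k2]
    refine (add_le_add_left key d).trans (le_of_eq ?_)
    unfold Li
    rw [hl, hl, hl, hl]
    push_cast
    ring
  · intro i j s t h1 h2 h3 h4 h5 h6
    obtain ⟨φ, hφ⟩ := hA (mkD i j) (tr_D h1 h2 h3)
    obtain ⟨A, B, c, hl⟩ := affine_coord φ
    have h1' : (0:ℝ) ≤ i := by exact_mod_cast h1
    have h2' : (0:ℝ) ≤ j := by exact_mod_cast h2
    have h3' : (i:ℝ) + j + 2 ≤ N := by exact_mod_cast h3
    have h4' : (0:ℝ) ≤ s := by exact_mod_cast h4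
    have h5' : (0:ℝ) ≤ t := by exact_mod_cast h5
    have h6' : (s:ℝ) + t ≤ N := by exact_mod_cast h6
    have rq := (mkD_region i j (i + 2/3) (j + 2/3)).2
      ⟨by linarith, by linarith, by linarith⟩
    have key : G (Li s t) ≤ φ (Li s t) := by
      refine concave_below hG ((tr_region_mem hN _ _).2 ⟨h4', h5', h6'⟩)
        ((tr_region_mem hN (i + 2/3) (j + 2/3)).2 ⟨by linarith, by linarith, by linarith⟩)
        φ (1 / (3 * N)) e0 e1 (hφ _ rq) (hφ _ ?_)
      rw [Lp_smul, Lp_smul, Lp_add, mkD_region]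
      generalize (1:ℝ) / (3 * N) = ε at *
      refine ⟨?_, ?_, ?_⟩ <;> nlinarith
    have k0 : G (Li (i+1) (j+1)) = φ (Li (i+1) (j+1)) :=
      hφ _ ((mkD_region _ _ _ _).2 (by push_cast; refine ⟨?_, ?_, ?_⟩ <;> linarith))
    have k1 : G (Li (i+1) j) = φ (Li (i+1) j) :=
      hφ _ ((mkD_region _ _ _ _).2 (by push_cast; refine ⟨?_, ?_, ?_⟩ <;> linarith))
    have k2 : G (Li i (j+1)) = φ (Li i (j+1)) :=
      hφ _ ((mkD_region _ _ _ _).2 (by push_cast; refine ⟨?_, ?_, ?_⟩ <;> linarith))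
    simp only [affD, k0, k1, k2]
    refine (add_le_add_left key d).trans (le_of_eq ?_)
    unfold Li
    rw [hl, hl, hl, hl]
    push_cast
    ring

theorem const_of_edges {N : ℤ} {u : ℤ → ℤ → ℝ}
    (hx : ∀ i j : ℤ, 0 ≤ i → 0 ≤ j → i + j + 1 ≤ N → u (i+1) j = u i j)
    (hy : ∀ i j : ℤ, 0 ≤ i → 0 ≤ j → i + j + 1 ≤ N → u i (j+1) = u i j) :
    ∀ s t : ℤ, 0 ≤ s → 0 ≤ t → s + t ≤ N → u s t = u 0 0 := by
  have a : ∀ s : ℕ, (s:ℤ) ≤ N → u s 0 = u 0 0 := by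
    intro s
    induction s with
    | zero => intro _; rfl
    | succ n ih =>
      intro h
      push_cast at h ⊢
      rw [hx n 0 (by omega) le_rfl (by omega), ih (by omega)]
  have b : ∀ (s : ℤ) (t : ℕ), 0 ≤ s → s + t ≤ N → u s t = u s 0 := by
    intro s t h0
    induction t with
    | zero => intro _; rfl
    | succ n ih =>
      intro h
      push_cast at h ⊢
      rw [hy s n h0 (by omega) (by omega), ih (by omega)]
  intro s t h1 h2 h3
  have e1 := b s t.toNat h1 (by omega)
  have e2 := a s.toNat (by omega)
  rw [Int.toNat_of_nonneg h2] at e1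
  rw [Int.toNat_of_nonneg h1] at e2
  rw [e1, e2]

theorem line_const {N : ℤ} {u : ℤ → ℝ}
    (hx : ∀ i : ℤ, 0 ≤ i → i + 1 ≤ N → u (i+1) = u i) :
    ∀ s : ℤ, 0 ≤ s → s ≤ N → u s = u 0 := by
  have a : ∀ s : ℕ, (s:ℤ) ≤ N → u s = u 0 := by
    intro s
    induction s with
    | zero => intro _; rfl
    | succ n ih =>
      intro h
      push_cast at h ⊢
      rw [hx n (by omega) (by omega), ih (by omega)]
  intro s h1 h2
  have e2 := a s.toNat (by omega)
  rwa [Int.toNat_of_nonneg h1] at e2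

/-- A function inducing the prescribed differences on two sides agrees there after a shift. -/
theorem side_agree {N : ℤ} {g : ℤ × ℤ → ℝ} {G : Pt → ℝ}
    (hx : ∀ i : ℤ, 0 ≤ i → i + 1 ≤ N → G (Li (i+1) 0) - G (Li i 0) = g (i+1, 0) - g (i, 0))
    (hy : ∀ i : ℤ, 0 ≤ i → i + 1 ≤ N → G (Li 0 i) - G (Li 0 (i+1)) = g (0, i) - g (0, i+1)) :
    ∀ s t : ℤ, 0 ≤ s → 0 ≤ t → s + t ≤ N → s = 0 ∨ t = 0 →
      G (Li s t) + (g (0, 0) - G (Li 0 0)) = g (s, t) := by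
  intro s t h1 h2 h3 h
  rcases h with rfl | rfl
  · have := line_const (N := N) (u := fun i => G (Li 0 i) - g (0, i))
      (fun i h0 h1 => by have := hy i h0 h1; linarith) t h2 (by omega)
    linarith
  · have := line_const (N := N) (u := fun i => G (Li i 0) - g (i, 0))
      (fun i h0 h1 => by have := hx i h0 h1; linarith) s h1 (by omega)
    linarith

theorem main_k (k : ℕ) (hk : 0 < k) :
      ∃ (G : ConvexGrid) (a b c : Pt) (h₀ : Ed → ℤ) (h : Ed → ℝ),
        ¬ Collinear ℝ ({a, b, c} : Set Pt) ∧
        G.region = convexHull ℝ ({a, b, c} : Set Pt) ∧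
        G.boundary.card ≤ 3 * (9 * k) ∧
        IsVertexOf G (CC G (↑(SideEdges G a b ∪ SideEdges G a c)) fun e => (h₀ e : ℝ)) h ∧
        (∃ e ∈ G.edges, ∃ q : ℚ, h e = (q : ℝ) ∧ q.den = k) ∧
        ∀ e ∈ G.boundary, ∃ z : ℤ, h e = (z : ℝ) := by
  obtain ⟨f, hf, hv⟩ := exists_vertex hk
  have hN : (0:ℤ) < 9 * (k:ℤ) := by omega
  obtain ⟨F, hF1, hF2, hF3⟩ := exists_Fext hN hf.hive
  have hb : ∀ e ∈ (GG (9 * (k:ℤ)) hN).boundary, ∃ z : ℤ, F e.2 - F e.1 = (z : ℝ) := by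
    intro e he
    rcases bd_cases he with ⟨i, h0, h1, rfl⟩ | ⟨i, j, h0, h1, h2, rfl⟩ | ⟨i, h0, h1, rfl⟩
    · obtain ⟨z, hz⟩ := gf_side1 hk i h0 h1
      refine ⟨z, ?_⟩
      simp only
      rw [hF3 _ _ (by omega) le_rfl (by omega), hF3 _ _ h0 le_rfl (by omega),
        hf.side _ _ (Or.inr rfl), hf.side _ _ (Or.inr rfl), hz]
    · obtain ⟨z, hz⟩ := inS_side2 hk hf i j h0 h1 h2
      refine ⟨z, ?_⟩
      simp only
      rw [hF3 _ _ h0 (by omega) (by omega), hF3 _ _ (by omega) h1 (by omega), hz]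
    · obtain ⟨z, hz⟩ := gf_side0 hk i h0 h1
      refine ⟨z, ?_⟩
      simp only
      rw [hF3 _ _ le_rfl h0 (by omega), hF3 _ _ le_rfl (by omega) (by omega),
        hf.side _ _ (Or.inl rfl), hf.side _ _ (Or.inl rfl), hz]
  have hs : ∀ e ∈ (GG (9 * (k:ℤ)) hN).boundary,
      ((⌊F e.2 - F e.1⌋ : ℤ) : ℝ) = F e.2 - F e.1 := by
    intro e he
    obtain ⟨z, hz⟩ := hb e he
    rw [hz, Int.floor_intCast]
  refine ⟨GG (9 * (k:ℤ)) hN, Li 0 0, Li (9 * (k:ℤ)) 0, Li 0 (9 * (k:ℤ)),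
    fun e => ⌊F e.2 - F e.1⌋, fun e => F e.2 - F e.1, not_coll hN, tr_region hN, ?_, ?_, ?_, hb⟩
  · have := bd_card (9 * k) (by push_cast; exact hN)
    convert this using 4
    push_cast
    rfl
  · constructor
    · refine ⟨⟨?_, F, hF1, hF2, fun e _ => rfl⟩, ?_⟩
      · intro T _
        simp only [GridTriangle.e0, GridTriangle.e1, GridTriangle.e2]
        ring
      · intro e he
        rw [Finset.mem_coe, Finset.mem_union] at he
        refine (hs e ?_).symm
        rcases he with he | he <;> exact (Finset.mem_filter.1 he).1
    · have agree : ∀ (h1 : Ed → ℝ) (G1 : Pt → ℝ),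
          (∀ e ∈ (GG (9 * (k:ℤ)) hN).edges, h1 e = G1 e.2 - G1 e.1) →
          (∀ e ∈ (↑(SideEdges (GG (9 * (k:ℤ)) hN) (Li 0 0) (Li (9 * (k:ℤ)) 0) ∪
            SideEdges (GG (9 * (k:ℤ)) hN) (Li 0 0) (Li 0 (9 * (k:ℤ)))) : Set Ed),
              h1 e = ((⌊F e.2 - F e.1⌋ : ℤ) : ℝ)) →
          ∀ s t : ℤ, 0 ≤ s → 0 ≤ t → s + t ≤ 9 * k → s = 0 ∨ t = 0 →
            G1 (Li s t) + (gf k (0, 0) - G1 (Li 0 0)) = gf k (s, t) := by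
        intro h1 G1 he hS
        apply side_agree
        · intro i h0 h1
          have m := side1_mem (hN := hN) h0 h1
          have mb := (Finset.mem_filter.1 m).1
          have r := hS _ (by rw [Finset.mem_coe, Finset.mem_union]; exact Or.inl m)
          rw [he _ (Finset.mem_filter.1 mb).1, hs _ mb] at r
          simp only at r
          rw [r, hF3 _ _ (by omega) le_rfl (by omega), hF3 _ _ h0 le_rfl (by omega),
            hf.side _ _ (Or.inr rfl), hf.side _ _ (Or.inr rfl)]
        · intro i h0 h1
          have m := side0_mem (hN := hN) h0 h1
          have mb := (Finset.mem_filter.1 m).1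
          have r := hS _ (by rw [Finset.mem_coe, Finset.mem_union]; exact Or.inr m)
          rw [he _ (Finset.mem_filter.1 mb).1, hs _ mb] at r
          simp only at r
          rw [r, hF3 _ _ le_rfl h0 (by omega), hF3 _ _ le_rfl (by omega) (by omega),
            hf.side _ _ (Or.inl rfl), hf.side _ _ (Or.inl rfl)]
      rintro h1 ⟨⟨_, G1, c1, a1, g1⟩, s1⟩ h2 ⟨⟨_, G2, c2, a2, g2⟩, s2⟩ hav
      have A1 := agree h1 G1 g1 s1
      have A2 := agree h2 G2 g2 s2
      have mid : ∀ s t : ℤ, 0 ≤ s → 0 ≤ t → s + t ≤ 9 * (k:ℤ) →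
          f (s, t) = ((G1 (Li s t) + (gf k (0, 0) - G1 (Li 0 0))) +
            (G2 (Li s t) + (gf k (0, 0) - G2 (Li 0 0)))) / 2 := by
        intro s t p1 p2 p3
        have := const_of_edges (N := 9 * (k:ℤ))
          (u := fun s t => f (s, t) - (G1 (Li s t) + G2 (Li s t)) / 2) ?_ ?_ s t p1 p2 p3
        · have h00 := hf.side 0 0 (Or.inl rfl)
          linarith
        · intro i j q1 q2 q3
          have me : (Li i j, Li (i+1) j) ∈ (GG (9 * (k:ℤ)) hN).edges :=
            edges_up.2 ⟨i, j, q1, q2, q3, Or.inl rfl⟩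
          have r := hav _ me
          rw [g1 _ me, g2 _ me] at r
          simp only at r ⊢
          rw [hF3 _ _ (by omega) q2 (by omega), hF3 _ _ q1 q2 (by omega)] at r
          linarith
        · intro i j q1 q2 q3
          have me : (Li i (j+1), Li i j) ∈ (GG (9 * (k:ℤ)) hN).edges :=
            edges_up.2 ⟨i, j, q1, q2, q3, Or.inr (Or.inr rfl)⟩
          have r := hav _ me
          rw [g1 _ me, g2 _ me] at r
          simp only at r ⊢
          rw [hF3 _ _ q1 q2 (by omega), hF3 _ _ q1 (by omega) (by omega)] at r
          linarith
      have fin := hv _ _ (hive_of_concave hN c1 a1 (gf k (0, 0) - G1 (Li 0 0)))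
        (hive_of_concave hN c2 a2 (gf k (0, 0) - G2 (Li 0 0))) A1 A2 mid
      simp only at fin
      intro e me
      rw [g1 _ me, g2 _ me]
      obtain ⟨i, j, q1, q2, q3, r⟩ := edges_up.1 me
      have f0 := fin i j q1 q2 (by omega)
      have f1 := fin (i+1) j (by omega) q2 (by omega)
      have f2 := fin i (j+1) q1 (by omega) (by omega)
      rcases r with rfl | rfl | rfl <;> simp only <;> linarith
  · obtain ⟨i, j, h0, h1, h2, hij⟩ := inS_one hk hf
    refine ⟨(Li i (j+1), Li i j), edges_up.2 ⟨i, j, h0, h1, h2, Or.inr (Or.inr rfl)⟩,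
      ((k:ℚ))⁻¹, ?_, Rat.inv_natCast_den_of_pos hk⟩
    simp only
    rw [hF3 _ _ h0 h1 (by omega), hF3 _ _ h0 (by omega) (by omega), hij]
    push_cast
    rw [one_div]

/-- Theorem 3.  There is an absolute constant C such that for every
k ≥ 1 there are a 3-side grid G of size at most C·k (for a 3-side grid the number of
boundary edges is three times its size) and an integer function h₀ on the edges of two
of the sides of G such that C(G,h₀) has a vertex h with some entry of denominator
exactly k, while h is integer-valued on all boundary edges. -/
theorem stmt3 :
    ∃ Cconst : ℕ, 0 < Cconst ∧ ∀ k : ℕ, 0 < k →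
      ∃ (G : ConvexGrid) (a b c : Pt) (h₀ : Ed → ℤ) (h : Ed → ℝ),
        ¬ Collinear ℝ ({a, b, c} : Set Pt) ∧
        G.region = convexHull ℝ ({a, b, c} : Set Pt) ∧
        G.boundary.card ≤ 3 * (Cconst * k) ∧
        IsVertexOf G (CC G (↑(SideEdges G a b ∪ SideEdges G a c)) fun e => (h₀ e : ℝ)) h ∧
        (∃ e ∈ G.edges, ∃ q : ℚ, h e = (q : ℝ) ∧ q.den = k) ∧
        ∀ e ∈ G.boundary, ∃ z : ℤ, h e = (z : ℝ) :=
  ⟨9, by norm_num, main_k⟩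
end
end

section
/- A cocirculation h in a convex triangular grid G is concave if and only if every little rhombus of G satisfies the rhombus condition: h(e) ≥ h(e') whenever e and e' are the non-adjacent (parallel) edges of a pair of parallel boundary edges of the rhombus and e enters an obtuse vertex of the rhombus. -/
open scoped BigOperators

attribute [local instance] Classical.propDecidable

noncomputable section

/-- The rhombus condition: for every little rhombus (two little triangles T ≠ T'
sharing a common edge e₀, whose two obtuse vertices are the endpoints of e₀), and every
pair of distinct parallel boundary edges e (of T) and e' (of T') of the rhombus with e
entering an obtuse vertex, one has h(e) ≥ h(e'). -/
def RhombusCondition (G : ConvexGrid) (h : Ed → ℝ) : Prop :=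
  ∀ T ∈ G.tris, ∀ T' ∈ G.tris, T ≠ T' →
    ∀ e₀ ∈ T.edgeFinset ∩ T'.edgeFinset,
      ∀ e ∈ T.edgeFinset, ∀ e' ∈ T'.edgeFinset, e ≠ e' →
        e.2 - e.1 = e'.2 - e'.1 → (e.2 = e₀.1 ∨ e.2 = e₀.2) → h e' ≤ h e


/-! ### Lattice coordinates -/

/-- Membership in the upward triangle, lattice coordinates. -/
def InU (m n : ℤ) (a b : ℝ) : Prop := (n:ℝ) ≤ b ∧ b - n ≤ a - m ∧ a ≤ m + 1
/-- Membership in the downward triangle, lattice coordinates. -/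
def InD (m n : ℤ) (a b : ℝ) : Prop := b ≤ n ∧ (m:ℝ) ≤ a ∧ a - m ≤ 1 + (b - n)

/-- Index set of triangles. -/
abbrev Idx : Type := ℤ × ℤ × Bool

/-- Region in lattice coordinates. -/
def InR (I : Finset Idx) (a b : ℝ) : Prop :=
  (∃ m n : ℤ, (m, n, true) ∈ I ∧ InU m n a b) ∨ (∃ m n : ℤ, (m, n, false) ∈ I ∧ InD m n a b)

/-- Convexity in lattice coordinates. -/
def CvxR (I : Finset Idx) : Prop :=
  ∀ a b a' b' ε : ℝ, 0 ≤ ε → ε ≤ 1 → InR I a b → InR I a' b' →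
    InR I (a + ε * (a' - a)) (b + ε * (b' - b))

lemma strictU {I : Finset Idx} {m n : ℤ} {a b : ℝ} (h : InR I a b)
    (h1 : (n:ℝ) < b) (h2 : b - n < a - m) (h3 : a < m + 1) : (m, n, true) ∈ I := by
  rcases h with ⟨m', n', hI, g1, g2, g3⟩ | ⟨m', n', hI, g1, g2, g3⟩
  · have e1 : m < m' + 1 := by exact_mod_cast (by linarith : (m:ℝ) < m' + 1)
    have e2 : n < n' + 1 := by exact_mod_cast (by linarith : (n:ℝ) < n' + 1)
    have e3 : n' < n + 1 := by exact_mod_cast (by linarith : (n':ℝ) < n + 1)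
    have e4 : m' < m + 1 := by exact_mod_cast (by linarith : (m':ℝ) < m + 1)
    have : m = m' := by omega
    have : n = n' := by omega
    subst_vars; exact hI
  · exfalso
    have e1 : m < m' + 1 := by exact_mod_cast (by linarith : (m:ℝ) < m' + 1)
    have e2 : n < n'  := by exact_mod_cast (by linarith : (n:ℝ) < n' )
    have e3 : n' < n + 2 := by exact_mod_cast (by linarith : (n':ℝ) < n + 2)
    have e4 : m' < m + 1 := by exact_mod_cast (by linarith : (m':ℝ) < m + 1)
    have : m = m' := by omega
    have : n' = n + 1 := by omega
    subst_vars
    push_cast at *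
    linarith

lemma strictD {I : Finset Idx} {m n : ℤ} {a b : ℝ} (h : InR I a b)
    (h1 : b < n) (h2 : (m:ℝ) < a) (h3 : a - m < 1 + (b - n)) : (m, n, false) ∈ I := by
  rcases h with ⟨m', n', hI, g1, g2, g3⟩ | ⟨m', n', hI, g1, g2, g3⟩
  · exfalso
    have e1 : m < m' + 1 := by exact_mod_cast (by linarith : (m:ℝ) < m' + 1)
    have e2 : n' < n := by exact_mod_cast (by linarith : (n':ℝ) < n)
    have e3 : n < n' + 2 := by exact_mod_cast (by linarith : (n:ℝ) < n' + 2)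
    have e4 : m' < m + 1 := by exact_mod_cast (by linarith : (m':ℝ) < m + 1)
    have : m = m' := by omega
    have : n = n' + 1 := by omega
    subst_vars
    push_cast at *
    linarith
  · have e1 : m < m' + 1 := by exact_mod_cast (by linarith : (m:ℝ) < m' + 1)
    have e2 : n < n' + 1 := by exact_mod_cast (by linarith : (n:ℝ) < n' + 1)
    have e3 : n' < n + 1 := by exact_mod_cast (by linarith : (n':ℝ) < n + 1)
    have e4 : m' < m + 1 := by exact_mod_cast (by linarith : (m':ℝ) < m + 1)
    have : m = m' := by omega
    have : n = n' := by omega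
    subst_vars; exact hI

lemma eps_one (l l' : ℝ) (h : 0 < l) : ∃ δ : ℝ, 0 < δ ∧ ∀ ε, 0 < ε → ε < δ →
    0 < l + ε * (l' - l) := by
  refine ⟨l / (|l' - l| + 1), by positivity, fun ε h0 h1 => ?_⟩
  have hp : 0 < |l' - l| + 1 := by positivity
  rw [lt_div_iff₀ hp] at h1
  have := neg_abs_le (l' - l)
  nlinarith

lemma eps_two (l l' k k' : ℝ) (h : 0 < l) (hk : 0 < k) : ∃ ε : ℝ, 0 < ε ∧ ε ≤ 1 ∧
    0 < l + ε * (l' - l) ∧ 0 < k + ε * (k' - k) := by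
  obtain ⟨d, hd, h1⟩ := eps_one l l' h
  obtain ⟨d', hd', h2⟩ := eps_one k k' hk
  have : 0 < min (min d d') 1 := by positivity
  have a1 := min_le_left (min d d') 1
  have a2 := min_le_right (min d d') 1
  have a3 := min_le_left d d'
  have a4 := min_le_right d d'
  exact ⟨min (min d d') 1 / 2, by linarith, by linarith, h1 _ (by linarith) (by linarith),
    h2 _ (by linarith) (by linarith)⟩

section nbr
variable {I : Finset Idx} (hI : CvxR I) {m n : ℤ} {a b : ℝ}
include hI

lemma nbrU0 (h : (m, n, true) ∈ I) (hw : InR I a b) (hb : b < n) : (m, n, false) ∈ I := by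
  obtain ⟨ε, e0, e1, e2, e3⟩ := eps_two (1/2) (a - m) (1/2) (1 + (b - n) - (a - m))
    (by norm_num) (by norm_num)
  have hz : InR I (m + 1/2) n := Or.inl ⟨m, n, h, by constructor <;> [skip; constructor] <;> linarith⟩
  have := mul_pos e0 (sub_pos.2 hb)
  refine strictD (hI _ _ _ _ ε e0.le e1 hz hw) ?_ ?_ ?_ <;> nlinarith

lemma nbrD0 (h : (m, n, false) ∈ I) (hw : InR I a b) (hb : n < b) : (m, n, true) ∈ I := by
  obtain ⟨ε, e0, e1, e2, e3⟩ := eps_two (1/2) (1 - (a - m)) (1/2) ((a - m) - (b - n))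
    (by norm_num) (by norm_num)
  have hz : InR I (m + 1/2) n := Or.inr ⟨m, n, h, by constructor <;> [skip; constructor] <;> linarith⟩
  have := mul_pos e0 (sub_pos.2 hb)
  refine strictU (hI _ _ _ _ ε e0.le e1 hz hw) ?_ ?_ ?_ <;> nlinarith

lemma nbrU1 (h : (m, n, true) ∈ I) (hw : InR I a b) (hb : (m:ℝ) + 1 < a) :
    (m+1, n+1, false) ∈ I := by
  obtain ⟨ε, e0, e1, e2, e3⟩ := eps_two (1/2) (n + 1 - b) (1/2) (1 + (b - (n+1)) - (a - (m+1)))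
    (by norm_num) (by norm_num)
  have hz : InR I (m + 1) (n+1/2) :=
    Or.inl ⟨m, n, h, by constructor <;> [skip; constructor] <;> linarith⟩
  have := mul_pos e0 (sub_pos.2 hb)
  refine strictD (hI _ _ _ _ ε e0.le e1 hz hw) ?_ ?_ ?_ <;> push_cast <;> nlinarith

lemma nbrD1 (h : (m+1, n+1, false) ∈ I) (hw : InR I a b) (hb : a < m + 1) :
    (m, n, true) ∈ I := by
  obtain ⟨ε, e0, e1, e2, e3⟩ := eps_two (1/2) (b - n) (1/2) ((a - m) - (b - n))
    (by norm_num) (by norm_num)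
  have hz : InR I (m + 1) (n+1/2) :=
    Or.inr ⟨m+1, n+1, h, by constructor <;> [skip; constructor] <;> push_cast <;> linarith⟩
  have := mul_pos e0 (sub_pos.2 hb)
  refine strictU (hI _ _ _ _ ε e0.le e1 hz hw) ?_ ?_ ?_ <;> nlinarith

lemma nbrU2 (h : (m, n, true) ∈ I) (hw : InR I a b) (hb : a - m < b - n) :
    (m, n+1, false) ∈ I := by
  obtain ⟨ε, e0, e1, e2, e3⟩ := eps_two (1/2) (n + 1 - b) (1/2) (a - m)
    (by norm_num) (by norm_num)
  have hz : InR I (m + 1/2) (n+1/2) :=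
    Or.inl ⟨m, n, h, by constructor <;> [skip; constructor] <;> linarith⟩
  have := mul_pos e0 (sub_pos.2 hb)
  refine strictD (hI _ _ _ _ ε e0.le e1 hz hw) ?_ ?_ ?_ <;> push_cast <;> nlinarith

lemma nbrD2 (h : (m, n+1, false) ∈ I) (hw : InR I a b) (hb : b - n < a - m) :
    (m, n, true) ∈ I := by
  obtain ⟨ε, e0, e1, e2, e3⟩ := eps_two (1/2) (b - n) (1/2) (1 - (a - m))
    (by norm_num) (by norm_num)
  have hz : InR I (m + 1/2) (n+1/2) :=
    Or.inr ⟨m, n+1, h, by constructor <;> [skip; constructor] <;> push_cast <;> linarith⟩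
  have := mul_pos e0 (sub_pos.2 hb)
  refine strictU (hI _ _ _ _ ε e0.le e1 hz hw) ?_ ?_ ?_ <;> nlinarith

end nbr

/-! ### Potential -/

lemma exists_prim (f : ℤ → ℝ) : ∃ F : ℤ → ℝ, ∀ m, F (m+1) - F m = f m := by
  refine ⟨fun m => ∑ i ∈ Finset.Ico 0 m, f i - ∑ i ∈ Finset.Ico m 0, f i, fun m => ?_⟩
  rcases le_or_gt 0 m with hm | hm
  · have e : Finset.Ico 0 (m+1) = insert m (Finset.Ico 0 m) := by ext; simp; omega
    have e1 : Finset.Ico m 0 = ∅ := by ext; simp; omega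
    have e2 : Finset.Ico (m+1) 0 = ∅ := by ext; simp; omega
    simp only [e, e1, e2]
    rw [Finset.sum_insert (by simp)]; simp
  · have e : Finset.Ico m 0 = insert m (Finset.Ico (m+1) 0) := by ext; simp; omega
    have e1 : Finset.Ico 0 m = ∅ := by ext; simp; omega
    have e2 : Finset.Ico 0 (m+1) = ∅ := by ext; simp; omega
    simp only [e, e1, e2]
    rw [Finset.sum_insert (by simp)]; simp

/-- Triangle number `k` in the strip `n`. -/
def strip (n k : ℤ) : Idx := if k % 2 = 0 then (k / 2, n + 1, false) else (k / 2, n, true)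

lemma strip_even (n m : ℤ) : strip n (2*m) = (m, n+1, false) := by simp [strip]
lemma strip_odd (n m : ℤ) : strip n (2*m+1) = (m, n, true) := by
  have : (2*m+1)/2 = m := by omega
  simp [strip, this]

lemma strip_step {I : Finset Idx} (hI : CvxR I) {n k k' : ℤ} (hk : strip n k ∈ I)
    (hk' : strip n k' ∈ I) (hlt : k < k') : strip n (k+1) ∈ I := by
  -- a far vertex
  have far : ∃ a b : ℝ, InR I a b ∧ (b = n ∨ b = n + 1) ∧
      (k' : ℝ) + 1 ≤ 2 * a - (b - n) := by
    rcases Int.even_or_odd' k' with ⟨m, rfl | rfl⟩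
    · rw [strip_even] at hk'
      refine ⟨m+1, n+1, Or.inr ⟨m, n+1, hk', ?_⟩, Or.inr rfl, ?_⟩
      · constructor <;> [skip; constructor] <;> push_cast <;> linarith
      · push_cast; linarith
    · rw [strip_odd] at hk'
      refine ⟨m+1, n, Or.inl ⟨m, n, hk', ?_⟩, Or.inl rfl, ?_⟩
      · constructor <;> [skip; constructor] <;> push_cast <;> linarith
      · push_cast; linarith
  obtain ⟨a, b, hw, hb, hab⟩ := far
  have hlt' : (k:ℝ) + 1 ≤ k' := by exact_mod_cast hlt
  rcases Int.even_or_odd' k with ⟨m, rfl | rfl⟩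
  · rw [strip_even] at hk
    rw [strip_odd]
    refine nbrD2 hI hk hw ?_
    push_cast at *
    rcases hb with rfl | rfl <;> linarith
  · rw [strip_odd] at hk
    have : 2*m+1+1 = 2*(m+1) := by ring
    rw [this, strip_even]
    refine nbrU1 hI hk hw ?_
    push_cast at *
    rcases hb with rfl | rfl <;> linarith

lemma strip_const {I : Finset Idx} (hI : CvxR I) {n : ℤ} (F : ℤ → ℝ)
    (hF : ∀ k, strip n k ∈ I → F k = F (k+1)) :
    ∃ c, ∀ k, strip n k ∈ I → F k = c ∧ F (k+1) = c := by
  have key : ∀ d : ℕ, ∀ k, strip n k ∈ I → strip n (k+d) ∈ I → F k = F (k+d) := by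
    intro d
    induction d with
    | zero => intro k _ _; simp
    | succ d ih =>
      intro k hk hk'
      have h1 := strip_step hI hk hk' (by push_cast; omega)
      have e : k + ((d+1 : ℕ):ℤ) = k + 1 + d := by push_cast; ring
      rw [e] at hk' ⊢
      rw [hF k hk]
      exact ih _ h1 hk'
  by_cases hex : ∃ k, strip n k ∈ I
  · obtain ⟨k, hk⟩ := hex
    refine ⟨F k, fun k' hk' => ?_⟩
    rw [← hF k' hk', and_self]
    rcases le_total k k' with h | h
    · obtain ⟨d, rfl⟩ := Int.le.dest h
      exact (key d k hk hk').symm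
    · obtain ⟨d, rfl⟩ := Int.le.dest h
      exact (key d k' hk' hk)
  · exact ⟨0, fun k hk => absurd ⟨k, hk⟩ hex⟩

lemma exists_pot {I : Finset Idx} (hI : CvxR I) (H V S : ℤ → ℤ → ℝ)
    (hU : ∀ m n, (m, n, true) ∈ I → H m n + V (m+1) n + S m n = 0)
    (hD : ∀ m n, (m, n, false) ∈ I → H m n + S m (n-1) + V m (n-1) = 0) :
    ∃ p : ℤ → ℤ → ℝ, (∀ m n, H m n = p (m+1) n - p m n) ∧
      (∀ m n, (m, n, true) ∈ I → V (m+1) n = p (m+1) (n+1) - p (m+1) n ∧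
        S m n = p m n - p (m+1) (n+1)) ∧
      (∀ m n, (m, n, false) ∈ I → S m (n-1) = p m (n-1) - p (m+1) n ∧
        V m (n-1) = p m n - p m (n-1)) := by
  choose P hP using fun n => exists_prim (fun m => H m n)
  let F : ℤ → ℤ → ℝ := fun n k => if k % 2 = 0 then V (k/2) n - (P (n+1) (k/2) - P n (k/2))
    else - S (k/2) n - (P (n+1) (k/2+1) - P n (k/2))
  have Fe : ∀ n m, F n (2*m) = V m n - (P (n+1) m - P n m) := by
    intro n m; simp [F]
  have Fo : ∀ n m, F n (2*m+1) = - S m n - (P (n+1) (m+1) - P n m) := by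
    intro n m
    have : (2*m+1)/2 = m := by omega
    simp [F, this]
  have Fe' : ∀ n m, F n (2*m+1+1) = V (m+1) n - (P (n+1) (m+1) - P n (m+1)) := by
    intro n m; rw [← Fe]; congr 1; ring
  have hF : ∀ n k, strip n k ∈ I → F n k = F n (k+1) := by
    intro n k hk
    rcases Int.even_or_odd' k with ⟨m, rfl | rfl⟩
    · rw [strip_even] at hk
      rw [Fe, Fo]
      have := hD _ _ hk
      rw [add_sub_cancel_right] at this
      have := hP (n+1) m
      linarith
    · rw [strip_odd] at hk
      rw [Fo, Fe']
      have := hU _ _ hk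
      have := hP n m
      linarith
  choose c hc using fun n => strip_const hI (F n) (hF n)
  obtain ⟨C, hC⟩ := exists_prim c
  refine ⟨fun m n => P n m + C n, fun m n => ?_, fun m n h => ?_, fun m n h => ?_⟩
  · have := hP n m; dsimp only; linarith
  · have := hc n (2*m+1) (by rwa [strip_odd])
    rw [Fo, Fe'] at this
    have := hC n
    constructor <;> linarith
  · have := hc (n-1) (2*m) (by rwa [strip_even, sub_add_cancel])
    rw [Fo, Fe, sub_add_cancel] at this
    have := hC (n-1)
    rw [sub_add_cancel] at this
    constructor <;> linarith

/-! ### Concavity -/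

/-- Affine interpolation. -/
def phi (p : ℤ → ℤ → ℝ) (t : Idx) (a b : ℝ) : ℝ :=
  p t.1 t.2.1 + (p (t.1+1) t.2.1 - p t.1 t.2.1) * (a - t.1) +
    (if t.2.2 then p (t.1+1) (t.2.1+1) - p (t.1+1) t.2.1 else p t.1 t.2.1 - p t.1 (t.2.1-1)) *
      (b - t.2.1)

/-- The rhombus inequalities for a potential. -/
def RhP (I : Finset Idx) (p : ℤ → ℤ → ℝ) : Prop :=
  (∀ m n, (m, n, true) ∈ I → (m, n, false) ∈ I →
    p (m+1) (n+1) + p m (n-1) ≤ p m n + p (m+1) n) ∧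
  (∀ m n, (m, n, true) ∈ I → (m+1, n+1, false) ∈ I →
    p m n + p (m+2) (n+1) ≤ p (m+1) n + p (m+1) (n+1)) ∧
  (∀ m n, (m, n, true) ∈ I → (m, n+1, false) ∈ I →
    p (m+1) n + p m (n+1) ≤ p m n + p (m+1) (n+1))

/-- Scaled squared distance of a lattice point from the centroid of a triangle. -/
def dst (a b : ℤ) (t : Idx) : ℤ :=
  let X := 3 * (a - t.1) - (if t.2.2 then 2 else 1)
  let Y := 3 * (b - t.2.1) - (if t.2.2 then 1 else -1)
  X * X - X * Y + Y * Y

lemma phi_vertex {I : Finset Idx} (hI : CvxR I) {p : ℤ → ℤ → ℝ} (hp : RhP I p)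
    {a b : ℤ} (hw : InR I a b) {t : Idx} (ht : t ∈ I) : p a b ≤ phi p t a b := by
  obtain ⟨s, hs, hmin⟩ := Finset.exists_min_image (I.filter fun s => phi p s a b ≤ phi p t a b)
    (dst a b) ⟨t, by simp [ht]⟩
  rw [Finset.mem_filter] at hs
  obtain ⟨hsI, hst⟩ := hs
  have hmin' : ∀ s' ∈ I, phi p s' a b ≤ phi p s a b → dst a b s ≤ dst a b s' :=
    fun s' h1 h2 => hmin s' (Finset.mem_filter.2 ⟨h1, h2.trans hst⟩)
  refine le_trans (le_of_eq ?_) hst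
  obtain ⟨m, n, u⟩ := s
  cases u
  · have c1 : b ≤ n := by
      by_contra hlt
      push Not at hlt
      have hlt' : (n:ℝ) < b := by exact_mod_cast hlt
      have hN := nbrD0 hI hsI hw hlt'
      have hR := hp.1 m n hN hsI
      have := hmin' _ hN (by simp only [phi]; simp; nlinarith)
      simp [dst] at this
      nlinarith
    have c2 : m ≤ a := by
      by_contra hlt
      push Not at hlt
      have hlt' : (a:ℝ) < m := by exact_mod_cast hlt
      obtain ⟨m, rfl⟩ : ∃ k, m = k + 1 := ⟨m - 1, by ring⟩
      obtain ⟨n, rfl⟩ : ∃ k, n = k + 1 := ⟨n - 1, by ring⟩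
      have hN := nbrD1 hI hsI hw (by push_cast at hlt'; exact hlt')
      have hR := hp.2.1 m n hN hsI
      have e : m + 1 + 1 = m + 2 := by ring
      have := hmin' _ hN (by simp only [phi]; simp [e]; push_cast at hlt'; nlinarith)
      simp [dst] at this
      nlinarith
    have c3 : a - m ≤ 1 + (b - n) := by
      by_contra hlt
      push Not at hlt
      have hlt' : (1:ℝ) + (b - n) < a - m := by exact_mod_cast hlt
      obtain ⟨n, rfl⟩ : ∃ k, n = k + 1 := ⟨n - 1, by ring⟩
      have hN := nbrD2 hI hsI hw (by push_cast at hlt'; linarith)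
      have hR := hp.2.2 m n hN hsI
      have := hmin' _ hN (by simp only [phi]; simp; push_cast at hlt'; nlinarith)
      simp [dst] at this
      nlinarith
    have : (a = m ∧ b = n) ∨ (a = m + 1 ∧ b = n) ∨ (a = m ∧ b = n - 1) := by omega
    rcases this with ⟨rfl, rfl⟩ | ⟨rfl, rfl⟩ | ⟨rfl, rfl⟩ <;> simp [phi]
  · have c1 : n ≤ b := by
      by_contra hlt
      push Not at hlt
      have hlt' : (b:ℝ) < n := by exact_mod_cast hlt
      have hN := nbrU0 hI hsI hw hlt'
      have hR := hp.1 m n hsI hN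
      have := hmin' _ hN (by simp only [phi]; simp; nlinarith)
      simp [dst] at this
      nlinarith
    have c2 : a ≤ m + 1 := by
      by_contra hlt
      push Not at hlt
      have hlt' : (m:ℝ) + 1 < a := by exact_mod_cast hlt
      have hN := nbrU1 hI hsI hw hlt'
      have hR := hp.2.1 m n hsI hN
      have e : m + 1 + 1 = m + 2 := by ring
      have := hmin' _ hN (by simp only [phi]; simp [e]; nlinarith)
      simp [dst] at this
      nlinarith
    have c3 : b - n ≤ a - m := by
      by_contra hlt
      push Not at hlt
      have hlt' : (a:ℝ) - m < b - n := by exact_mod_cast hlt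
      have hN := nbrU2 hI hsI hw hlt'
      have hR := hp.2.2 m n hsI hN
      have := hmin' _ hN (by simp only [phi]; simp; nlinarith)
      simp [dst] at this
      nlinarith
    have : (a = m ∧ b = n) ∨ (a = m + 1 ∧ b = n) ∨ (a = m + 1 ∧ b = n + 1) := by omega
    rcases this with ⟨rfl, rfl⟩ | ⟨rfl, rfl⟩ | ⟨rfl, rfl⟩ <;> simp [phi]

/-- Membership in a triangle. -/
def InT (t : Idx) (a b : ℝ) : Prop := if t.2.2 then InU t.1 t.2.1 a b else InD t.1 t.2.1 a b

lemma InR_iff (I : Finset Idx) (a b : ℝ) : InR I a b ↔ ∃ t ∈ I, InT t a b := by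
  constructor
  · rintro (⟨m, n, h, h'⟩ | ⟨m, n, h, h'⟩)
    · exact ⟨_, h, by simpa [InT] using h'⟩
    · exact ⟨_, h, by simpa [InT] using h'⟩
  · rintro ⟨⟨m, n, u⟩, h, h'⟩
    cases u
    · exact Or.inr ⟨m, n, h, by simpa [InT] using h'⟩
    · exact Or.inl ⟨m, n, h, by simpa [InT] using h'⟩

lemma phi_le {I : Finset Idx} (hI : CvxR I) {p : ℤ → ℤ → ℝ} (hp : RhP I p)
    {a b : ℝ} {s t : Idx} (hs : s ∈ I) (hab : InT s a b) (ht : t ∈ I) :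
    phi p s a b ≤ phi p t a b := by
  obtain ⟨m, n, u⟩ := s
  obtain ⟨c, k, l, hφ⟩ : ∃ c k l : ℝ, ∀ x y, phi p t x y = c + k * x + l * y := by
    refine ⟨phi p t 0 0, phi p t 1 0 - phi p t 0 0, phi p t 0 1 - phi p t 0 0, fun x y => ?_⟩
    simp only [phi]; ring
  have hv : ∀ a b : ℤ, InT (m, n, u) a b → p a b ≤ c + k * a + l * b := fun a b h => by
    rw [← hφ]; exact phi_vertex hI hp ((InR_iff _ _ _).2 ⟨_, hs, h⟩) ht
  rw [hφ]
  cases u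
  · have v0 := hv m n (by simp [InT, InD])
    have v1 := hv (m+1) n (by simp [InT, InD])
    have v2 := hv m (n-1) (by simp [InT, InD])
    simp only [InT, InD, Bool.false_eq_true, if_false] at hab
    obtain ⟨h1, h2, h3⟩ := hab
    have w0 := mul_le_mul_of_nonneg_left v0 (by linarith : 0 ≤ 1 + (b - n) - (a - m))
    have w1 := mul_le_mul_of_nonneg_left v1 (by linarith : 0 ≤ a - m)
    have w2 := mul_le_mul_of_nonneg_left v2 (by linarith : 0 ≤ n - b)
    simp only [phi, Bool.false_eq_true, if_false]
    push_cast at *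
    linarith
  · have v0 := hv m n (by simp [InT, InU])
    have v1 := hv (m+1) n (by simp [InT, InU])
    have v2 := hv (m+1) (n+1) (by simp [InT, InU])
    simp only [InT, InU, if_true] at hab
    obtain ⟨h1, h2, h3⟩ := hab
    have w0 := mul_le_mul_of_nonneg_left v0 (by linarith : 0 ≤ 1 - (a - m))
    have w1 := mul_le_mul_of_nonneg_left v1 (by linarith : 0 ≤ (a - m) - (b - n))
    have w2 := mul_le_mul_of_nonneg_left v2 (by linarith : 0 ≤ b - n)
    simp only [phi, if_true]
    push_cast at *
    linarith

/-! ### Geometry -/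

/-- The point with lattice coordinates `(a, b)` relative to the origin `o`. -/
def pt (o : Pt) (a b : ℝ) : Pt := (o.1 + a - b / 2, o.2 + b * (Real.sqrt 3 / 2))

/-- First lattice coordinate. -/
def cA (o x : Pt) : ℝ := (x.1 - o.1) + (x.2 - o.2) / Real.sqrt 3
/-- Second lattice coordinate. -/
def cB (o x : Pt) : ℝ := (x.2 - o.2) * 2 / Real.sqrt 3

lemma s3_s4 : 0 < Real.sqrt 3 := by positivity

lemma pt_c (o x : Pt) : pt o (cA o x) (cB o x) = x := by
  have := s3_s4
  ext
  · simp only [pt, cA, cB]; ring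
  · simp only [pt, cA, cB]; field_simp; ring

lemma cA_pt (o : Pt) (a b : ℝ) : cA o (pt o a b) = a := by
  have := s3_s4
  simp only [pt, cA]; field_simp; ring

lemma cB_pt (o : Pt) (a b : ℝ) : cB o (pt o a b) = b := by
  have := s3_s4
  simp only [pt, cB]; field_simp; ring

lemma pt_inj (o : Pt) (a b a' b' : ℝ) : pt o a b = pt o a' b' ↔ a = a' ∧ b = b' := by
  constructor
  · intro h
    exact ⟨by rw [← cA_pt o a b, h, cA_pt], by rw [← cB_pt o a b, h, cB_pt]⟩
  · rintro ⟨rfl, rfl⟩; rfl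

lemma pt_sub (o : Pt) (a b c d a' b' c' d' : ℝ) :
    pt o a b - pt o c d = pt o a' b' - pt o c' d' ↔ a - c = a' - c' ∧ b - d = b' - d' := by
  have e : ∀ a b c d, pt o a b - pt o c d = pt 0 (a - c) (b - d) := by
    intro a b c d; ext <;> simp [pt] <;> ring
  rw [e, e, pt_inj]

lemma pt_comb (o : Pt) (a b a' b' s t : ℝ) (h : s + t = 1) :
    s • pt o a b + t • pt o a' b' = pt o (s * a + t * a') (s * b + t * b') := by
  obtain rfl : s = 1 - t := by linarith
  ext <;> simp [pt] <;> ring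

/-- The triangle with index `t`. -/
def tri (o : Pt) (t : Idx) : GridTriangle := ⟨pt o t.1 t.2.1, t.2.2⟩

lemma tri_inj (o : Pt) : Function.Injective (tri o) := by
  rintro ⟨m, n, u⟩ ⟨m', n', u'⟩ h
  simp only [tri, GridTriangle.mk.injEq, pt_inj, Int.cast_inj] at h
  obtain ⟨⟨rfl, rfl⟩, rfl⟩ := h
  rfl

lemma tri_v0 (o : Pt) (m n : ℤ) (u : Bool) : (tri o (m, n, u)).v0 = pt o m n := rfl
lemma tri_v1 (o : Pt) (m n : ℤ) (u : Bool) : (tri o (m, n, u)).v1 = pt o (m+1) n := by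
  ext <;> simp [GridTriangle.v1, tri, pt, xiv]; ring
lemma tri_v2U (o : Pt) (m n : ℤ) : (tri o (m, n, true)).v2 = pt o (m+1) (n+1) := by
  ext <;> simp [GridTriangle.v2, tri, pt, xiv] <;> ring
lemma tri_v2D (o : Pt) (m n : ℤ) : (tri o (m, n, false)).v2 = pt o m (n-1) := by
  ext <;> simp [GridTriangle.v2, tri, pt, xiv] <;> ring

lemma mem_edU (o : Pt) (m n : ℤ) (e : Ed) : e ∈ (tri o (m, n, true)).edgeFinset ↔
    e = (pt o m n, pt o (m+1) n) ∨ e = (pt o (m+1) n, pt o (m+1) (n+1)) ∨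
      e = (pt o (m+1) (n+1), pt o m n) := by
  simp [GridTriangle.edgeFinset, GridTriangle.e0, GridTriangle.e1, GridTriangle.e2, tri_v0, tri_v1,
    tri_v2U]

lemma mem_edD (o : Pt) (m n : ℤ) (e : Ed) : e ∈ (tri o (m, n, false)).edgeFinset ↔
    e = (pt o m n, pt o (m+1) n) ∨ e = (pt o (m+1) n, pt o m (n-1)) ∨
      e = (pt o m (n-1), pt o m n) := by
  simp [GridTriangle.edgeFinset, GridTriangle.e0, GridTriangle.e1, GridTriangle.e2, tri_v0, tri_v1,
    tri_v2D]

lemma InT_convex (t : Idx) {a b a' b' s r : ℝ} (hs : 0 ≤ s) (hr : 0 ≤ r) (h : s + r = 1)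
    (h1 : InT t a b) (h2 : InT t a' b') : InT t (s * a + r * a') (s * b + r * b') := by
  obtain rfl : s = 1 - r := by linarith
  obtain ⟨m, n, u⟩ := t
  cases u
  · simp only [InT, InD, Bool.false_eq_true, if_false] at *
    obtain ⟨x1, x2, x3⟩ := h1
    obtain ⟨y1, y2, y3⟩ := h2
    refine ⟨?_, ?_, ?_⟩ <;> nlinarith
  · simp only [InT, InU, if_true] at *
    obtain ⟨x1, x2, x3⟩ := h1
    obtain ⟨y1, y2, y3⟩ := h2
    refine ⟨?_, ?_, ?_⟩ <;> nlinarith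

lemma mem_hull3_s4 (x v0 v1 v2 : Pt) (a b c : ℝ) (ha : 0 ≤ a) (hb : 0 ≤ b) (hc : 0 ≤ c)
    (h : a + b + c = 1) (hx : x = a • v0 + b • v1 + c • v2) :
    x ∈ convexHull ℝ ({v0, v1, v2} : Set Pt) := by
  have := (convex_convexHull ℝ ({v0, v1, v2} : Set Pt)).sum_mem (t := (Finset.univ : Finset (Fin 3)))
    (w := ![a, b, c]) (z := ![v0, v1, v2])
    (by intro i _; fin_cases i <;> simpa) (by simpa [Fin.sum_univ_three] using h)
    (by intro i _; apply subset_convexHull; fin_cases i <;> simp)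
  rw [hx]
  simpa [Fin.sum_univ_three] using this

lemma mem_region (o : Pt) (t : Idx) (x : Pt) :
    x ∈ (tri o t).region ↔ InT t (cA o x) (cB o x) := by
  constructor
  · intro hx
    have hconv : Convex ℝ {x : Pt | InT t (cA o x) (cB o x)} := by
      intro x hx y hy s r hs hr hsr
      have := InT_convex t hs hr hsr hx hy
      rw [Set.mem_ofPred_eq, ← pt_c o x, ← pt_c o y, pt_comb _ _ _ _ _ _ _ hsr, cA_pt, cB_pt]
      exact this
    refine convexHull_min ?_ hconv hx
    obtain ⟨m, n, u⟩ := t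
    rintro y hy
    simp only [Set.mem_insert_iff, Set.mem_singleton_iff] at hy
    cases u
    · rw [tri_v0, tri_v1, tri_v2D] at hy
      rcases hy with rfl | rfl | rfl <;> simp [cA_pt, cB_pt, InT, InD, add_comm]
    · rw [tri_v0, tri_v1, tri_v2U] at hy
      rcases hy with rfl | rfl | rfl <;> simp [cA_pt, cB_pt, InT, InU, add_comm]
  · intro h
    obtain ⟨a, b, rfl⟩ : ∃ a b, x = pt o a b := ⟨_, _, (pt_c o x).symm⟩
    rw [cA_pt, cB_pt] at h
    obtain ⟨m, n, u⟩ := t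
    cases u
    · simp only [InT, InD, Bool.false_eq_true, if_false] at h
      obtain ⟨h1, h2, h3⟩ := h
      refine mem_hull3_s4 _ _ _ _ (1 + (b - n) - (a - m)) (a - m) (n - b) (by linarith) (by linarith)
        (by linarith) (by ring) ?_
      rw [tri_v0, tri_v1, tri_v2D]
      ext <;> simp [pt] <;> ring
    · simp only [InT, InU, if_true] at h
      obtain ⟨h1, h2, h3⟩ := h
      refine mem_hull3_s4 _ _ _ _ (1 - (a - m)) ((a - m) - (b - n)) (b - n) (by linarith) (by linarith)
        (by linarith) (by ring) ?_
      rw [tri_v0, tri_v1, tri_v2U]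
      ext <;> simp [pt] <;> ring

/-- Compatibility of a grid with an index set. -/
def Compat (G : ConvexGrid) (o : Pt) (I : Finset Idx) : Prop :=
  (∀ T, T ∈ G.tris ↔ ∃ t ∈ I, T = tri o t)

lemma exists_compat (G : ConvexGrid) : ∃ o I, Compat G o I := by
  obtain ⟨T0, h0⟩ := G.nonempty
  refine ⟨T0.base, G.tris.preimage (tri T0.base) (tri_inj _).injOn, fun T => ⟨fun hT => ?_, ?_⟩⟩
  · obtain ⟨m, n, hmn⟩ := G.aligned T hT T0 h0
    have : T = tri T0.base (m, n, T.up) := by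
      obtain ⟨B, u⟩ := T
      simp only [tri, GridTriangle.mk.injEq, and_true]
      have : B = T0.base + (B - T0.base) := by ring
      rw [this]
      simp only at hmn
      rw [hmn]
      ext <;> simp [pt, xiv] <;> ring
    exact ⟨_, by rw [Finset.mem_preimage, ← this]; exact hT, this⟩
  · rintro ⟨t, ht, rfl⟩
    exact Finset.mem_preimage.1 ht

/-- `p` is a potential for `h`. -/
def IsPot (o : Pt) (I : Finset Idx) (h : Ed → ℝ) (p : ℤ → ℤ → ℝ) : Prop :=
  (∀ m n : ℤ, (m, n, true) ∈ I → h (pt o m n, pt o (m+1) n) = p (m+1) n - p m n ∧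
    h (pt o (m+1) n, pt o (m+1) (n+1)) = p (m+1) (n+1) - p (m+1) n ∧
    h (pt o (m+1) (n+1), pt o m n) = p m n - p (m+1) (n+1)) ∧
  (∀ m n : ℤ, (m, n, false) ∈ I → h (pt o m n, pt o (m+1) n) = p (m+1) n - p m n ∧
    h (pt o (m+1) n, pt o m (n-1)) = p m (n-1) - p (m+1) n ∧
    h (pt o m (n-1), pt o m n) = p m n - p m (n-1))


lemma rh_fin {o : Pt} {I : Finset Idx} {h : Ed → ℝ} {p : ℤ → ℤ → ℝ} (hp : IsPot o I h p)
    (hR : RhP I p) {m n a b : ℤ} (hu : (m, n, true) ∈ I) (hd : (a, b, false) ∈ I) {e0 e e' : Ed}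
    (f1 : e0 ∈ (tri o (m, n, true)).edgeFinset) (f2 : e0 ∈ (tri o (a, b, false)).edgeFinset)
    (he : e ∈ (tri o (m, n, true)).edgeFinset) (he' : e' ∈ (tri o (a, b, false)).edgeFinset)
    (hee : e ≠ e') (hpar : e.2 - e.1 = e'.2 - e'.1) :
    ((e.2 = e0.1 ∨ e.2 = e0.2) → h e' ≤ h e) ∧ ((e'.2 = e0.1 ∨ e'.2 = e0.2) → h e ≤ h e') := by
  have key : (a = m ∧ b = n ∧ e0 = (pt o m n, pt o (m+1) n)) ∨
      (a = m + 1 ∧ b = n + 1 ∧ e0 = (pt o (m+1) n, pt o (m+1) (n+1))) ∨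
      (a = m ∧ b = n + 1 ∧ e0 = (pt o (m+1) (n+1), pt o m n)) := by
    rw [mem_edU] at f1
    rw [mem_edD] at f2
    rcases f1 with rfl | rfl | rfl <;> rcases f2 with f2 | f2 | f2 <;>
    · simp only [Prod.mk.injEq, pt_inj] at f2 ⊢
      norm_cast at f2 ⊢
      first
      | (exfalso; omega)
      | (simp; omega)
  clear f1 f2
  rw [mem_edU] at he
  rw [mem_edD] at he'
  have hU := hp.1 m n hu
  have hD := hp.2 a b hd
  have e2 : m + 1 + 1 = m + 2 := by ring
  rcases key with ⟨rfl, rfl, rfl⟩ | ⟨rfl, rfl, rfl⟩ | ⟨rfl, rfl, rfl⟩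
  · have hr := hR.1 _ _ hu hd
    clear hR hp
    rcases he with rfl | rfl | rfl <;> rcases he' with rfl | rfl | rfl <;>
    · simp only [pt_sub, pt_inj] at hpar ⊢
      push_cast at hpar ⊢
      first
      | (exfalso; linarith [hpar.1, hpar.2])
      | (exfalso; exact hee rfl)
      | (constructor <;> rintro (⟨h1, h2⟩ | ⟨h1, h2⟩) <;> linarith)
  · have hr := hR.2.1 _ _ hu hd
    clear hR hp
    simp only [add_sub_cancel_right, e2] at hD
    rcases he with rfl | rfl | rfl <;> rcases he' with rfl | rfl | rfl <;>
    · simp only [pt_sub, pt_inj] at hpar ⊢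
      push_cast at hpar
      first
      | (exfalso; linarith [hpar.1, hpar.2])
      | (exfalso; apply hee; simp only [Prod.mk.injEq, pt_inj]
         refine ⟨⟨?_, ?_⟩, ?_, ?_⟩ <;> (push_cast; linarith))
      | (constructor <;> intro hh <;> first
          | linarith
          | (exfalso; push_cast at hh; rcases hh with hh | hh <;> linarith [hh.1, hh.2]))
  · have hr := hR.2.2 _ _ hu hd
    clear hR hp
    simp only [add_sub_cancel_right] at hD
    rcases he with rfl | rfl | rfl <;> rcases he' with rfl | rfl | rfl <;>
    · simp only [pt_sub, pt_inj] at hpar ⊢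
      push_cast at hpar
      first
      | (exfalso; linarith [hpar.1, hpar.2])
      | (exfalso; apply hee; simp only [Prod.mk.injEq, pt_inj]
         refine ⟨⟨?_, ?_⟩, ?_, ?_⟩ <;> (push_cast; linarith))
      | (constructor <;> intro hh <;> first
          | linarith
          | (exfalso; push_cast at hh; rcases hh with hh | hh <;> linarith [hh.1, hh.2]))

section
variable {G : ConvexGrid} {o : Pt} {I : Finset Idx} (hG : Compat G o I)
include hG

lemma tri_mem {t : Idx} (ht : t ∈ I) : tri o t ∈ G.tris := (hG _).2 ⟨t, ht, rfl⟩

lemma mem_G_region (x : Pt) : x ∈ G.region ↔ InR I (cA o x) (cB o x) := by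
  rw [InR_iff]
  simp only [ConvexGrid.region, Set.mem_iUnion, exists_prop]
  constructor
  · rintro ⟨T, hT, hx⟩
    obtain ⟨t, ht, rfl⟩ := (hG T).1 hT
    exact ⟨t, ht, (mem_region _ _ _).1 hx⟩
  · rintro ⟨t, ht, hx⟩
    exact ⟨_, tri_mem hG ht, (mem_region _ _ _).2 hx⟩

lemma cvxR : CvxR I := by
  intro a b a' b' ε h0 h1 h2 h3
  have hc : Convex ℝ G.region := G.convex
  have x1 : pt o a b ∈ G.region := by rw [mem_G_region hG, cA_pt, cB_pt]; exact h2
  have x2 : pt o a' b' ∈ G.region := by rw [mem_G_region hG, cA_pt, cB_pt]; exact h3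
  have := hc x1 x2 (by linarith : 0 ≤ 1 - ε) h0 (by ring)
  rw [pt_comb _ _ _ _ _ _ _ (by ring), mem_G_region hG, cA_pt, cB_pt] at this
  convert this using 1 <;> ring

lemma rh_of_rhP {h : Ed → ℝ} {p : ℤ → ℤ → ℝ} (hp : IsPot o I h p) (hR : RhP I p) :
    RhombusCondition G h := by
  intro T hT T' hT' hne e0 he0 e he e' he' hee hpar hend
  obtain ⟨⟨m, n, u⟩, ht, rfl⟩ := (hG _).1 hT
  obtain ⟨⟨m', n', u'⟩, ht', rfl⟩ := (hG _).1 hT'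
  rw [Finset.mem_inter] at he0
  obtain ⟨f1, f2⟩ := he0
  cases u <;> cases u'
  · exfalso
    rw [mem_edD] at f1 f2
    apply hne
    rcases f1 with rfl | rfl | rfl <;> rcases f2 with f2 | f2 | f2 <;>
    · simp only [Prod.mk.injEq, pt_inj] at f2
      norm_cast at f2
      first
      | (exfalso; omega)
      | (obtain ⟨rfl, rfl⟩ : m = m' ∧ n = n' := by omega
         rfl)
  · exact (rh_fin hp hR ht' ht f2 f1 he' he hee.symm hpar.symm).2 hend
  · exact (rh_fin hp hR ht ht' f1 f2 he he' hee hpar).1 hend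
  · exfalso
    rw [mem_edU] at f1 f2
    apply hne
    rcases f1 with rfl | rfl | rfl <;> rcases f2 with f2 | f2 | f2 <;>
    · simp only [Prod.mk.injEq, pt_inj] at f2
      norm_cast at f2
      first
      | (exfalso; omega)
      | (obtain ⟨rfl, rfl⟩ : m = m' ∧ n = n' := by omega
         rfl)

lemma rhP_of_rh {h : Ed → ℝ} {p : ℤ → ℤ → ℝ} (hp : IsPot o I h p) (hR : RhombusCondition G h) :
    RhP I p := by
  refine ⟨fun m n hu hd => ?_, fun m n hu hd => ?_, fun m n hu hd => ?_⟩
  all_goals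
    have hne : ∀ s t : ℤ × ℤ, tri o (s.1, s.2, true) ≠ tri o (t.1, t.2, false) := by
      intro s t h; simpa using tri_inj o h
    have hU := hp.1 _ _ hu
    have hD := hp.2 _ _ hd
  · have := hR _ (tri_mem hG hu) _ (tri_mem hG hd) (hne (_, _) (_, _))
      (pt o m n, pt o (m+1) n) (by rw [Finset.mem_inter, mem_edU, mem_edD]; simp)
      (pt o (m+1) (n+1), pt o m n) (by rw [mem_edU]; simp)
      (pt o (m+1) n, pt o m (n-1)) (by rw [mem_edD]; simp)
      (by simp only [ne_eq, Prod.mk.injEq, pt_inj]; intro h; linarith [h.1.2])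
      ((pt_sub _ _ _ _ _ _ _ _ _).2 ⟨by ring, by ring⟩) (Or.inl rfl)
    linarith
  · have := hR _ (tri_mem hG hu) _ (tri_mem hG hd) (hne (_, _) (_, _))
      (pt o (m+1) n, pt o (m+1) (n+1)) (by rw [Finset.mem_inter, mem_edU, mem_edD]; simp)
      (pt o m n, pt o (m+1) n) (by rw [mem_edU]; simp)
      (pt o ((m+1 : ℤ):ℝ) ((n+1 : ℤ):ℝ), pt o ((m+1 : ℤ) + 1) ((n+1 : ℤ):ℝ)) (by rw [mem_edD]; simp)
      (by simp only [ne_eq, Prod.mk.injEq, pt_inj]; intro h; push_cast at h; linarith [h.1.2])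
      (by simp only [pt_sub]; push_cast; constructor <;> ring) (Or.inl rfl)
    have e2 : m + 1 + 1 = m + 2 := by ring
    simp only [add_sub_cancel_right, e2] at hD
    linarith
  · have := hR _ (tri_mem hG hu) _ (tri_mem hG hd) (hne (_, _) (_, _))
      (pt o (m+1) (n+1), pt o m n) (by rw [Finset.mem_inter, mem_edU, mem_edD]; simp)
      (pt o (m+1) n, pt o (m+1) (n+1)) (by rw [mem_edU]; simp)
      (pt o m ((n+1 : ℤ) - 1), pt o m ((n+1 : ℤ):ℝ)) (by rw [mem_edD]; simp)
      (by simp only [ne_eq, Prod.mk.injEq, pt_inj]; intro h; push_cast at h; linarith [h.1.1])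
      (by simp only [pt_sub]; push_cast; constructor <;> ring) (Or.inl rfl)
    simp only [add_sub_cancel_right] at hD
    linarith

lemma pot_of_cocirc {h : Ed → ℝ} (hc : IsCocirculation G h) : ∃ p, IsPot o I h p := by
  obtain ⟨p, h1, h2, h3⟩ := exists_pot (cvxR hG)
    (fun m n => h (pt o m n, pt o (m+1) n)) (fun m n => h (pt o m n, pt o m (n+1)))
    (fun m n => h (pt o (m+1) (n+1), pt o m n))
    (by
      intro m n hm
      have := hc _ (tri_mem hG hm)
      simp only [GridTriangle.e0, GridTriangle.e1, GridTriangle.e2, tri_v0, tri_v1,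
        tri_v2U] at this
      push_cast
      exact this)
    (by
      intro m n hm
      have := hc _ (tri_mem hG hm)
      simp only [GridTriangle.e0, GridTriangle.e1, GridTriangle.e2, tri_v0, tri_v1,
        tri_v2D] at this
      push_cast
      rw [sub_add_cancel]
      exact this)
  refine ⟨p, fun m n hm => ?_, fun m n hm => ?_⟩
  · have := h2 m n hm
    push_cast at this
    exact ⟨h1 m n, this⟩
  · have := h3 m n hm
    push_cast at this
    rw [sub_add_cancel] at this
    exact ⟨h1 m n, this⟩

lemma concave_of_rhP {h : Ed → ℝ} {p : ℤ → ℤ → ℝ} (hp : IsPot o I h p) (hR : RhP I p) :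
    ∃ g : Pt → ℝ, ConcaveOn ℝ G.region g ∧ (∀ T ∈ G.tris, AffineOn g T.region) ∧
    ∀ e ∈ G.edges, h e = g e.2 - g e.1 := by
  have hne : I.Nonempty := by
    obtain ⟨T, hT⟩ := G.nonempty
    obtain ⟨t, ht, -⟩ := (hG T).1 hT
    exact ⟨t, ht⟩
  let g : Pt → ℝ := fun x => I.inf' hne fun t => phi p t (cA o x) (cB o x)
  have hg : ∀ t ∈ I, ∀ x, InT t (cA o x) (cB o x) → g x = phi p t (cA o x) (cB o x) := by
    intro t ht x hx
    apply le_antisymm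
    · exact Finset.inf'_le _ ht
    · exact Finset.le_inf' _ _ fun s hs => phi_le (cvxR hG) hR ht hx hs
  have hgi : ∀ t ∈ I, ∀ a b : ℝ, InT t a b → g (pt o a b) = phi p t a b := by
    intro t ht a b hab
    have := hg t ht (pt o a b) (by rwa [cA_pt, cB_pt])
    rwa [cA_pt, cB_pt] at this
  refine ⟨g, ⟨G.convex, ?_⟩, ?_, ?_⟩
  · intro x _ y _ s r hs hr hsr
    apply Finset.le_inf'
    intro t ht
    have i1 : g x ≤ phi p t (cA o x) (cB o x) := Finset.inf'_le _ ht
    have i2 : g y ≤ phi p t (cA o y) (cB o y) := Finset.inf'_le _ ht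
    have e : s • x + r • y = pt o (s * cA o x + r * cA o y) (s * cB o x + r * cB o y) := by
      rw [← pt_comb _ _ _ _ _ _ _ hsr, pt_c, pt_c]
    rw [e, cA_pt, cB_pt]
    have e' : phi p t (s * cA o x + r * cA o y) (s * cB o x + r * cB o y) =
        s * phi p t (cA o x) (cB o x) + r * phi p t (cA o y) (cB o y) := by
      obtain rfl : s = 1 - r := by linarith
      simp only [phi]; ring
    rw [e']
    simp only [smul_eq_mul]
    exact add_le_add (mul_le_mul_of_nonneg_left i1 hs) (mul_le_mul_of_nonneg_left i2 hr)
  · intro T hT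
    obtain ⟨t, ht, rfl⟩ := (hG T).1 hT
    let L : ℝ → ℝ → ℝ → Pt →ᵃ[ℝ] ℝ := fun c k l =>
      (k • LinearMap.fst ℝ ℝ ℝ + l • LinearMap.snd ℝ ℝ ℝ).toAffineMap + AffineMap.const ℝ Pt c
    have hL : ∀ c k l x, L c k l x = k * x.1 + l * x.2 + c := by intro c k l x; simp [L]
    have hlin : ∃ c k l : ℝ, ∀ x, phi p t (cA o x) (cB o x) = k * x.1 + l * x.2 + c := by
      refine ⟨phi p t (cA o 0) (cB o 0),
        phi p t (cA o (1, 0)) (cB o (1, 0)) - phi p t (cA o 0) (cB o 0),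
        phi p t (cA o (0, 1)) (cB o (0, 1)) - phi p t (cA o 0) (cB o 0), fun x => ?_⟩
      simp only [phi, cA, cB, Prod.fst_zero, Prod.snd_zero]
      ring
    obtain ⟨c, k, l, hc⟩ := hlin
    refine ⟨L c k l, fun x hx => ?_⟩
    rw [hL, ← hc]
    exact hg t ht x ((mem_region _ _ _).1 hx)
  · intro e he
    rw [ConvexGrid.edges, Finset.mem_biUnion] at he
    obtain ⟨T, hT, he⟩ := he
    obtain ⟨⟨m, n, u⟩, ht, rfl⟩ := (hG T).1 hT
    cases u
    · rw [mem_edD] at he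
      obtain ⟨q0, q1, q2⟩ := hp.2 m n ht
      have g0 := hgi _ ht m n (by simp [InT, InD])
      have g1 := hgi _ ht (m+1) n (by simp [InT, InD, add_comm])
      have g2 := hgi _ ht m (n-1) (by simp [InT, InD])
      simp [phi] at g0 g1 g2
      rcases he with rfl | rfl | rfl
      · rw [q0, g0, g1]
      · rw [q1, g1, g2]
      · rw [q2, g0, g2]
    · rw [mem_edU] at he
      obtain ⟨q0, q1, q2⟩ := hp.1 m n ht
      have g0 := hgi _ ht m n (by simp [InT, InU])
      have g1 := hgi _ ht (m+1) n (by simp [InT, InU, add_comm])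
      have g2 := hgi _ ht (m+1) (n+1) (by simp [InT, InU, add_comm])
      simp [phi] at g0 g1 g2
      rcases he with rfl | rfl | rfl
      · rw [q0, g0, g1]
      · rw [q1, g1, g2]
      · rw [q2, g0, g2]

lemma rhP_of_concave {g : Pt → ℝ} (hg : ConcaveOn ℝ G.region g)
    (ha : ∀ T ∈ G.tris, AffineOn g T.region) : RhP I (fun m n => g (pt o m n)) := by
  have reg : ∀ t ∈ I, ∀ a b : ℝ, InT t a b → pt o a b ∈ G.region := by
    intro t ht a b h
    rw [mem_G_region hG, cA_pt, cB_pt, InR_iff]; exact ⟨t, ht, h⟩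
  have main : ∀ t ∈ I, ∀ s ∈ I, ∀ a b c d a' b' c' d' : ℝ, InT t a b → InT t c d → InT t a' b' →
      InT s c' d' → a + c = a' + c' → b + d = b' + d' →
      g (pt o a' b') + g (pt o c' d') ≤ g (pt o a b) + g (pt o c d) := by
    intro t ht s hs a b c d a' b' c' d' h1 h2 h3 h4 e1 e2
    have hc := hg.2 (reg t ht _ _ h3) (reg s hs _ _ h4) (by norm_num : (0:ℝ) ≤ 1/2)
      (by norm_num : (0:ℝ) ≤ 1/2) (by norm_num)
    have hm : (1/2 : ℝ) • pt o a' b' + (1/2 : ℝ) • pt o c' d' = midpoint ℝ (pt o a b) (pt o c d) := by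
      rw [midpoint_eq_smul_add, smul_add, pt_comb _ _ _ _ _ _ _ (by norm_num),
        show (⅟2 : ℝ) = 1/2 by simp, pt_comb _ _ _ _ _ _ _ (by norm_num), pt_inj]
      constructor <;> linarith
    rw [hm] at hc
    obtain ⟨φ, hφ⟩ := ha _ (tri_mem hG ht)
    have r1 : pt o a b ∈ (tri o t).region := by rw [mem_region, cA_pt, cB_pt]; exact h1
    have r2 : pt o c d ∈ (tri o t).region := by rw [mem_region, cA_pt, cB_pt]; exact h2
    have r3 : midpoint ℝ (pt o a b) (pt o c d) ∈ (tri o t).region :=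
      (convex_convexHull ℝ _).midpoint_mem r1 r2
    rw [hφ _ r3, AffineMap.map_midpoint, ← hφ _ r1, ← hφ _ r2, midpoint_eq_smul_add] at hc
    simp only [smul_eq_mul, invOf_eq_inv] at hc
    linarith
  refine ⟨fun m n hu hd => ?_, fun m n hu hd => ?_, fun m n hu hd => ?_⟩
  · dsimp only
    push_cast
    exact main _ hu _ hd _ _ _ _ _ _ _ _ (by simp [InT, InU]) (by simp [InT, InU])
      (by simp [InT, InU, add_comm]) (by simp [InT, InD]) (by ring) (by ring)
  · dsimp only
    push_cast
    exact main _ hu _ hd _ _ _ _ _ _ _ _ (by simp [InT, InU]) (by simp [InT, InU, add_comm])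
      (by simp [InT, InU]) (by simp [InT, InD]; linarith) (by ring) (by ring)
  · dsimp only
    push_cast
    exact main _ hu _ hd _ _ _ _ _ _ _ _ (by simp [InT, InU]) (by simp [InT, InU, add_comm])
      (by simp [InT, InU]) (by simp [InT, InD]) (by ring) (by ring)

lemma pot_of_edges {h : Ed → ℝ} {g : Pt → ℝ} (he : ∀ e ∈ G.edges, h e = g e.2 - g e.1) :
    IsPot o I h (fun m n => g (pt o m n)) := by
  have key : ∀ t ∈ I, ∀ e ∈ (tri o t).edgeFinset, h e = g e.2 - g e.1 := fun t ht e h' =>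
    he e (Finset.mem_biUnion.2 ⟨_, tri_mem hG ht, h'⟩)
  refine ⟨fun m n hm => ?_, fun m n hm => ?_⟩
  · push_cast
    refine ⟨key _ hm _ ?_, key _ hm _ ?_, key _ hm _ ?_⟩ <;> rw [mem_edU] <;> simp
  · push_cast
    refine ⟨key _ hm _ ?_, key _ hm _ ?_, key _ hm _ ?_⟩ <;> rw [mem_edD] <;> simp

end

/-- A cocirculation is concave iff every little rhombus satisfies the
rhombus condition. -/
theorem stmt4 (G : ConvexGrid) (h : Ed → ℝ) (hc : IsCocirculation G h) :
    IsConcaveCocirculation G h ↔ RhombusCondition G h := by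
  obtain ⟨o, I, hG⟩ := exists_compat G
  constructor
  · rintro ⟨-, g, hg, ha, he⟩
    exact rh_of_rhP hG (pot_of_edges hG he) (rhP_of_concave hG hg ha)
  · intro hR
    obtain ⟨p, hp⟩ := pot_of_cocirc hG hc
    exact ⟨hc, concave_of_rhP hG hp (rhP_of_rh hG hp hR)⟩
end
end
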